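/- arXiv:1909.07762 — 3 statements merged into one kernel-verified Lean document; each statement's English description precedes it below -/
import Mathlib

section
/- For every ε > 0 there exists L₀ such that for all integers k ≥ 0 and ℓ ≥ L₀, one has | M(k, k+ℓ) / [ (π/(12√2)) · (1 + e^{−πk/√(6ℓ)})^{−2} · e^{2π√(ℓ/6)}/ℓ^{3/2} ] − 1 | < ε. In other words, uniformly for integers ℓ, k ≥ 0, M(k, k+ℓ) ~ (π/(12√2)) · (1 + e^{−πk/√(6ℓ)})^{−2} · e^{2π√(ℓ/6)}/ℓ^{3/2} as ℓ → ∞. -/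
open Finset

/-- A pair of sequences of parts is *steadily decreasing* if
`min (a i) (b i) ≥ max (a (i+1)) (b (i+1))` for all `i`. -/
noncomputable def SteadilyDecreasing (a b : ℕ → ℕ) : Prop :=
  ∀ i, max (a (i + 1)) (b (i + 1)) ≤ min (a i) (b i)

/-- `bipartitePi m n` is the number of pairs of partitions (given as non-increasing,
finitely supported sequences) of the bipartite number `(m, n)` with steadily
decreasing parts. -/
noncomputable def bipartitePi (m n : ℕ) : ℕ :=
  Nat.card {p : (ℕ →₀ ℕ) × (ℕ →₀ ℕ) //
    (∀ i, p.1 (i + 1) ≤ p.1 i) ∧ (∀ i, p.2 (i + 1) ≤ p.2 i) ∧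
    SteadilyDecreasing p.1 p.2 ∧
    (p.1.sum fun _ x => x) = m ∧ (p.2.sum fun _ x => x) = n}

/-- The partition function `p n`. -/
noncomputable def partitionCount (n : ℕ) : ℕ := Nat.card (Nat.Partition n)

/-- The partition function extended to the integers, with `p r = 0` for `r < 0`. -/
noncomputable def partitionCountInt (r : ℤ) : ℕ := if 0 ≤ r then partitionCount r.toNat else 0

/-- The cubic partition function `c n`, counting partitions of `n` in which even
parts come in two colors (equivalently, pairs of a partition together with a
partition into even parts, of total size `n`). -/
noncomputable def cubicPartition (n : ℕ) : ℕ :=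
  Nat.card {p : Multiset ℕ × Multiset ℕ //
    (∀ i ∈ p.1, 0 < i) ∧ (∀ i ∈ p.2, 0 < i ∧ Even i) ∧ p.1.sum + p.2.sum = n}

/-- The Andrews–Garvan crank of a partition: the largest part if there are no ones,
and otherwise the number of parts larger than the number of ones minus the number of
ones. -/
noncomputable def crank {n : ℕ} (l : n.Partition) : ℤ :=
  if l.parts.count 1 = 0 then (l.parts.sup : ℤ)
  else ((l.parts.filter fun p => l.parts.count 1 < p).card : ℤ) - l.parts.count 1

/-- `crankM m n` is the crank counting function `M(m, n)`: the number of partitions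
of `n` with crank `m`, with the standard convention at `n = 1`
(`M(0,1) = -1`, `M(±1,1) = 1`, `M(m,1) = 0` otherwise). -/
noncomputable def crankM (m : ℤ) (n : ℕ) : ℤ :=
  if n = 1 then (if m = 0 then -1 else if m.natAbs = 1 then 1 else 0)
  else (Nat.card {l : n.Partition // crank l = m} : ℤ)

/-- `alphaBip s k = Σ_{ℓ ≥ 0} (-1)^ℓ p(k - ℓ(ℓ+1)/2 - ℓ s)`. -/
noncomputable def alphaBip (s k : ℕ) : ℤ :=
  ∑' ℓ : ℕ, (-1 : ℤ) ^ ℓ *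
    (partitionCountInt ((k : ℤ) - ℓ * (ℓ + 1) / 2 - ℓ * s) : ℤ)

/-- `Dbip m n = π(m,n) - π(m-1,n)`, with `π(-1,n) := 0`. -/
noncomputable def Dbip (m n : ℕ) : ℤ :=
  (bipartitePi m n : ℤ) - if m = 0 then 0 else (bipartitePi (m - 1) n : ℤ)

section Helpers

open Filter Topology

noncomputable def qp (q : ℂ) (n : ℕ) : ℂ := ∏ i ∈ range n, (1 - q ^ (i + 1))
noncomputable def qinf (q : ℂ) : ℂ := ∏' n : ℕ, (1 - q ^ (n + 1))
noncomputable def tA (j k : ℕ) (q : ℂ) (w : ℕ) : ℂ :=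
  q ^ (w * w + (k + j) * w) / (qp q w * qp q (w + k))
noncomputable def qA (j k : ℕ) (q : ℂ) : ℂ := ∑' w, tA j k q w

lemma one_sub_qpow_ne {q : ℂ} (hq : ‖q‖ < 1) (n : ℕ) : 1 - q ^ (n + 1) ≠ 0 := by
  intro h
  have h1 : q ^ (n + 1) = 1 := (sub_eq_zero.mp h).symm
  have h2 : ‖q‖ ^ (n + 1) = 1 := by rw [← norm_pow, h1, norm_one]
  have h3 : ‖q‖ ^ (n + 1) < 1 := pow_lt_one₀ (norm_nonneg _) hq (by omega)
  linarith

lemma qp_succ (q : ℂ) (n : ℕ) : qp q (n + 1) = qp q n * (1 - q ^ (n + 1)) := by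
  simp [qp, prod_range_succ]

lemma qp_ne {q : ℂ} (hq : ‖q‖ < 1) (n : ℕ) : qp q n ≠ 0 :=
  prod_ne_zero_iff.mpr fun i _ => one_sub_qpow_ne hq i

lemma qp_tendsto {q : ℂ} (hq : ‖q‖ < 1) : Tendsto (qp q) atTop (𝓝 (qinf q)) :=
  (ModularForm.multipliable_one_sub_pow hq).hasProd.tendsto_prod_nat

lemma qinf_ne {q : ℂ} (hq : ‖q‖ < 1) : qinf q ≠ 0 := by
  have := tprod_one_add_ne_zero_of_summable (f := fun n : ℕ => -q ^ (n + 1))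
    (fun i => by simpa [sub_eq_add_neg] using one_sub_qpow_ne hq i)
    (by simpa using (summable_nat_add_iff 1).mpr (summable_geometric_of_lt_one (norm_nonneg _) hq))
  simpa [qinf, sub_eq_add_neg] using this

lemma qp_inv_bdd {q : ℂ} (hq : ‖q‖ < 1) : ∃ C : ℝ, 0 < C ∧ ∀ n, ‖(qp q n)⁻¹‖ ≤ C := by
  have h := ((qp_tendsto hq).inv₀ (qinf_ne hq)).norm.bddAbove_range
  obtain ⟨C, hC⟩ := h
  refine ⟨max C 1, by positivity, fun n => le_trans (hC ⟨n, rfl⟩) (le_max_left _ _)⟩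

lemma tA_bound {q : ℂ} (hq : ‖q‖ < 1) : ∃ C : ℝ, 0 < C ∧ ∀ j k w, ‖tA j k q w‖ ≤ C * ‖q‖ ^ w := by
  obtain ⟨C, hC0, hC⟩ := qp_inv_bdd hq
  refine ⟨C * C, by positivity, fun j k w => ?_⟩
  rw [tA, div_eq_mul_inv, mul_inv, norm_mul, norm_mul, norm_pow, mul_comm]
  have h1 : ‖q‖ ^ (w * w + (k + j) * w) ≤ ‖q‖ ^ w :=
    pow_le_pow_of_le_one (norm_nonneg _) hq.le (by nlinarith [Nat.le_mul_self w])
  gcongr <;> apply hC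

lemma tA_summable {q : ℂ} (hq : ‖q‖ < 1) (j k : ℕ) : Summable (tA j k q) := by
  obtain ⟨C, hC0, hC⟩ := tA_bound hq
  exact Summable.of_norm_bounded
    ((summable_geometric_of_lt_one (norm_nonneg _) hq).mul_left C) (hC j k)

lemma qA_bound {q : ℂ} (hq : ‖q‖ < 1) : ∃ C : ℝ, ∀ j k, ‖qA j k q‖ ≤ C := by
  obtain ⟨C, hC0, hC⟩ := tA_bound hq
  exact ⟨_, fun j k => tsum_of_norm_bounded
    ((summable_geometric_of_lt_one (norm_nonneg _) hq).mul_left C).hasSum (hC j k)⟩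

lemma qA_rec1 {q : ℂ} (hq : ‖q‖ < 1) (j k : ℕ) :
    qA j k q = qA (j + 1) k q + q ^ (k + j + 1) * qA (j + 1) (k + 1) q := by
  have hs := tA_summable hq
  have h1 : qA j k q - qA (j + 1) k q = ∑' w, (tA j k q w - tA (j + 1) k q w) :=
    ((hs j k).tsum_sub (hs (j+1) k)).symm
  have h2 : ∑' w, (tA j k q w - tA (j + 1) k q w) =
      ∑' w, q ^ (k + j + 1) * tA (j + 1) (k + 1) q w := by
    rw [((hs j k).sub (hs (j+1) k)).tsum_eq_zero_add]
    simp only [tA]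
    simp only [mul_zero, add_zero, zero_add, sub_self]
    congr 1; ext w
    have e1 : w + 1 + k = w + (k + 1) := by ring
    rw [e1, qp_succ]
    have := qp_ne hq w; have := qp_ne hq (w + (k+1)); have := one_sub_qpow_ne hq w
    field_simp
    ring
  rw [h2, tsum_mul_left] at h1
  rw [← sub_eq_iff_eq_add']; exact h1

lemma qA_rec2 {q : ℂ} (hq : ‖q‖ < 1) (j k : ℕ) :
    qA j (k + 1) q = q ^ (k + 1) * qA (j + 1) (k + 1) q + qA (j + 1) k q := by
  have hs := tA_summable hq
  rw [qA, qA, qA, ← tsum_mul_left, ← ((hs (j+1) (k+1)).mul_left _).tsum_add (hs _ _)]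
  congr 1; ext w
  simp only [tA]
  rw [← add_assoc w k 1, qp_succ]
  have := qp_ne hq w; have := qp_ne hq (w + k); have := one_sub_qpow_ne hq (w + k)
  field_simp
  ring

lemma qA_zero {q : ℂ} (hq : ‖q‖ < 1) (k : ℕ) : qA 0 k q = (qinf q)⁻¹ := by
  have h1 : ∀ k, qA 0 k q = qA 0 (k + 1) q := fun k => by
    rw [qA_rec1 hq 0 k, qA_rec2 hq 0 k]; ring
  have h2 : ∀ k m, qA 0 (k + m) q = qA 0 k q := fun k m => by
    induction m with
    | zero => rfl
    | succ m ih => rw [← ih, h1 (k + m)]; rfl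
  obtain ⟨C, hC0, hC⟩ := tA_bound hq
  have h3 : Tendsto (fun k => qA 0 k q) atTop (𝓝 (∑' w, if w = 0 then (qinf q)⁻¹ else 0)) := by
    apply tendsto_tsum_of_dominated_convergence
      ((summable_geometric_of_lt_one (norm_nonneg _) hq).mul_left C)
    · intro w
      rcases Nat.eq_zero_or_pos w with rfl | hw
      · simpa [tA, qp] using (qp_tendsto hq).inv₀ (qinf_ne hq)
      · rw [if_neg (by omega)]
        obtain ⟨D, hD0, hD⟩ := qp_inv_bdd hq
        rw [tendsto_zero_iff_norm_tendsto_zero]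
        refine squeeze_zero (fun _ => norm_nonneg _) (g := fun k => ‖q‖ ^ k * (D * D)) (fun k => ?_) ?_
        · rw [tA, div_eq_mul_inv, mul_inv, norm_mul, norm_mul, norm_pow]
          have h1 : ‖q‖ ^ (w * w + (k + 0) * w) ≤ ‖q‖ ^ k :=
            pow_le_pow_of_le_one (norm_nonneg _) hq.le (by nlinarith)
          gcongr <;> apply hD
        · simpa using (tendsto_pow_atTop_nhds_zero_of_lt_one (norm_nonneg q) hq).mul_const (D * D)
    · exact Eventually.of_forall fun k w => hC 0 k w
  rw [tsum_ite_eq] at h3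
  have h4 : Tendsto (fun m => qA 0 (k + m) q) atTop (𝓝 (qinf q)⁻¹) := by
    have := h3.comp (tendsto_add_atTop_nat k)
    simpa [Function.comp_def, add_comm] using this
  simp_rw [h2] at h4
  exact tendsto_nhds_unique tendsto_const_nhds h4

/-- normalised versions -/
noncomputable def nA (j k : ℕ) (q : ℂ) : ℂ := qA j k q * qinf q

lemma nA_one {q : ℂ} (hq : ‖q‖ < 1) (k : ℕ) :
    nA 1 k q = 1 - q ^ (k + 1) * nA 1 (k + 1) q := by
  have h := qA_rec1 hq 0 k
  rw [qA_zero hq] at h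
  have h0 := qinf_ne hq
  have : (qinf q)⁻¹ * qinf q = 1 := inv_mul_cancel₀ h0
  simp only [nA]
  rw [← this, h]; ring

lemma nA_two {q : ℂ} (hq : ‖q‖ < 1) (k : ℕ) :
    nA 2 k q = nA 1 k q - q ^ (k + 2) * nA 2 (k + 1) q := by
  have h := qA_rec1 hq 1 k
  simp only [nA, h]; ring

lemma nA_bound {q : ℂ} (hq : ‖q‖ < 1) (j : ℕ) : ∃ C : ℝ, ∀ k, ‖nA j k q‖ ≤ C := by
  obtain ⟨C, hC⟩ := qA_bound hq
  refine ⟨C * ‖qinf q‖, fun k => ?_⟩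
  rw [nA, norm_mul]; gcongr; exact hC j k

lemma iter_aux {q : ℂ} {σ R B : ℝ} (hσ0 : 0 ≤ σ) (hσ : ‖q‖ = σ ^ 2) (hσ1 : σ ≤ 1)
    {e r : ℕ → ℂ} {d : ℕ} (hd : 1 ≤ d) (he : ∀ k, e k = r k - q ^ (k + d) * e (k + 1))
    (hr : ∀ k, ‖r k‖ ≤ R) (hB : ∀ k, ‖e k‖ ≤ B) (N : ℕ) :
    ∀ k, ‖e k‖ ≤ N * R + σ ^ (2 * N * k + N * (N + 1)) * B := by
  have hR : 0 ≤ R := (norm_nonneg _).trans (hr 0)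
  have hB0 : 0 ≤ B := (norm_nonneg _).trans (hB 0)
  have hq1 : σ ^ 2 ≤ 1 := pow_le_one₀ hσ0 hσ1
  induction N with
  | zero => intro k; simpa using hB k
  | succ N ih =>
    intro k
    have h1 : ‖e k‖ ≤ R + (σ ^ 2) ^ (k + 1) * ‖e (k + 1)‖ := by
      rw [he k]
      refine (norm_sub_le _ _).trans ?_
      rw [norm_mul, norm_pow, hσ]
      have : (σ ^ 2) ^ (k + d) ≤ (σ ^ 2) ^ (k + 1) :=
        pow_le_pow_of_le_one (by positivity) hq1 (by omega)
      gcongr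
      exact hr k
    have h2 : (σ ^ 2) ^ (k + 1) ≤ 1 := pow_le_one₀ (by positivity) hq1
    calc ‖e k‖ ≤ R + (σ ^ 2) ^ (k + 1) * ‖e (k + 1)‖ := h1
      _ ≤ R + (σ ^ 2) ^ (k + 1) * (N * R + σ ^ (2 * N * (k + 1) + N * (N + 1)) * B) := by
          gcongr; exact ih (k + 1)
      _ = R + (σ ^ 2) ^ (k + 1) * (N * R) +
            (σ ^ 2) ^ (k + 1) * σ ^ (2 * N * (k + 1) + N * (N + 1)) * B := by ring
      _ ≤ R + 1 * (N * R) + (σ ^ 2) ^ (k + 1) * σ ^ (2 * N * (k + 1) + N * (N + 1)) * B := by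
          gcongr
      _ = _ := by
          rw [← pow_mul, ← pow_add]; push_cast
          have : 2 * (k + 1) + (2 * N * (k + 1) + N * (N + 1)) =
            2 * (N + 1) * k + (N + 1) * (N + 1 + 1) := by ring
          rw [this]; ring

lemma iter_bound {q : ℂ} {t R : ℝ} (ht : 0 < t) (ht1 : t ≤ 1) (hq : ‖q‖ = Real.exp (-t))
    {e r : ℕ → ℂ} {d : ℕ} (hd : 1 ≤ d) (he : ∀ k, e k = r k - q ^ (k + d) * e (k + 1))
    (hr : ∀ k, ‖r k‖ ≤ R) (hB : ∃ B, ∀ k, ‖e k‖ ≤ B) (k : ℕ) :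
    ‖e k‖ ≤ 6 * R / √t := by
  have hR : 0 ≤ R := (norm_nonneg _).trans (hr 0)
  have hst : 0 < √t := Real.sqrt_pos.mpr ht
  set N := ⌈1 / √t⌉₊ with hN
  have hN1 : 1 / √t ≤ N := Nat.le_ceil _
  have hst1 : √t ≤ 1 := Real.sqrt_le_one.mpr ht1
  have hN2 : (N : ℝ) ≤ 2 / √t := by
    have h1 := (Nat.ceil_lt_add_one (a := 1 / √t) (by positivity)).le
    have h2 : 1 ≤ 1 / √t := by rw [le_div_iff₀ hst]; linarith
    have : 2 / √t = 1 / √t + 1 / √t := by ring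
    rw [this]; linarith
  have hNt : 1 ≤ t * (N * N) := by
    have h1 : 1 / √t * (1 / √t) ≤ N * N := by gcongr
    have h2 : 1 / √t * (1 / √t) = 1 / t := by
      rw [div_mul_div_comm, Real.mul_self_sqrt ht.le]; ring
    rw [h2, div_le_iff₀ ht] at h1
    linarith
  have hexp : Real.exp (-(1/2)) ≤ 2 / 3 := by
    have h := Real.quadratic_le_exp_of_nonneg (x := 1/2) (by norm_num)
    rw [Real.exp_neg, inv_le_comm₀ (by positivity) (by norm_num)]
    norm_num at h ⊢; linarith
  have hbdd : BddAbove (Set.range fun k => ‖e k‖) := by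
    obtain ⟨B, hB⟩ := hB
    exact ⟨B, by rintro _ ⟨k, rfl⟩; exact hB k⟩
  set B := ⨆ k, ‖e k‖ with hBdef
  have hle : ∀ k, ‖e k‖ ≤ B := fun k => le_ciSup hbdd k
  have hB0 : 0 ≤ B := (norm_nonneg _).trans (hle 0)
  have key : ∀ k, ‖e k‖ ≤ N * R + 2 / 3 * B := by
    intro k
    have h := iter_aux (q := q) (σ := Real.exp (-(t/2))) (Real.exp_pos _).le
      (by rw [hq, ← Real.exp_nat_mul]; congr 1; push_cast; ring)
      (Real.exp_le_one_iff.mpr (by linarith)) hd he hr hle N k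
    refine h.trans ?_
    gcongr
    rw [← Real.exp_nat_mul]
    refine le_trans (Real.exp_le_exp.mpr ?_) hexp
    push_cast
    have : (0:ℝ) ≤ (2 * N * k + N) * (t/2) := by positivity
    nlinarith
  have hBle : B ≤ N * R + 2 / 3 * B := ciSup_le key
  have : B ≤ 3 * (2 / √t * R) := by nlinarith [mul_le_mul_of_nonneg_right hN2 hR]
  refine (hle k).trans (this.trans (le_of_eq ?_))
  ring

lemma norm_q (t θ : ℝ) : ‖Complex.exp (-(t + θ * Complex.I))‖ = Real.exp (-t) := by
  rw [Complex.norm_exp]; simp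

lemma norm_q_lt {t : ℝ} (ht : 0 < t) (θ : ℝ) : ‖Complex.exp (-(t + θ * Complex.I))‖ < 1 := by
  rw [norm_q]; exact Real.exp_zero ▸ Real.exp_lt_exp.mpr (by linarith)

/-- crude bounds -/
lemma nA_one_crude {q : ℂ} {t : ℝ} (ht : 0 < t) (ht1 : t ≤ 1) (hq : ‖q‖ = Real.exp (-t)) (k : ℕ) :
    ‖nA 1 k q‖ ≤ 6 / √t := by
  have hq1 : ‖q‖ < 1 := by rw [hq]; exact Real.exp_zero ▸ Real.exp_lt_exp.mpr (by linarith)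
  have := iter_bound ht ht1 hq (e := fun k => nA 1 k q) (r := fun _ => 1) (R := 1) (le_refl 1)
    (nA_one hq1) (by simp) (nA_bound hq1 1) k
  simpa using this

lemma nA_two_crude {q : ℂ} {t : ℝ} (ht : 0 < t) (ht1 : t ≤ 1) (hq : ‖q‖ = Real.exp (-t)) (k : ℕ) :
    ‖nA 2 k q‖ ≤ 36 / t := by
  have hq1 : ‖q‖ < 1 := by rw [hq]; exact Real.exp_zero ▸ Real.exp_lt_exp.mpr (by linarith)
  have := iter_bound ht ht1 hq (e := fun k => nA 2 k q) (r := fun k => nA 1 k q) (R := 6 / √t)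
    (one_le_two) (nA_two hq1) (nA_one_crude ht ht1 hq) (nA_bound hq1 2) k
  refine this.trans (le_of_eq ?_)
  have : √t * √t = t := Real.mul_self_sqrt ht.le
  have hst : 0 < √t := Real.sqrt_pos.mpr ht
  field_simp; rw [Real.sq_sqrt ht.le]; ring

lemma one_add_qpow {t θ : ℝ} (ht : 0 < t) (hθ : |θ| ≤ t) (k : ℕ) :
    1 / 2 ≤ ‖1 + Complex.exp (-(t + θ * Complex.I)) ^ k‖ := by
  rw [← Complex.exp_nat_mul]
  by_cases h : k * |θ| ≤ Real.pi / 2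
  · have h1 : 1 ≤ (1 + Complex.exp (k * -(t + θ * Complex.I))).re := by
      rw [Complex.add_re, Complex.exp_re]
      have : 0 ≤ Real.cos ((k:ℂ) * -(t + θ * Complex.I)).im := by
        apply Real.cos_nonneg_of_mem_Icc
        have h2 : |((k:ℂ) * -(t + θ * Complex.I)).im| ≤ Real.pi / 2 := by
          simpa [abs_mul] using h
        exact abs_le.mp h2
      simp only [Complex.one_re]
      have := mul_nonneg (Real.exp_pos ((k:ℂ) * -(t + θ * Complex.I)).re).le this
      linarith
    have := Complex.re_le_norm (1 + Complex.exp (k * -(t + θ * Complex.I)))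
    linarith
  · push Not at h
    have h1 : ‖Complex.exp (k * -(t + θ * Complex.I))‖ ≤ 1 / 2 := by
      rw [Complex.norm_exp]
      have h2 : ((k:ℂ) * -(t + θ * Complex.I)).re ≤ -1 := by
        simp only [Complex.mul_re, Complex.natCast_re, Complex.neg_re, Complex.add_re,
          Complex.ofReal_re, Complex.natCast_im]
        simp
        have : (k:ℝ) * |θ| ≤ k * t := by gcongr
        linarith [Real.pi_gt_three]
      refine (Real.exp_le_exp.mpr h2).trans ?_
      rw [Real.exp_neg, inv_le_comm₀ (by positivity) (by norm_num)]
      have := Real.add_one_le_exp (1:ℝ)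
      norm_num at this ⊢; linarith
    have := norm_sub_le (1 + Complex.exp (k * -(t + θ * Complex.I))) (Complex.exp (k * -(t + θ * Complex.I)))
    rw [add_sub_cancel_right, norm_one] at this
    linarith

noncomputable def fapp (q x : ℂ) : ℂ := (1 + x)⁻¹ + (1 - q) * x * ((1 + x)⁻¹) ^ 3
noncomputable def gapp (x : ℂ) : ℂ := ((1 + x)⁻¹) ^ 2

lemma res1 {q x : ℂ} (hq : ‖q‖ ≤ 1) (hx : ‖x‖ ≤ 1) (ha : 1/2 ≤ ‖1 + x‖) (hb : 1/2 ≤ ‖1 + q * x‖) :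
    ‖1 - fapp q x - q * x * fapp q (q * x)‖ ≤ 72 * ‖1 - q‖ ^ 2 := by
  have ha0 : 1 + x ≠ 0 := norm_pos_iff.mp (by linarith)
  have hb0 : 1 + q * x ≠ 0 := norm_pos_iff.mp (by linarith)
  set α := (1 + x)⁻¹ with hα
  set β := (1 + q * x)⁻¹ with hβ
  have hα2 : ‖α‖ ≤ 2 := by
    rw [hα, norm_inv, inv_le_comm₀ (by linarith) (by norm_num)]; linarith
  have hβ2 : ‖β‖ ≤ 2 := by
    rw [hβ, norm_inv, inv_le_comm₀ (by linarith) (by norm_num)]; linarith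
  have hid : 1 - fapp q x - q * x * fapp q (q * x) = (1 - q) ^ 2 *
      (x * (x * (1 + q) * α ^ 3 + x * α ^ 2 * β
        - q ^ 2 * x * x * (α * β) * (α ^ 2 + α * β + β ^ 2))) := by
    simp only [fapp, hα, hβ]
    have hb1 : 1 + x * q ≠ 0 := by rwa [mul_comm x q]
    field_simp
    ring
  rw [hid, norm_mul, norm_pow, mul_comm]
  gcongr
  have h1 : ‖1 + q‖ ≤ 2 := by
    refine (norm_add_le _ _).trans ?_; rw [norm_one]; linarith
  have h2 : ‖α ^ 2 + α * β + β ^ 2‖ ≤ 12 := by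
    refine (norm_add₃_le).trans ?_
    simp only [norm_mul, norm_pow]
    calc _ ≤ (2:ℝ) ^ 2 + 2 * 2 + 2 ^ 2 := by gcongr
      _ = 12 := by norm_num
  rw [norm_mul]
  calc _ ≤ 1 * (‖x * (1 + q) * α ^ 3‖ + ‖x * α ^ 2 * β‖ +
        ‖q ^ 2 * x * x * (α * β) * (α ^ 2 + α * β + β ^ 2)‖) := by
        gcongr
        refine (norm_sub_le _ _).trans ?_
        gcongr; exact norm_add_le _ _
    _ ≤ 1 * (1 * 2 * 2 ^ 3 + 1 * 2 ^ 2 * 2 + 1 ^ 2 * 1 * 1 * (2 * 2) * 12) := by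
        simp only [norm_mul, norm_pow] at *
        gcongr
    _ ≤ 72 := by norm_num

lemma res2 {q x : ℂ} (hq : ‖q‖ ≤ 1) (hx : ‖x‖ ≤ 1) (ha : 1/2 ≤ ‖1 + x‖) (hb : 1/2 ≤ ‖1 + q * x‖) :
    ‖fapp q x - gapp x - q ^ 2 * x * gapp (q * x)‖ ≤ 32 * ‖1 - q‖ := by
  have ha0 : 1 + x ≠ 0 := norm_pos_iff.mp (by linarith)
  have hb0 : 1 + q * x ≠ 0 := norm_pos_iff.mp (by linarith)
  set α := (1 + x)⁻¹ with hα
  set β := (1 + q * x)⁻¹ with hβ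
  have hα2 : ‖α‖ ≤ 2 := by
    rw [hα, norm_inv, inv_le_comm₀ (by linarith) (by norm_num)]; linarith
  have hβ2 : ‖β‖ ≤ 2 := by
    rw [hβ, norm_inv, inv_le_comm₀ (by linarith) (by norm_num)]; linarith
  have hid : fapp q x - gapp x - q ^ 2 * x * gapp (q * x) = (1 - q) *
      (x * α ^ 3 + α ^ 2 * x * (1 + q) - q ^ 2 * x * x * (α * β) * (α + β)) := by
    simp only [fapp, gapp, hα, hβ]
    have hb1 : 1 + x * q ≠ 0 := by rwa [mul_comm x q]
    field_simp
    ring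
  rw [hid, norm_mul, mul_comm]
  gcongr
  have h1 : ‖1 + q‖ ≤ 2 := by
    refine (norm_add_le _ _).trans ?_; rw [norm_one]; linarith
  have h2 : ‖α + β‖ ≤ 4 := (norm_add_le _ _).trans (by linarith)
  calc _ ≤ (‖x * α ^ 3‖ + ‖α ^ 2 * x * (1 + q)‖ +
        ‖q ^ 2 * x * x * (α * β) * (α + β)‖) := by
        refine (norm_sub_le _ _).trans ?_
        gcongr; exact norm_add_le _ _
    _ ≤ (1 * 2 ^ 3 + 2 ^ 2 * 1 * 2 + 1 ^ 2 * 1 * 1 * (2 * 2) * 4) := by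
        simp only [norm_mul, norm_pow] at *
        gcongr
    _ ≤ 32 := by norm_num

lemma app_bdd {q x : ℂ} (hq : ‖q‖ ≤ 1) (hx : ‖x‖ ≤ 1) (ha : 1/2 ≤ ‖1 + x‖) :
    ‖fapp q x‖ ≤ 18 ∧ ‖gapp x‖ ≤ 4 := by
  have hα2 : ‖(1 + x)⁻¹‖ ≤ 2 := by
    rw [norm_inv, inv_le_comm₀ (by linarith) (by norm_num)]; linarith
  constructor
  · rw [fapp]
    refine (norm_add_le _ _).trans ?_
    simp only [norm_mul, norm_pow]
    have : ‖1 - q‖ ≤ 2 := (norm_sub_le _ _).trans (by rw [norm_one]; linarith)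
    calc _ ≤ (2:ℝ) + 2 * 1 * 2 ^ 3 := by gcongr
      _ ≤ 18 := by norm_num
  · rw [gapp, norm_pow]
    calc _ ≤ (2:ℝ) ^ 2 := by gcongr
      _ = 4 := by norm_num

lemma nA_two_approx {t θ : ℝ} (ht : 0 < t) (ht1 : t ≤ 1 / 2) (hθ : |θ| ≤ t) (k : ℕ) :
    ‖nA 2 k (Complex.exp (-(t + θ * Complex.I))) -
      gapp (Complex.exp (-(t + θ * Complex.I)) ^ k)‖ ≤ 42240 * √t := by
  set q := Complex.exp (-(t + θ * Complex.I)) with hqdef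
  have hqn : ‖q‖ = Real.exp (-t) := norm_q t θ
  have hq1 : ‖q‖ < 1 := norm_q_lt ht θ
  have hlow : ∀ k, 1/2 ≤ ‖1 + q ^ k‖ := one_add_qpow ht hθ
  have hxk : ∀ k, ‖q ^ k‖ ≤ 1 := fun k => by
    rw [norm_pow]; exact pow_le_one₀ (norm_nonneg _) hq1.le
  have hlow' : ∀ k, 1/2 ≤ ‖1 + q * q ^ k‖ := fun k => by
    rw [← pow_succ']; exact hlow _
  have hs : ‖1 - q‖ ≤ 4 * t := by
    have hτ : ‖-((t:ℂ) + θ * Complex.I)‖ ≤ 2 * t := by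
      rw [norm_neg]
      refine (norm_add_le _ _).trans ?_
      simp [abs_of_pos ht]; linarith
    have := Complex.norm_exp_sub_one_le (x := -((t:ℂ) + θ * Complex.I)) (by linarith)
    rw [norm_sub_rev]; linarith
  have hst : 0 < √t := Real.sqrt_pos.mpr ht
  have hss : √t * √t = t := Real.mul_self_sqrt ht.le
  have e1 : ∀ k, ‖nA 1 k q - fapp q (q ^ k)‖ ≤ 6 * (72 * ‖1 - q‖ ^ 2) / √t := by
    refine iter_bound ht (by linarith) hqn (e := fun k => nA 1 k q - fapp q (q ^ k))
      (r := fun k => 1 - fapp q (q ^ k) - q * q ^ k * fapp q (q * q ^ k)) (d := 1) le_rfl ?_ ?_ ?_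
    · intro k
      rw [nA_one hq1 k, pow_succ']; ring
    · intro k
      exact res1 hq1.le (hxk k) (hlow k) (hlow' k)
    · obtain ⟨C, hC⟩ := nA_bound hq1 1
      exact ⟨C + 18, fun k => (norm_sub_le _ _).trans
        (add_le_add (hC k) (app_bdd hq1.le (hxk k) (hlow k)).1)⟩
  have e1' : ∀ k, ‖nA 1 k q - fapp q (q ^ k)‖ ≤ 6912 * t * √t := by
    intro k
    refine (e1 k).trans ?_
    rw [div_le_iff₀ hst]
    have : ‖1 - q‖ ^ 2 ≤ (4 * t) ^ 2 := by gcongr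
    have e : 6912 * t * √t * √t = 6912 * t * t := by rw [mul_assoc, hss]
    rw [e]; nlinarith
  have e2 : ‖nA 2 k q - gapp (q ^ k)‖ ≤ 6 * (6912 * t * √t + 32 * (4 * t)) / √t := by
    refine iter_bound ht (by linarith) hqn (e := fun k => nA 2 k q - gapp (q ^ k))
      (r := fun k => (nA 1 k q - fapp q (q ^ k)) +
        (fapp q (q ^ k) - gapp (q ^ k) - q ^ 2 * q ^ k * gapp (q * q ^ k))) (d := 2)
        one_le_two ?_ ?_ ?_ k
    · intro k
      rw [nA_two hq1 k, pow_succ' q k]; ring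
    · intro k
      refine (norm_add_le _ _).trans (add_le_add (e1' k) ?_)
      refine (res2 hq1.le (hxk k) (hlow k) (hlow' k)).trans ?_
      gcongr
    · obtain ⟨C, hC⟩ := nA_bound hq1 2
      exact ⟨C + 4, fun k => (norm_sub_le _ _).trans
        (add_le_add (hC k) (app_bdd hq1.le (hxk k) (hlow k)).2)⟩
  refine e2.trans ?_
  rw [div_le_iff₀ hst, mul_assoc 42240, hss]
  have : √t ≤ 1 := Real.sqrt_le_one.mpr (by linarith)
  nlinarith

lemma qinf_tendsto_one : Tendsto qinf (𝓝 0) (𝓝 1) := by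
  have := tendsto_tprod_one_add_of_dominated_convergence (𝓕 := 𝓝 0) (g := 0)
      (f := fun (q : ℂ) (n : ℕ) ↦ -q ^ (n + 1)) (bound := fun n ↦ (1 / 2 : ℝ) ^ (n + 1))
  simp only [Pi.zero_apply, norm_neg, norm_pow, add_zero, tprod_one] at this
  unfold qinf
  simp_rw [sub_eq_add_neg]
  refine this
      (by simpa only [pow_succ'] using (summable_geometric_of_abs_lt_one (by norm_num)).mul_left _)
      (fun k ↦ by simpa using ((continuous_pow (M := ℂ) (k + 1)).tendsto 0).neg) ?_
  filter_upwards [Metric.ball_mem_nhds (0 : ℂ) (by norm_num : (0 : ℝ) < 1 / 2)] with q hq k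
  exact pow_le_pow_left₀ (norm_nonneg _) (mem_ball_zero_iff.mp hq).le _

lemma qinf_trans {τ : ℂ} (hτ : 0 < τ.re) :
    (qinf (Complex.exp (-τ)))⁻¹ = (Complex.sqrt Complex.I)⁻¹ * Complex.sqrt (Complex.I * τ / (2 * Real.pi))
      * Complex.exp (-τ / 24) * Complex.exp (Real.pi ^ 2 / (6 * τ)) *
      (qinf (Complex.exp (-(4 * Real.pi ^ 2 / τ))))⁻¹ := by
  have hτ0 : τ ≠ 0 := by rintro rfl; simp at hτ
  have hpi : (Real.pi : ℂ) ≠ 0 := by exact_mod_cast Real.pi_ne_zero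
  set z : ℂ := Complex.I * τ / (2 * Real.pi) with hz
  have hzi : 0 < z.im := by
    have : z = Complex.I * τ * ((1 / (2 * Real.pi) : ℝ) : ℂ) := by rw [hz]; push_cast; ring
    rw [this, Complex.im_mul_ofReal]
    simp
    positivity
  have hI := Complex.I_sq
  have h := ModularForm.eta_comp_eq_csqrt_I_inv (x := z) hzi
  simp only [Function.comp, Pi.smul_apply, Pi.mul_apply, smul_eq_mul] at h
  unfold ModularForm.eta at h
  simp only [ModularForm.eta_q_eq_pow, Function.Periodic.qParam] at h
  have e1 : 2 * (Real.pi : ℂ) * Complex.I * z = -τ := by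
    rw [hz]; field_simp; rw [hI]
  have e2 : 2 * (Real.pi : ℂ) * Complex.I * (-1 / z) = -(4 * Real.pi ^ 2 / τ) := by
    rw [hz]; field_simp; ring
  rw [e1, e2] at h
  have h2 : Complex.exp (-(Real.pi ^ 2 / (6 * τ))) * qinf (Complex.exp (-(4 * Real.pi ^ 2 / τ))) = (Complex.sqrt Complex.I)⁻¹ * (Complex.sqrt z * (Complex.exp (-τ / 24) * qinf (Complex.exp (-τ)))) := by
    rw [qinf, qinf]; convert h using 4
    · push_cast; field_simp; ring
    · push_cast; ring
  have n1 : ‖Complex.exp (-τ)‖ < 1 := by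
    rw [Complex.norm_exp]; exact Real.exp_zero ▸ Real.exp_lt_exp.mpr (by simpa using hτ)
  have n2 : ‖Complex.exp (-(4 * Real.pi ^ 2 / τ))‖ < 1 := by
    rw [Complex.norm_exp]; refine Real.exp_zero ▸ Real.exp_lt_exp.mpr ?_
    have : (4 * (Real.pi:ℂ) ^ 2 / τ) = ((4 * Real.pi ^ 2 : ℝ) : ℂ) * τ⁻¹ := by push_cast; ring
    rw [this, Complex.neg_re, Complex.re_ofReal_mul, Complex.inv_re]
    have : 0 < Complex.normSq τ := Complex.normSq_pos.mpr hτ0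
    have : 0 < 4 * Real.pi ^ 2 * (τ.re / Complex.normSq τ) := by positivity
    linarith
  have q1 := qinf_ne n1
  have q2 := qinf_ne n2
  rw [Complex.exp_neg] at h2
  have e0 := Complex.exp_ne_zero (Real.pi ^ 2 / (6 * τ))
  rw [inv_mul_eq_iff_eq_mul₀ e0] at h2
  rw [eq_mul_inv_iff_mul_eq₀ q2, inv_mul_eq_iff_eq_mul₀ q1, h2]
  ring

noncomputable def Sf (s : ℂ) : ℂ := (Complex.sqrt Complex.I)⁻¹ * Complex.sqrt (Complex.I * s)

noncomputable def Ef (t u : ℝ) : ℂ := Sf (1 + u * Complex.I) * Complex.exp (-(t * (1 + u * Complex.I)) / 24)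
  * (qinf (Complex.exp (-(4 * Real.pi ^ 2 / (t * (1 + u * Complex.I))))))⁻¹

lemma norm_sqrt (z : ℂ) : ‖Complex.sqrt z‖ = Real.sqrt ‖z‖ := by
  by_cases h : z = 0
  · simp [h]
  · rw [sqrt_eq_exp h, Complex.norm_exp, Real.sqrt_eq_rpow, Real.rpow_def_of_pos (by positivity)]
    congr 1
    have : Complex.log z / 2 = Complex.log z * ((1/2 : ℝ) : ℂ) := by push_cast; ring
    rw [this, Complex.re_mul_ofReal, Complex.log_re]

lemma qinf_trans' {t u : ℝ} (ht : 0 < t) : (qinf (Complex.exp (-(t + (t * u : ℝ) * Complex.I))))⁻¹ =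
    Real.sqrt (t / (2 * Real.pi)) * Complex.exp (Real.pi ^ 2 / (6 * (t * (1 + u * Complex.I)))) * Ef t u := by
  have e : ((t : ℂ) + (t * u : ℝ) * Complex.I) = t * (1 + u * Complex.I) := by push_cast; ring
  rw [e, qinf_trans (by simpa using ht)]
  have h1 : (1 + u * Complex.I) ≠ 0 := by
    intro h; have := congrArg Complex.re h; simp at this
  have h2 : Complex.sqrt (Complex.I * (t * (1 + u * Complex.I)) / (2 * Real.pi)) = Real.sqrt (t / (2 * Real.pi)) * Complex.sqrt (Complex.I * (1 + u * Complex.I)) := by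
    have hr : 0 < t / (2 * Real.pi) := by positivity
    have : Complex.I * (t * (1 + u * Complex.I)) / (2 * Real.pi) = ((t / (2 * Real.pi) : ℝ) : ℂ) * (Complex.I * (1 + u * Complex.I)) := by push_cast; ring
    have h3 : Complex.I * (1 + u * Complex.I) ≠ 0 := mul_ne_zero Complex.I_ne_zero h1
    rw [this, sqrt_eq_exp (mul_ne_zero (by exact_mod_cast hr.ne') h3), Complex.log_ofReal_mul hr h3,
      sqrt_eq_exp h3, add_div, Complex.exp_add, Real.sqrt_eq_rpow, Real.rpow_def_of_pos hr]
    push_cast; ring_nf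
  rw [h2]
  unfold Ef Sf; ring

lemma qprime_norm {t u : ℝ} (ht : 0 < t) (hu : |u| ≤ 1) :
    ‖Complex.exp (-(4 * Real.pi ^ 2 / (t * (1 + u * Complex.I))))‖ ≤ Real.exp (-(1 / t)) := by
  rw [Complex.norm_exp]
  apply Real.exp_le_exp.mpr
  have : (4 * (Real.pi:ℂ) ^ 2 / (t * (1 + u * Complex.I))) = ((4 * Real.pi ^ 2 / t: ℝ) : ℂ) * (1 + u * Complex.I)⁻¹ := by
    push_cast; rw [← div_eq_mul_inv, div_div]
  rw [this, Complex.neg_re, Complex.re_ofReal_mul, Complex.inv_re]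
  have hn : Complex.normSq (1 + u * Complex.I) = 1 + u ^ 2 := by
    simp [Complex.normSq_apply]; ring
  have hu2 : u ^ 2 ≤ 1 := by rw [← sq_abs]; exact pow_le_one₀ (abs_nonneg _) hu
  have hr : (1 + u * Complex.I).re = 1 := by simp
  rw [hn, hr, neg_le_neg_iff, div_mul_div_comm, mul_one, div_le_div_iff₀ ht (by positivity)]
  have := Real.pi_gt_three
  have : 9 ≤ Real.pi ^ 2 := by nlinarith
  nlinarith [mul_pos ht (by linarith : (0:ℝ) < 9)]

lemma expneg_tendsto : Tendsto (fun t : ℝ => Real.exp (-(1 / t))) (𝓝[>] 0) (𝓝 0) := by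
  refine Real.tendsto_exp_neg_atTop_nhds_zero.comp ?_
  exact (tendsto_inv_nhdsGT_zero (𝕜 := ℝ)).congr fun x => (one_div x).symm

lemma norm_Sf (s : ℂ) : ‖Sf s‖ = Real.sqrt ‖s‖ := by
  unfold Sf
  rw [norm_mul, norm_inv, norm_sqrt, norm_sqrt]; simp

lemma Ef_bound : ∃ C : ℝ, 0 < C ∧ ∃ t₀ : ℝ, 0 < t₀ ∧ ∀ t u : ℝ, 0 < t → t < t₀ → |u| ≤ 1 → ‖Ef t u‖ ≤ C := by
  have h1 : Tendsto (fun q => ‖(qinf q)⁻¹‖) (𝓝 0) (𝓝 1) := by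
    simpa using (qinf_tendsto_one.inv₀ one_ne_zero).norm
  obtain ⟨δ, hδ, hb⟩ := Metric.eventually_nhds_iff.mp (h1.eventually (gt_mem_nhds (by norm_num : (1:ℝ) < 2)))
  have h2 := expneg_tendsto.eventually (gt_mem_nhds hδ)
  obtain ⟨t₀, ht₀, h3⟩ := Metric.eventually_nhds_iff.mp (eventually_nhdsWithin_iff.mp h2)
  refine ⟨4, by norm_num, t₀, ht₀, fun t u ht htt hu => ?_⟩
  have e1 := h3 (y := t) (by rw [Real.dist_eq, sub_zero, abs_of_pos ht]; exact htt) ht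
  have e2 := hb (y := Complex.exp (-(4 * Real.pi ^ 2 / (t * (1 + u * Complex.I))))) (by
    rw [dist_zero_right]; exact (qprime_norm ht hu).trans_lt e1)
  unfold Ef
  rw [norm_mul, norm_mul, norm_Sf]
  have e3 : Real.sqrt ‖(1 + u * Complex.I : ℂ)‖ ≤ 2 := by
    rw [Real.sqrt_le_left (by norm_num)]
    refine (norm_add_le _ _).trans ?_
    simp; linarith
  have e4 : ‖Complex.exp (-(t * (1 + u * Complex.I)) / 24)‖ ≤ 1 := by
    rw [Complex.norm_exp, ← Real.exp_zero]
    apply Real.exp_le_exp.mpr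
    simp [neg_div]; positivity
  have e5 := e2.le
  refine (mul_le_mul (mul_le_mul e3 e4 (by positivity) (by norm_num)) e5 (by positivity) (by norm_num)).trans (by norm_num)

lemma Ef_tendsto {t u : ℕ → ℝ} (ht : ∀ᶠ n in atTop, 0 < t n) (ht0 : Tendsto t atTop (𝓝 0)) (hu : Tendsto u atTop (𝓝 0)) :
    Tendsto (fun n => Ef (t n) (u n)) atTop (𝓝 1) := by
  have hu1 : Tendsto (fun n => (1 + (u n : ℂ) * Complex.I)) atTop (𝓝 1) := by
    have := ((Complex.continuous_ofReal.tendsto 0).comp hu).mul_const Complex.I |>.const_add 1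
    simpa using this
  have htc : Tendsto (fun n => (t n : ℂ)) atTop (𝓝 0) := by
    simpa [Function.comp_def] using (Complex.continuous_ofReal.tendsto 0).comp ht0
  have h1 : Tendsto (fun n => Sf (1 + (u n : ℂ) * Complex.I)) atTop (𝓝 1) := by
    have hc : ContinuousAt Sf 1 := by
      unfold Sf Complex.sqrt
      refine continuousAt_const.mul ?_
      refine ContinuousAt.cpow (by fun_prop) continuousAt_const ?_
      simp [Complex.mem_slitPlane_iff]
    have hS1 : Sf 1 = 1 := by
      unfold Sf
      rw [mul_one]
      apply inv_mul_cancel₀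
      rw [← norm_pos_iff, norm_sqrt]; simp
    have := hc.tendsto.comp hu1
    rwa [hS1] at this
  have h2 : Tendsto (fun n => Complex.exp (-(t n * (1 + u n * Complex.I)) / 24)) atTop (𝓝 1) := by
    have : Tendsto (fun n => (-(t n * (1 + u n * Complex.I)) / 24)) atTop (𝓝 0) := by
      simpa using ((htc.mul hu1).neg).div_const 24
    simpa [Function.comp_def] using (Complex.continuous_exp.tendsto 0).comp this
  have h3 : Tendsto (fun n => Complex.exp (-(4 * Real.pi ^ 2 / (t n * (1 + u n * Complex.I))))) atTop (𝓝 0) := by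
    rw [tendsto_zero_iff_norm_tendsto_zero]
    have hu' : ∀ᶠ n in atTop, |u n| ≤ 1 := by
      have := hu.abs.eventually (gt_mem_nhds (by simp : |(0:ℝ)| < 1))
      exact this.mono fun n h => h.le
    have h4 : Tendsto (fun n => Real.exp (-(1 / t n))) atTop (𝓝 0) :=
      expneg_tendsto.comp (tendsto_nhdsWithin_iff.mpr ⟨ht0, ht⟩)
    refine tendsto_of_tendsto_of_tendsto_of_le_of_le' tendsto_const_nhds h4 (Eventually.of_forall fun n => norm_nonneg _) ?_
    filter_upwards [hu', ht] with n h h'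
    exact qprime_norm h' h
  have h5 := ((qinf_tendsto_one.comp h3).inv₀ one_ne_zero)
  simpa [Ef, Function.comp_def] using (h1.mul h2).mul h5

lemma factor_minor {z : ℂ} (hz : ‖z‖ < 1) :
    ‖(1 - z)⁻¹‖ ≤ (1 - ‖z‖)⁻¹ * Real.exp (-(‖z‖ - z.re)) := by
  have h1 := Complex.hasSum_re (Complex.hasSum_taylorSeries_neg_log hz)
  have hz' : ‖((‖z‖ : ℝ) : ℂ)‖ < 1 := by simpa using hz
  have h2 := Complex.hasSum_re (Complex.hasSum_taylorSeries_neg_log hz')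
  have h3 := h2.sub h1
  have h4 := sum_le_hasSum {1} (fun n _ => ?_) h3
  swap
  · rw [sub_nonneg]
    refine (Complex.re_le_norm _).trans ?_
    rw [norm_div, norm_pow]
    norm_cast
  simp only [sum_singleton, pow_one, Nat.cast_one, div_one, Complex.ofReal_re, Complex.neg_re, Complex.log_re] at h4
  have e1 : ‖(1 : ℂ) - ((‖z‖ : ℝ) : ℂ)‖ = 1 - ‖z‖ := by
    rw [← Complex.ofReal_one, ← Complex.ofReal_sub, Complex.norm_real, Real.norm_of_nonneg (by linarith)]
  rw [e1] at h4
  have hp : 0 < 1 - ‖z‖ := by linarith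
  have hn : 0 < ‖1 - z‖ := by
    rw [norm_pos_iff]; intro h; rw [← sub_eq_zero.mp h] at hz; simp at hz
  rw [norm_inv, ← Real.exp_log hn, ← Real.exp_log hp, ← Real.exp_neg, ← Real.exp_neg, ← Real.exp_add]
  apply Real.exp_le_exp.mpr
  linarith

lemma qp_minor {q : ℂ} (hq : ‖q‖ < 1) (n : ℕ) :
    ‖(qp q n)⁻¹‖ ≤ ‖(qp (‖q‖ : ℂ) n)⁻¹‖ * Real.exp (-(∑ i ∈ range n, (‖q‖ ^ (i + 1) - (q ^ (i + 1)).re))) := by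
  unfold qp
  rw [← sum_neg_distrib, Real.exp_sum, norm_inv, norm_inv, norm_prod, norm_prod, ← prod_inv_distrib, ← prod_inv_distrib, ← prod_mul_distrib]
  refine prod_le_prod (fun _ _ => by positivity) fun i _ => ?_
  have h : ‖q ^ (i + 1)‖ < 1 := by rw [norm_pow]; exact pow_lt_one₀ (norm_nonneg _) hq (by omega)
  have := factor_minor h
  rw [norm_inv, norm_pow] at this
  refine this.trans_eq ?_
  congr 2
  rw [norm_pow] at h
  rw [← Complex.ofReal_pow, ← Complex.ofReal_one, ← Complex.ofReal_sub, Complex.norm_real, Real.norm_of_nonneg (by linarith)]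

lemma geom_succ {q : ℂ} (hq : ‖q‖ < 1) : HasSum (fun i : ℕ => q ^ (i + 1)) ((1 - q)⁻¹ - 1) := by
  have h := hasSum_geometric_of_norm_lt_one hq
  have := (hasSum_nat_add_iff' 1).mpr h
  simpa using this

lemma qinf_minor {q : ℂ} (hq : ‖q‖ < 1) :
    ‖(qinf q)⁻¹‖ ≤ ‖(qinf (‖q‖ : ℂ))⁻¹‖ * Real.exp (-((1 - ‖q‖)⁻¹ - ((1 - q)⁻¹).re)) := by
  have hq' : ‖((‖q‖ : ℝ) : ℂ)‖ < 1 := by simpa using hq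
  have h1 := ((qp_tendsto hq).inv₀ (qinf_ne hq)).norm
  have h2 := ((qp_tendsto hq').inv₀ (qinf_ne hq')).norm
  have h3 := (Complex.hasSum_re (geom_succ hq')).sub (Complex.hasSum_re (geom_succ hq))
  have h4 := (Real.continuous_exp.tendsto _).comp h3.tendsto_sum_nat.neg
  have h5 := h2.mul h4
  have e : (((1 - ((‖q‖ : ℝ) : ℂ))⁻¹ - 1).re - ((1 - q)⁻¹ - 1).re) = (1 - ‖q‖)⁻¹ - ((1 - q)⁻¹).re := by
    simp only [Complex.sub_re]
    rw [← Complex.ofReal_one, ← Complex.ofReal_sub, ← Complex.ofReal_inv, Complex.ofReal_re]; simp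
  rw [e] at h5
  refine le_of_tendsto_of_tendsto' h1 h5 fun n => ?_
  have := qp_minor hq n
  refine this.trans_eq ?_
  simp only [Function.comp]
  congr 3
  refine sum_congr rfl fun i _ => ?_
  rw [← Complex.ofReal_pow, Complex.ofReal_re]

lemma minor_gap {t θ : ℝ} (ht : 0 < t) (ht1 : t ≤ 1 / 2) (h1 : t ≤ |θ|) (h2 : |θ| ≤ Real.pi) :
    2 / 25 / t ≤ (1 - Real.exp (-t))⁻¹ - ((1 - Complex.exp (-(t + θ * Complex.I)))⁻¹).re := by
  set r := Real.exp (-t) with hr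
  have hr1 : 1 - t ≤ r := by have := Real.add_one_le_exp (-t); linarith
  have hr0 : r < 1 := Real.exp_zero ▸ Real.exp_lt_exp.mpr (by linarith)
  have hc := Real.cos_le_one_sub_mul_cos_sq h2
  set s := 1 - r with hs
  have hs0 : 0 < s := by linarith
  have hst : s ≤ t := by linarith
  have hθ : t ^ 2 ≤ θ ^ 2 := by rw [← sq_abs θ]; gcongr
  have hpi : 1 / 5 ≤ 2 / Real.pi ^ 2 := by
    rw [div_le_div_iff₀ (by norm_num) (by positivity)]
    have := Real.pi_lt_d2; have := Real.pi_pos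
    nlinarith
  have hnsq : ‖1 - Complex.exp (-(t + θ * Complex.I))‖ ^ 2 = s ^ 2 + 2 * r * (1 - Real.cos θ) := by
    have e : Complex.exp (-(t + θ * Complex.I)) = ((r * Real.cos θ : ℝ) : ℂ) + ((-(r * Real.sin θ) : ℝ) : ℂ) * Complex.I := by
      have : (-(t + θ * Complex.I) : ℂ) = ((-t : ℝ) : ℂ) + ((-θ : ℝ) : ℂ) * Complex.I := by push_cast; ring
      rw [this, Complex.exp_add, Complex.exp_mul_I, ← Complex.ofReal_exp, ← Complex.ofReal_cos, ← Complex.ofReal_sin, Real.cos_neg, Real.sin_neg, ← hr]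
      push_cast; ring
    rw [e, ← Complex.normSq_eq_norm_sq, Complex.normSq_apply]
    simp only [Complex.sub_re, Complex.sub_im, Complex.add_re, Complex.add_im, Complex.ofReal_re, Complex.ofReal_im, Complex.mul_re, Complex.mul_im, Complex.I_re, Complex.I_im, Complex.one_re, Complex.one_im]
    have := Real.sin_sq_add_cos_sq θ
    rw [hs]
    linear_combination r ^ 2 * this
  have hbig : (1.09 * s) ^ 2 ≤ ‖1 - Complex.exp (-(t + θ * Complex.I))‖ ^ 2 := by
    rw [hnsq]
    have a1 : 1 / 5 * s ^ 2 ≤ 2 / Real.pi ^ 2 * θ ^ 2 := by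
      apply mul_le_mul hpi _ (by positivity) (by positivity)
      nlinarith
    have a2 : 1 / 5 * s ^ 2 ≤ 1 - Real.cos θ := by linarith
    have a3 : 1 - Real.cos θ ≤ 2 * r * (1 - Real.cos θ) := by
      have : 0 ≤ 1 - Real.cos θ := by linarith [Real.cos_le_one θ]
      nlinarith
    nlinarith [sq_nonneg s]
  have hb : 1.09 * s ≤ ‖1 - Complex.exp (-(t + θ * Complex.I))‖ := by
    exact (abs_le_of_sq_le_sq' hbig (norm_nonneg _)).2
  have hre : ((1 - Complex.exp (-(t + θ * Complex.I)))⁻¹).re ≤ (1.09 * s)⁻¹ := by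
    refine (Complex.re_le_norm _).trans ?_
    rw [norm_inv]
    exact inv_anti₀ (by positivity) hb
  have : 2 / 25 / t ≤ s⁻¹ - (1.09 * s)⁻¹ := by
    have : s⁻¹ - (1.09 * s)⁻¹ = (9 / 109) / s := by field_simp; norm_num
    rw [this]
    exact div_le_div₀ (by norm_num) (by norm_num) hs0 hst
  linarith

lemma qinf_minor_final : ∃ C : ℝ, 0 < C ∧ ∃ t₀ : ℝ, 0 < t₀ ∧ ∀ t θ : ℝ, 0 < t → t < t₀ → t ≤ |θ| → |θ| ≤ Real.pi →
    ‖(qinf (Complex.exp (-(t + θ * Complex.I))))⁻¹‖ ≤ C * Real.exp (Real.pi ^ 2 / (6 * t) - 2 / 25 / t) := by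
  obtain ⟨C, hC, t₀, ht₀, h⟩ := Ef_bound
  refine ⟨C, hC, min t₀ (1 / 2), by positivity, fun t θ ht ht1 h1 h2 => ?_⟩
  have ht2 : t < t₀ := lt_of_lt_of_le ht1 (min_le_left _ _)
  have ht3 : t < 1 / 2 := lt_of_lt_of_le ht1 (min_le_right _ _)
  have a1 := qinf_minor (norm_q_lt ht θ)
  rw [norm_q] at a1
  have a2 := minor_gap ht ht3.le h1 h2
  have a3 := qinf_trans' (u := 0) ht
  have e : (-(t + (t * 0 : ℝ) * Complex.I) : ℂ) = ((-t : ℝ) : ℂ) := by simp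
  rw [e, ← Complex.ofReal_exp] at a3
  have a4 : ‖(qinf (Real.exp (-t) : ℂ))⁻¹‖ ≤ Real.exp (Real.pi ^ 2 / (6 * t)) * C := by
    rw [a3, norm_mul, norm_mul]
    have b1 : ‖((Real.sqrt (t / (2 * Real.pi)) : ℝ) : ℂ)‖ ≤ 1 := by
      rw [Complex.norm_real, Real.norm_of_nonneg (Real.sqrt_nonneg _), Real.sqrt_le_one, div_le_one (by positivity)]
      have := Real.pi_gt_three; linarith
    have b2 : ‖Complex.exp (Real.pi ^ 2 / (6 * (t * (1 + (0 : ℝ) * Complex.I))))‖ = Real.exp (Real.pi ^ 2 / (6 * t)) := by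
      have : ((Real.pi : ℂ) ^ 2 / (6 * (t * (1 + (0 : ℝ) * Complex.I)))) = ((Real.pi ^ 2 / (6 * t) : ℝ) : ℂ) := by
        push_cast; simp
      rw [this, ← Complex.ofReal_exp, Complex.norm_real, Real.norm_of_nonneg (Real.exp_pos _).le]
    rw [b2]
    have b3 := h t 0 ht ht2 (by simp)
    calc _ ≤ 1 * Real.exp (Real.pi ^ 2 / (6 * t)) * C := by gcongr
      _ = _ := by ring
  refine a1.trans ?_
  calc _ ≤ (Real.exp (Real.pi ^ 2 / (6 * t)) * C) * Real.exp (-(2 / 25 / t)) := by gcongr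
    _ = _ := by rw [sub_eq_add_neg, Real.exp_add]; ring

def GF (q : ℂ) (S : Set (Multiset ℕ)) (a : ℂ) : Prop := HasSum (fun s : S => q ^ (s : Multiset ℕ).sum) a

lemma GF_image {q a : ℂ} {X : Type*} {S : Set (Multiset ℕ)} (φ : X → Multiset ℕ) (hφ : Function.Injective φ)
    (hr : Set.range φ = S) (h : HasSum (fun x => q ^ (φ x).sum) a) : GF q S a := by
  subst hr
  unfold GF
  rw [← (Equiv.ofInjective φ hφ).hasSum_iff]
  exact h

lemma hasSum_mul {X Y : Type*} {f : X → ℂ} {g : Y → ℂ} {a b : ℂ} (hf : HasSum f a) (hg : HasSum g b) :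
    HasSum (fun x : X × Y => f x.1 * g x.2) (a * b) :=
  hf.mul hg (summable_mul_of_summable_norm hf.summable.norm hg.summable.norm)

lemma geom_pow {q : ℂ} (hq : ‖q‖ < 1) (n : ℕ) : HasSum (fun m : ℕ => (q ^ (n + 1)) ^ m) (1 - q ^ (n + 1))⁻¹ := by
  apply hasSum_geometric_of_norm_lt_one
  rw [norm_pow]; exact pow_lt_one₀ (norm_nonneg _) hq (by omega)

def Uset (w : ℕ) : Set (Multiset ℕ) := {s | ∀ i ∈ s, 2 ≤ i ∧ i ≤ w}
def Vset (j : ℕ) : Set (Multiset ℕ) := {s | s.card = j}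

lemma GF_singleton (q : ℂ) : GF q {0} 1 := by
  have : HasSum (fun s : ({0} : Set (Multiset ℕ)) => q ^ (s : Multiset ℕ).sum) (q ^ (0 : Multiset ℕ).sum) :=
    hasSum_unique _
  simpa [GF] using this

lemma GF_V {q : ℂ} (hq : ‖q‖ < 1) (j : ℕ) : GF q (Vset j) (qp q j)⁻¹ := by
  induction j with
  | zero =>
    have : Vset 0 = {0} := by ext s; simp [Vset]
    rw [this]; simpa [qp] using GF_singleton q
  | succ j ih =>
    rw [qp_succ, mul_inv]
    have h := hasSum_mul ih (geom_pow hq j)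
    refine GF_image (fun x : Vset j × ℕ => ((0 ::ₘ (x.1 : Multiset ℕ)).map (· + x.2))) ?_ ?_ ?_
    · rintro ⟨⟨v, hv⟩, m⟩ ⟨⟨v', hv'⟩, m'⟩ h
      simp only at h
      have h1 : m' ≤ m := by
        have : m ∈ (0 ::ₘ v).map (· + m) := by simp
        rw [h] at this
        obtain ⟨x, -, hx⟩ := Multiset.mem_map.mp this
        omega
      have h2 : m ≤ m' := by
        have : m' ∈ (0 ::ₘ v').map (· + m') := by simp
        rw [← h] at this
        obtain ⟨x, -, hx⟩ := Multiset.mem_map.mp this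
        omega
      obtain rfl : m = m' := by omega
      have h3 := Multiset.map_injective (add_left_injective m) h
      have h4 := (Multiset.cons_inj_right 0).mp h3
      simp [h4]
    · ext s
      simp only [Set.mem_range, Prod.exists, Subtype.exists, Vset, Set.mem_setOf_eq]
      constructor
      · rintro ⟨v, hv, m, rfl⟩; simp [hv]
      · intro hs
        have hne : ∃ m, m ∈ s := Multiset.card_pos_iff_exists_mem.mp (by omega)
        classical
        set m := Nat.find hne with hm
        have hm1 : m ∈ s := Nat.find_spec hne
        have hm2 : ∀ x ∈ s, m ≤ x := fun x hx => Nat.find_min' hne hx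
        have h0 : 0 ∈ s.map (· - m) := Multiset.mem_map.mpr ⟨m, hm1, by simp⟩
        obtain ⟨v, hv⟩ := Multiset.exists_cons_of_mem h0
        refine ⟨v, ?_, m, ?_⟩
        · have := congrArg Multiset.card hv
          simp at this; omega
        · rw [← hv, Multiset.map_map]
          conv_rhs => rw [← Multiset.map_id s]
          refine Multiset.map_congr rfl fun x hx => ?_
          have := hm2 x hx
          simp; omega
    · convert h using 2 with x
      simp [Multiset.sum_map_add]
      rw [← pow_mul, ← pow_add]
      congr 1
      have := x.1.2
      simp only [Vset, Set.mem_setOf_eq] at this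
      rw [this]; ring

lemma GF_U {q : ℂ} (hq : ‖q‖ < 1) (w : ℕ) : GF q (Uset (w + 1)) ((1 - q) * (qp q (w + 1))⁻¹) := by
  induction w with
  | zero =>
    have : Uset (0 + 1) = {0} := by
      ext s; simp only [Uset, Set.mem_setOf_eq, Set.mem_singleton_iff]
      constructor
      · intro h
        apply Multiset.eq_zero_of_forall_notMem
        intro a ha
        have := h a ha; omega
      · rintro rfl; simp
    rw [this]
    have h := one_sub_qpow_ne hq 0
    simp only [zero_add, pow_one] at h
    simp [qp, h]
    exact GF_singleton q
  | succ w ih =>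
    rw [qp_succ, mul_inv, ← mul_assoc]
    have h := hasSum_mul ih (geom_pow hq (w + 1))
    refine GF_image (fun x : Uset (w + 1) × ℕ => ((x.1 : Multiset ℕ) + Multiset.replicate x.2 (w + 2))) ?_ ?_ ?_
    · rintro ⟨⟨v, hv⟩, m⟩ ⟨⟨v', hv'⟩, m'⟩ h
      simp only at h
      simp only [Uset, Set.mem_setOf_eq] at hv hv'
      have e1 : v.count (w + 2) = 0 := Multiset.count_eq_zero.mpr fun h => by have := hv _ h; omega
      have e2 : v'.count (w + 2) = 0 := Multiset.count_eq_zero.mpr fun h => by have := hv' _ h; omega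
      have h3 := congrArg (Multiset.count (w + 2)) h
      simp [e1, e2] at h3
      subst h3
      simpa using h
    · ext s
      simp only [Set.mem_range, Prod.exists, Subtype.exists, Uset, Set.mem_setOf_eq]
      constructor
      · rintro ⟨v, hv, m, rfl⟩ i hi
        rw [Multiset.mem_add] at hi
        rcases hi with hi | hi
        · have := hv i hi; omega
        · have := Multiset.eq_of_mem_replicate hi; omega
      · intro hs
        refine ⟨s.filter (· ≠ w + 2), ?_, s.count (w + 2), ?_⟩
        · intro i hi
          rw [Multiset.mem_filter] at hi
          have := hs i hi.1; omega
        · ext a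
          rw [Multiset.count_add, Multiset.count_replicate, Multiset.count_filter]
          by_cases ha : a = w + 2
          · simp [ha]
          · simp [ha, Ne.symm ha]
    · convert h using 2 with x
      simp
      rw [← pow_mul, ← pow_add]
      congr 1
      ring

def Bset (k w : ℕ) : Set (Multiset ℕ) :=
  {s | 0 ∉ s ∧ s.count 1 = w ∧ (s.filter fun p => w < p).card = w + k}

lemma hs_congr {X : Type*} {f g : X → ℂ} {a b : ℂ} (h : HasSum g b) (hf : ∀ x, f x = g x) (hab : a = b) :
    HasSum f a := by
  rw [hab, show f = g from funext hf]; exact h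

lemma GF_B {q : ℂ} (hq : ‖q‖ < 1) (k w : ℕ) :
    GF q (Bset k (w + 1)) ((1 - q) * q ^ k * tA 2 k q (w + 1)) := by
  have h := (hasSum_mul (GF_U hq w) (GF_V hq (w + 1 + k))).mul_left (q ^ ((w + 1) + (w + 2) * (w + 1 + k)))
  refine GF_image (fun x : Uset (w + 1) × Vset (w + 1 + k) =>
    (Multiset.replicate (w + 1) 1 + (x.1 : Multiset ℕ) + (x.2 : Multiset ℕ).map (· + (w + 2)))) ?_ ?_ ?_
  · rintro ⟨⟨u, hu⟩, ⟨v, hv⟩⟩ ⟨⟨u', hu'⟩, ⟨v', hv'⟩⟩ h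
    simp only at h
    simp only [Uset, Set.mem_ofPred_eq] at hu hu'
    have key : ∀ u v : Multiset ℕ, (∀ i ∈ u, 2 ≤ i ∧ i ≤ w + 1) →
        (Multiset.replicate (w + 1) 1 + u + v.map (· + (w + 2))).filter (w + 1 < ·) = v.map (· + (w + 2)) := by
      intro u v hu
      rw [Multiset.filter_add, Multiset.filter_add, Multiset.filter_eq_nil.mpr, Multiset.filter_eq_nil.mpr,
        Multiset.filter_eq_self.mpr]
      · simp
      · intro a ha
        obtain ⟨x, -, hx⟩ := Multiset.mem_map.mp ha
        omega
      · intro a ha; have := hu a ha; omega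
      · intro a ha; have := Multiset.eq_of_mem_replicate ha; omega
    have h1 := congrArg (Multiset.filter (w + 1 < ·)) h
    rw [key u v hu, key u' v' hu'] at h1
    have h2 := Multiset.map_injective (add_left_injective (w + 2)) h1
    subst h2
    have h3 : u = u' := by simpa using h
    subst h3; rfl
  · ext s
    simp only [Set.mem_range, Prod.exists, Subtype.exists, Uset, Vset, Bset, Set.mem_ofPred_eq]
    constructor
    · rintro ⟨u, hu, v, hv, rfl⟩
      refine ⟨?_, ?_, ?_⟩
      · intro h0
        simp only [Multiset.mem_add, Multiset.mem_map] at h0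
        rcases h0 with (h0 | h0) | ⟨x, -, h0⟩
        · have := Multiset.eq_of_mem_replicate h0; omega
        · have := hu 0 h0; omega
        · omega
      · rw [Multiset.count_add, Multiset.count_add, Multiset.count_replicate_self,
          Multiset.count_eq_zero.mpr, Multiset.count_eq_zero.mpr]
        · intro h0; obtain ⟨x, -, h0⟩ := Multiset.mem_map.mp h0; omega
        · intro h0; have := hu 1 h0; omega
      · rw [Multiset.filter_add, Multiset.filter_add, Multiset.filter_eq_nil.mpr, Multiset.filter_eq_nil.mpr,
          Multiset.filter_eq_self.mpr]
        · simp [hv]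
        · intro a ha
          obtain ⟨x, -, hx⟩ := Multiset.mem_map.mp ha
          omega
        · intro a ha; have := hu a ha; omega
        · intro a ha; have := Multiset.eq_of_mem_replicate ha; omega
    · rintro ⟨h0, h1, h2⟩
      refine ⟨s.filter (fun i => 2 ≤ i ∧ i ≤ w + 1), ?_, (s.filter (fun i => w + 1 < i)).map (· - (w + 2)), ?_, ?_⟩
      · intro i hi; exact (Multiset.mem_filter.mp hi).2
      · simpa using h2
      · rw [Multiset.map_map]
        have : Multiset.map ((fun x => x + (w + 2)) ∘ fun x => x - (w + 2)) (s.filter (fun i => w + 1 < i)) = s.filter (fun i => w + 1 < i) := by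
          conv_rhs => rw [← Multiset.map_id (s.filter (fun i => w + 1 < i))]
          refine Multiset.map_congr rfl fun x hx => ?_
          have := (Multiset.mem_filter.mp hx).2
          simp; omega
        rw [this]
        ext a
        rw [Multiset.count_add, Multiset.count_add, Multiset.count_replicate, Multiset.count_filter, Multiset.count_filter]
        rcases Nat.lt_or_ge a 1 with ha | ha
        · have : a = 0 := by omega
          subst this
          simp [Multiset.count_eq_zero.mpr h0]
        rcases Nat.lt_or_ge a 2 with ha2 | ha2
        · have : a = 1 := by omega
          subst this
          simp [h1]
        · by_cases h5 : a ≤ w + 1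
          · rw [if_neg (by omega), if_pos ⟨ha2, h5⟩, if_neg (by omega)]; omega
          · rw [if_neg (by omega), if_neg (by omega), if_pos (by omega)]; omega
  · refine hs_congr h ?_ ?_
    · intro x
      have := x.2.2
      simp only [Vset, Set.mem_ofPred_eq] at this
      simp only [Multiset.sum_add, Multiset.sum_replicate, Multiset.sum_map_add, Multiset.map_const', this, Multiset.map_id', smul_eq_mul]
      rw [← pow_add, ← pow_add]
      congr 1; ring
    · unfold tA
      rw [div_eq_mul_inv, mul_inv]
      have : q ^ (w + 1 + (w + 2) * (w + 1 + k)) = q ^ k * q ^ ((w + 1) * (w + 1) + (k + 2) * (w + 1)) := by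
        rw [← pow_add]; congr 1; ring
      rw [this]; ring

def Ball (k : ℕ) : Set (Multiset ℕ) :=
  {s | 0 ∉ s ∧ s.count 1 ≠ 0 ∧ (s.filter fun p => s.count 1 < p).card = s.count 1 + k}

lemma GF_Ball {q : ℂ} (hq : ‖q‖ < 1) (k : ℕ) :
    GF q (Ball k) ((1 - q) * q ^ k * (qA 2 k q - tA 2 k q 0)) := by
  have hs : HasSum (fun w => (1 - q) * q ^ k * tA 2 k q (w + 1)) ((1 - q) * q ^ k * (qA 2 k q - tA 2 k q 0)) := by
    have := (hasSum_nat_add_iff' 1).mpr (tA_summable hq 2 k).hasSum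
    rw [sum_range_one] at this
    exact this.mul_left _
  refine GF_image (X := Σ w : ℕ, Bset k (w + 1)) (fun x => (x.2 : Multiset ℕ)) ?_ ?_ ?_
  · rintro ⟨w, s, hs⟩ ⟨w', s', hs'⟩ h
    simp only at h
    subst h
    have : w = w' := by have := hs.2.1; have := hs'.2.1; omega
    subst this; rfl
  · ext s
    simp only [Set.mem_range, Sigma.exists, Subtype.exists, Bset, Ball, Set.mem_ofPred_eq]
    constructor
    · rintro ⟨w, s, ⟨h0, h1, h2⟩, rfl⟩
      refine ⟨h0, by omega, ?_⟩
      simpa only [h1] using h2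
    · rintro ⟨h0, h1, h2⟩
      refine ⟨s.count 1 - 1, s, ⟨h0, by omega, ?_⟩, rfl⟩
      rw [Nat.sub_add_cancel (by omega)]; exact h2
  · refine HasSum.sigma_of_hasSum hs (fun w => GF_B hq k w) ?_
    rw [← summable_norm_iff]
    have hr : ‖((‖q‖ : ℝ) : ℂ)‖ < 1 := by simpa using hq
    have key : ∀ w, HasSum (fun s : Bset k (w + 1) => ‖q ^ (s : Multiset ℕ).sum‖)
        ((1 - ((‖q‖ : ℝ) : ℂ)) * ((‖q‖ : ℝ) : ℂ) ^ k * tA 2 k ((‖q‖ : ℝ) : ℂ) (w + 1)).re := by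
      intro w
      have := Complex.hasSum_re (GF_B hr k w)
      convert this using 2 with s
      rw [← Complex.ofReal_pow, Complex.ofReal_re, norm_pow]
    refine (summable_sigma_of_nonneg (fun _ => norm_nonneg _)).mpr ⟨fun w => (key w).summable, ?_⟩
    have e : (fun w => ∑' (y : Bset k (w + 1)), ‖q ^ ((y : Multiset ℕ)).sum‖) = fun w => ((1 - ((‖q‖ : ℝ) : ℂ)) * ((‖q‖ : ℝ) : ℂ) ^ k * tA 2 k ((‖q‖ : ℝ) : ℂ) (w + 1)).re := by
      funext w; exact (key w).tsum_eq
    rw [e]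
    have := (Complex.hasSum_re (((tA_summable hr 2 k).comp_injective (add_left_injective 1)).mul_left ((1 - ((‖q‖ : ℝ) : ℂ)) * ((‖q‖ : ℝ) : ℂ) ^ k)).hasSum).summable
    exact this

def Pset (k : ℕ) : Set (Multiset ℕ) :=
  {s | 0 ∉ s ∧ ((s.count 1 = 0 ∧ s.sup = k) ∨ (s.count 1 ≠ 0 ∧ (s.filter fun p => s.count 1 < p).card = s.count 1 + k))}

def Aset (k : ℕ) : Set (Multiset ℕ) := {s | 0 ∉ s ∧ s.count 1 = 0 ∧ s.sup = k}

lemma GF_P_of_A {q a : ℂ} (hq : ‖q‖ < 1) {k : ℕ} (h : GF q (Aset k) a) :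
    GF q (Pset k) (a + (1 - q) * q ^ k * (qA 2 k q - tA 2 k q 0)) := by
  have hd : Disjoint (Aset k) (Ball k) := by
    rw [Set.disjoint_left]; intro s hs hs'; exact hs'.2.1 hs.2.1
  have hu : Pset k = Aset k ∪ Ball k := by
    ext s; simp only [Pset, Aset, Ball, Set.mem_union, Set.mem_ofPred_eq]; tauto
  rw [hu]
  exact HasSum.add_disjoint (f := fun s : Multiset ℕ => q ^ s.sum) hd h (GF_Ball hq k)

lemma GF_A0 (q : ℂ) : GF q (Aset 0) 1 := by
  have : Aset 0 = {0} := by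
    ext s; simp only [Aset, Set.mem_ofPred_eq, Set.mem_singleton_iff]
    constructor
    · rintro ⟨h0, h1, h2⟩
      apply Multiset.eq_zero_of_forall_notMem
      intro a ha
      have := Multiset.le_sup ha
      have : a = 0 := by omega
      exact h0 (this ▸ ha)
    · rintro rfl; simp
  rw [this]; exact GF_singleton q

lemma sup_mem {s : Multiset ℕ} (h : s.sup ≠ 0) : s.sup ∈ s := by
  induction s using Multiset.induction with
  | empty => simp at h
  | cons a s ih =>
    rw [Multiset.sup_cons] at h ⊢
    rcases le_total a s.sup with h1 | h1
    · rw [sup_eq_right.mpr h1] at h ⊢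
      exact Multiset.mem_cons_of_mem (ih h)
    · rw [sup_eq_left.mpr h1]; exact Multiset.mem_cons_self _ _

lemma GF_A1 (q : ℂ) : GF q (Aset 1) 0 := by
  have : Aset 1 = ∅ := by
    ext s; simp only [Aset, Set.mem_ofPred_eq, Set.mem_empty_iff_false, iff_false]
    rintro ⟨h0, h1, h2⟩
    have := sup_mem (s := s) (by omega)
    rw [h2] at this
    exact Multiset.count_eq_zero.mp h1 this
  rw [this]; exact hasSum_empty

lemma GF_A {q : ℂ} (hq : ‖q‖ < 1) (k : ℕ) : GF q (Aset (k + 2)) ((1 - q) * q ^ (k + 2) * tA 2 (k + 2) q 0) := by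
  refine GF_image (X := Uset (k + 2)) (fun x => (k + 2) ::ₘ (x : Multiset ℕ)) ?_ ?_ ?_
  · intro x y h
    exact Subtype.ext ((Multiset.cons_inj_right _).mp h)
  · ext s
    simp only [Set.mem_range, Subtype.exists, Uset, Aset, Set.mem_ofPred_eq]
    constructor
    · rintro ⟨u, hu, rfl⟩
      refine ⟨?_, ?_, ?_⟩
      · intro h
        rcases Multiset.mem_cons.mp h with h | h
        · omega
        · have := hu _ h; omega
      · rw [Multiset.count_eq_zero]
        intro h
        rcases Multiset.mem_cons.mp h with h | h
        · omega
        · have := hu _ h; omega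
      · rw [Multiset.sup_cons, sup_eq_left, Multiset.sup_le]
        intro b hb; exact (hu b hb).2
    · rintro ⟨h0, h1, h2⟩
      have hm := sup_mem (s := s) (by omega)
      rw [h2] at hm
      obtain ⟨u, rfl⟩ := Multiset.exists_cons_of_mem hm
      refine ⟨u, fun i hi => ⟨?_, ?_⟩, rfl⟩
      · by_contra hlt
        have hi' := Multiset.mem_cons_of_mem (b := k + 2) hi
        have : i = 0 ∨ i = 1 := by omega
        rcases this with rfl | rfl
        · exact h0 hi'
        · exact Multiset.count_eq_zero.mp h1 hi'
      · have := Multiset.le_sup (Multiset.mem_cons_of_mem (b := k + 2) hi)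
        omega
  · have h := (GF_U hq (k + 1)).mul_left (q ^ (k + 2))
    refine hs_congr h ?_ ?_
    · intro x; rw [Multiset.sum_cons, pow_add]
    · simp [tA, qp]; ring

lemma GF_count {q a : ℂ} {k : ℕ} (h : GF q (Pset k) a) :
    HasSum (fun n : ℕ => ((Nat.card {l : n.Partition // crank l = (k : ℤ)} : ℕ) : ℂ) * q ^ n) a := by
  have e := (Equiv.sigmaFiberEquiv (fun s : Pset k => (s : Multiset ℕ).sum)).hasSum_iff.mpr h
  refine e.sigma fun n => ?_
  have eq : {s : Pset k // (s : Multiset ℕ).sum = n} ≃ {l : n.Partition // crank l = (k : ℤ)} :=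
    { toFun := fun s => ⟨⟨s.1.1, fun {i} hi => Nat.pos_of_ne_zero fun h => s.1.2.1 (h ▸ hi), s.2⟩, by
        rcases s with ⟨⟨s, h0, h1⟩, h2⟩
        unfold crank
        rcases h1 with ⟨h1, h3⟩ | ⟨h1, h3⟩
        · simp [h1, h3]
        · simp only [h1, if_false]; rw [h3]; push_cast; ring⟩
      invFun := fun l => ⟨⟨l.1.parts, fun h => absurd (l.1.parts_pos h) (by simp), by
        rcases l with ⟨l, hl⟩
        unfold crank at hl
        by_cases h1 : l.parts.count 1 = 0
        · left; simp [h1] at hl; exact ⟨h1, hl⟩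
        · right
          rw [if_neg h1] at hl
          refine ⟨h1, ?_⟩
          simp only
          omega⟩, l.1.parts_sum⟩
      left_inv := fun s => rfl
      right_inv := fun l => rfl }
  have : Finite {s : Pset k // (s : Multiset ℕ).sum = n} := Finite.of_equiv _ eq.symm
  have := Fintype.ofFinite {s : Pset k // (s : Multiset ℕ).sum = n}
  have h2 := hasSum_fintype (fun s : {s : Pset k // (s : Multiset ℕ).sum = n} => q ^ n)
  rw [← Nat.card_congr eq]
  convert h2 using 1
  · funext s
    simp [s.2]
  · simp [Nat.card_eq_fintype_card]

lemma crank_one (l : Nat.Partition 1) : crank l = -1 := by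
  have : l = default := Subsingleton.elim _ _
  subst this
  have hp : (default : Nat.Partition 1).parts = {1} := by
    decide
  unfold crank
  rw [hp]; simp

lemma crankM_hasSum {q : ℂ} (hq : ‖q‖ < 1) (k : ℕ) :
    HasSum (fun n : ℕ => ((crankM (k : ℤ) n : ℤ) : ℂ) * q ^ n) ((1 - q) * q ^ k * qA 2 k q) := by
  have card1 : Nat.card {l : Nat.Partition 1 // crank l = (k : ℤ)} = 0 := by
    have : IsEmpty {l : Nat.Partition 1 // crank l = (k : ℤ)} := ⟨fun l => by
      have := l.2; rw [crank_one] at this; omega⟩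
    simp
  obtain ⟨a, c, ha, hac, hc⟩ : ∃ a c : ℂ, GF q (Aset k) a ∧ a + c * q = (1 - q) * q ^ k * tA 2 k q 0 ∧ ((crankM k 1 : ℤ) : ℂ) = c := by
    match k with
    | 0 => exact ⟨1, -1, GF_A0 q, by simp [tA, qp]; ring, by simp [crankM]⟩
    | 1 => 
      have h := one_sub_qpow_ne hq 0
      simp only [zero_add, pow_one] at h
      refine ⟨0, 1, GF_A1 q, ?_, by simp [crankM]⟩
      simp [tA, qp]
      field_simp
    | (k + 2) => exact ⟨_, 0, GF_A hq k, by simp, by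
      have h1 : ((k + 2 : ℕ) : ℤ) ≠ 0 := by omega
      have h2 : ((k + 2 : ℕ) : ℤ).natAbs ≠ 1 := by omega
      rw [crankM, if_pos rfl, if_neg h1, if_neg h2]; simp⟩
  have h1 := GF_count (GF_P_of_A hq ha)
  have h2 : HasSum (fun n : ℕ => if n = 1 then c * q else 0) (c * q) := hasSum_ite_eq 1 (c * q)
  convert h1.add h2 using 1
  · funext n
    by_cases hn : n = 1
    · subst hn
      rw [card1, hc]; simp
    · simp [hn, crankM]
  · linear_combination -hac

lemma integral_exp_int (n : ℤ) : ∫ θ in (-Real.pi)..Real.pi, Complex.exp (n * (θ * Complex.I)) = if n = 0 then 2 * Real.pi else 0 := by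
  by_cases hn : n = 0
  · subst hn; simp; ring
  · rw [if_neg hn]
    have hc : (n * Complex.I : ℂ) ≠ 0 := mul_ne_zero (by exact_mod_cast hn) Complex.I_ne_zero
    have e : (fun θ : ℝ => Complex.exp (n * (θ * Complex.I))) = fun θ : ℝ => Complex.exp ((n * Complex.I) * θ) := by
      funext θ; congr 1; ring
    rw [e, integral_exp_mul_complex hc]
    have : Complex.exp (n * Complex.I * (Real.pi : ℝ)) = Complex.exp (n * Complex.I * ((-Real.pi : ℝ) : ℂ)) := by
      rw [Complex.exp_eq_exp_iff_exists_int]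
      exact ⟨n, by push_cast; ring⟩
    rw [this]; simp

lemma coeff_general {a : ℕ → ℂ} {F : ℂ → ℂ} (h : ∀ q : ℂ, ‖q‖ < 1 → HasSum (fun n => a n * q ^ n) (F q)) {t : ℝ} (ht : 0 < t) :
    Continuous (fun θ : ℝ => F (Complex.exp (-(t + θ * Complex.I)))) ∧
    ∀ m : ℕ, ∫ θ in (-Real.pi)..Real.pi, F (Complex.exp (-(t + θ * Complex.I))) * Complex.exp (m * (t + θ * Complex.I)) = 2 * Real.pi * a m := by
  have hs : Summable fun n => ‖a n‖ * Real.exp (-t) ^ n := by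
    have := (h (Complex.exp (-(t + (0:ℝ) * Complex.I))) (norm_q_lt ht 0)).summable.norm
    simpa only [norm_mul, norm_pow, norm_q] using this
  have hF : ∀ θ : ℝ, F (Complex.exp (-(t + θ * Complex.I))) = ∑' n, a n * Complex.exp (-(t + θ * Complex.I)) ^ n := fun θ =>
    (h _ (norm_q_lt ht θ)).tsum_eq.symm
  constructor
  · simp_rw [hF]
    refine continuous_tsum (fun n => by fun_prop) hs fun n θ => ?_
    rw [norm_mul, norm_pow, norm_q]
  · intro m
    have key := intervalIntegral.hasSum_integral_of_dominated_convergence (μ := MeasureTheory.volume) (a := -Real.pi) (b := Real.pi)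
      (F := fun n (θ : ℝ) => a n * Complex.exp (-(t + θ * Complex.I)) ^ n * Complex.exp (m * (t + θ * Complex.I)))
      (f := fun θ : ℝ => F (Complex.exp (-(t + θ * Complex.I))) * Complex.exp (m * (t + θ * Complex.I)))
      (fun n _ => ‖a n‖ * Real.exp (-t) ^ n * Real.exp (m * t)) ?_ ?_ ?_ ?_ ?_
    · have e : ∀ n, ∫ θ in (-Real.pi)..Real.pi, a n * Complex.exp (-(t + θ * Complex.I)) ^ n * Complex.exp (m * (t + θ * Complex.I)) =
          if n = m then 2 * Real.pi * a m else 0 := by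
        intro n
        have e1 : (fun θ : ℝ => a n * Complex.exp (-(t + θ * Complex.I)) ^ n * Complex.exp (m * (t + θ * Complex.I))) =
            fun θ : ℝ => (a n * Complex.exp (((m : ℤ) - n : ℤ) * t)) * Complex.exp (((m : ℤ) - n : ℤ) * (θ * Complex.I)) := by
          funext θ
          rw [← Complex.exp_nat_mul, mul_assoc, mul_assoc, ← Complex.exp_add, ← Complex.exp_add]
          congr 2; push_cast; ring
        rw [e1, intervalIntegral.integral_const_mul, integral_exp_int]
        by_cases hnm : n = m
        · subst hnm; simp; ring
        · rw [if_neg (by omega), if_neg hnm]; simp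
      simp_rw [e] at key
      exact key.unique (hasSum_ite_eq m _)
    · intro n
      apply Continuous.aestronglyMeasurable
      fun_prop
    · intro n
      refine Eventually.of_forall fun θ _ => ?_
      rw [norm_mul, norm_mul, norm_pow, norm_q]
      apply le_of_eq; congr 1
      rw [Complex.norm_exp]; simp
    · exact Eventually.of_forall fun θ _ => hs.mul_right _
    · exact intervalIntegrable_const
    · exact Eventually.of_forall fun θ _ => (h _ (norm_q_lt ht θ)).mul_right _

noncomputable def Hf (t : ℝ) (k ℓ : ℕ) (θ : ℝ) : ℂ :=
  (1 - Complex.exp (-(t + θ * Complex.I))) * qA 2 k (Complex.exp (-(t + θ * Complex.I))) * Complex.exp (ℓ * (t + θ * Complex.I))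

lemma Hf_spec {t : ℝ} (ht : 0 < t) (k ℓ : ℕ) : Continuous (Hf t k ℓ) ∧
    ∫ θ in (-Real.pi)..Real.pi, Hf t k ℓ θ = 2 * Real.pi * ((crankM (k : ℤ) (k + ℓ) : ℤ) : ℂ) := by
  obtain ⟨h1, h2⟩ := coeff_general (a := fun n => ((crankM (k : ℤ) n : ℤ) : ℂ)) (F := fun q => (1 - q) * q ^ k * qA 2 k q)
    (fun q hq => crankM_hasSum hq k) ht
  have e : Hf t k ℓ = fun θ : ℝ => (1 - Complex.exp (-(t + θ * Complex.I))) * Complex.exp (-(t + θ * Complex.I)) ^ k * qA 2 k (Complex.exp (-(t + θ * Complex.I))) * Complex.exp ((k + ℓ : ℕ) * (t + θ * Complex.I)) := by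
    funext θ
    unfold Hf
    have : Complex.exp (ℓ * (t + θ * Complex.I)) = Complex.exp (-(t + θ * Complex.I)) ^ k * Complex.exp ((k + ℓ : ℕ) * (t + θ * Complex.I)) := by
      rw [← Complex.exp_nat_mul, ← Complex.exp_add]; congr 1; push_cast; ring
    rw [this]; ring
  rw [e]
  exact ⟨h1.mul (by fun_prop), h2 (k + ℓ)⟩

noncomputable def Jf (t : ℝ) (k ℓ : ℕ) (L v : ℝ) : ℂ :=
  ((1 + Real.exp (-(k * t))) ^ 2 / (t * Real.sqrt (t / (2 * Real.pi)) * Real.exp (2 * L)) : ℝ) * Hf t k ℓ (t / Real.sqrt L * v)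

lemma J_formula {t L v : ℝ} {k ℓ : ℕ} (ht : 0 < t) (hL : 0 < L) (h1 : ℓ * t = L) (h2 : Real.pi ^ 2 / (6 * t) = L) :
    Jf t k ℓ L v = ((1 - Complex.exp (-(t + (t * (v / Real.sqrt L) : ℝ) * Complex.I))) / t)
      * (nA 2 k (Complex.exp (-(t + (t * (v / Real.sqrt L) : ℝ) * Complex.I))) * (1 + Real.exp (-(k * t))) ^ 2)
      * Ef t (v / Real.sqrt L) * Complex.exp (-(v ^ 2 / (1 + (v / Real.sqrt L : ℝ) * Complex.I))) := by
  set u := v / Real.sqrt L with hu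
  have hsL : 0 < Real.sqrt L := Real.sqrt_pos.mpr hL
  have hv : v ^ 2 = L * u ^ 2 := by
    rw [hu, div_pow, Real.sq_sqrt hL.le]; field_simp
  have e1 : t / Real.sqrt L * v = t * u := by rw [hu]; ring
  unfold Jf Hf
  rw [e1]
  set q := Complex.exp (-(t + (t * u : ℝ) * Complex.I)) with hq
  have hq1 : ‖q‖ < 1 := norm_q_lt ht _
  have e2 : qA 2 k q = nA 2 k q * (qinf q)⁻¹ := by
    unfold nA; rw [mul_assoc, mul_inv_cancel₀ (qinf_ne hq1), mul_one]
  have hw : (1 + u * Complex.I) ≠ 0 := by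
    intro h; have := congrArg Complex.re h; simp at this
  have htc : (t : ℂ) ≠ 0 := by exact_mod_cast ht.ne'
  rw [e2, hq, qinf_trans' ht, ← hq]
  have e3 : Complex.exp (Real.pi ^ 2 / (6 * (t * (1 + u * Complex.I)))) * Complex.exp (ℓ * (t + (t * u : ℝ) * Complex.I)) =
      Real.exp (2 * L) * Complex.exp (-(v ^ 2 / (1 + u * Complex.I))) := by
    rw [Complex.ofReal_exp, ← Complex.exp_add, ← Complex.exp_add]
    congr 1
    have a1 : (ℓ : ℂ) * t = L := by exact_mod_cast h1
    have a2 : (Real.pi : ℂ) ^ 2 = 6 * t * L := by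
      have : Real.pi ^ 2 = 6 * t * L := by rw [← h2]; field_simp
      exact_mod_cast this
    have a3 : (v : ℂ) ^ 2 = L * u ^ 2 := by exact_mod_cast hv
    rw [a2, a3]
    have a4 : (ℓ : ℂ) * (t + (t * u : ℝ) * Complex.I) = L * (1 + u * Complex.I) := by
      push_cast; rw [← a1]; ring
    rw [a4]
    have hI := Complex.I_sq
    push_cast
    field_simp
    linear_combination L * u ^ 2 * hI
  have hs : Real.sqrt (t / (2 * Real.pi)) ≠ 0 := (Real.sqrt_pos.mpr (by positivity)).ne'
  have hsc : (Real.sqrt (t / (2 * Real.pi)) : ℂ) ≠ 0 := by exact_mod_cast hs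
  have hec : (Real.exp (2 * L) : ℂ) ≠ 0 := by exact_mod_cast (Real.exp_pos _).ne'
  calc _ = ((1 + Real.exp (-(k * t))) ^ 2 / (t * Real.sqrt (t / (2 * Real.pi)) * Real.exp (2 * L)) : ℂ) *
      ((1 - q) * (nA 2 k q * (Real.sqrt (t / (2 * Real.pi)) * Ef t u)) * (Complex.exp (Real.pi ^ 2 / (6 * (t * (1 + u * Complex.I)))) * Complex.exp (ℓ * (t + (t * u : ℝ) * Complex.I)))) := by
        rw [Complex.ofReal_div, Complex.ofReal_pow, Complex.ofReal_mul, Complex.ofReal_mul, Complex.ofReal_add, Complex.ofReal_one]; ring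
    _ = _ := by
      rw [e3]
      field_simp

lemma u_bound {L v : ℝ} (hL : 0 < L) (hv : |v| ≤ Real.sqrt L) : |v / Real.sqrt L| ≤ 1 := by
  rw [abs_div, abs_of_pos (Real.sqrt_pos.mpr hL)]
  exact (div_le_one (Real.sqrt_pos.mpr hL)).mpr hv

lemma tu_bound {t u : ℝ} (ht : 0 < t) (hu : |u| ≤ 1) : |t * u| ≤ t := by
  rw [abs_mul, abs_of_pos ht]; nlinarith

lemma J_bound : ∃ K : ℝ, ∃ t₁ : ℝ, 0 < t₁ ∧ ∀ (t L v : ℝ) (k ℓ : ℕ), 0 < t → t < t₁ → 0 < L → ℓ * t = L → Real.pi ^ 2 / (6 * t) = L →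
    |v| ≤ Real.sqrt L → ‖Jf t k ℓ L v‖ ≤ K * Real.exp (-(1 / 2) * v ^ 2) := by
  obtain ⟨C, hC, t₀, ht₀, hE⟩ := Ef_bound
  refine ⟨4 * ((42240 + 4) * 4) * C, min t₀ (1 / 2), by positivity, ?_⟩
  intro t L v k ℓ ht htt hL h1 h2 hv
  have ht2 : t < t₀ := lt_of_lt_of_le htt (min_le_left _ _)
  have ht3 : t < 1 / 2 := lt_of_lt_of_le htt (min_le_right _ _)
  rw [J_formula ht hL h1 h2]
  have hu := u_bound hL hv
  set u := v / Real.sqrt L with hu'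
  have hθ := tu_bound ht hu
  have b1 : ‖(1 - Complex.exp (-(t + (t * u : ℝ) * Complex.I))) / t‖ ≤ 4 := by
    have hn : ‖(-(t + (t * u : ℝ) * Complex.I) : ℂ)‖ ≤ 2 * t := by
      rw [norm_neg]
      refine (norm_add_le _ _).trans ?_
      rw [norm_mul, Complex.norm_I, Complex.norm_real, Complex.norm_real, Real.norm_eq_abs, Real.norm_eq_abs, abs_of_pos ht]
      linarith
    have := Complex.norm_exp_sub_one_le (x := (-(t + (t * u : ℝ) * Complex.I) : ℂ)) (by linarith)
    rw [norm_div, norm_sub_rev, Complex.norm_real, Real.norm_eq_abs, abs_of_pos ht, div_le_iff₀ ht]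
    linarith
  have x0 : Real.exp (-(k * t)) ≤ 1 := by
    rw [← Real.exp_zero]; apply Real.exp_le_exp.mpr
    have : 0 ≤ k * t := by positivity
    linarith
  have b2 : ‖nA 2 k (Complex.exp (-(t + (t * u : ℝ) * Complex.I)))‖ ≤ 42240 + 4 := by
    have c1 := nA_two_approx ht ht3.le hθ k
    have c2 : ‖gapp (Complex.exp (-(t + (t * u : ℝ) * Complex.I)) ^ k)‖ ≤ 4 := by
      refine (app_bdd (norm_q_lt ht (t * u)).le ?_ (one_add_qpow ht hθ k)).2
      rw [norm_pow]; exact pow_le_one₀ (norm_nonneg _) (norm_q_lt ht _).le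
    have c3 : Real.sqrt t ≤ 1 := by rw [Real.sqrt_le_one]; linarith
    have := norm_le_insert' (nA 2 k (Complex.exp (-(t + (t * u : ℝ) * Complex.I)))) (gapp (Complex.exp (-(t + (t * u : ℝ) * Complex.I)) ^ k))
    linarith
  have b3 : ‖((1 + Real.exp (-(k * t))) ^ 2 : ℂ)‖ ≤ 4 := by
    have : ((1 + Real.exp (-(k * t))) ^ 2 : ℂ) = (((1 + Real.exp (-(k * t))) ^ 2 : ℝ) : ℂ) := by push_cast; rfl
    rw [this, Complex.norm_real, Real.norm_of_nonneg (by positivity)]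
    have := Real.exp_pos (-(k * t))
    nlinarith
  have b4 := hE t u ht ht2 hu
  have b5 : ‖Complex.exp (-(v ^ 2 / (1 + (u : ℝ) * Complex.I)))‖ ≤ Real.exp (-(1 / 2) * v ^ 2) := by
    rw [Complex.norm_exp]; apply Real.exp_le_exp.mpr
    have hn : Complex.normSq (1 + u * Complex.I) = 1 + u ^ 2 := by
      simp [Complex.normSq_apply]; ring
    have : ((v : ℂ) ^ 2 / (1 + u * Complex.I)) = ((v ^ 2 : ℝ) : ℂ) * (1 + u * Complex.I)⁻¹ := by push_cast; rfl
    rw [this, Complex.neg_re, Complex.re_ofReal_mul, Complex.inv_re, hn]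
    have hu2 : u ^ 2 ≤ 1 := by rw [← sq_abs]; exact pow_le_one₀ (abs_nonneg _) hu
    have hr : (1 + u * Complex.I).re = 1 := by simp
    rw [hr]
    have : 1 / 2 ≤ 1 / (1 + u ^ 2) := by
      apply one_div_le_one_div_of_le (by positivity); linarith
    nlinarith [sq_nonneg v]
  rw [norm_mul, norm_mul, norm_mul, norm_mul]
  gcongr

lemma gapp_diff {t u : ℝ} (ht : 0 < t) (hu : |u| ≤ 1) (k : ℕ) :
    ‖gapp (Complex.exp (-(t + (t * u : ℝ) * Complex.I)) ^ k) - gapp (Real.exp (-(k * t)))‖ ≤ 16 * |u| := by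
  set x := Complex.exp (-(t + (t * u : ℝ) * Complex.I)) ^ k with hx
  set y := Real.exp (-(k * t)) with hy
  have hy0 : 0 < y := Real.exp_pos _
  have hy1 : y ≤ 1 := by
    rw [hy, ← Real.exp_zero]; apply Real.exp_le_exp.mpr
    have : 0 ≤ k * t := by positivity
    linarith
  have hx1 : ‖x‖ ≤ 1 := by rw [hx, norm_pow]; exact pow_le_one₀ (norm_nonneg _) (norm_q_lt ht _).le
  have ha := one_add_qpow ht (tu_bound ht hu) k
  rw [← hx] at ha
  have hyn : ‖(1 + y : ℂ)‖ = 1 + y := by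
    rw [← Complex.ofReal_one, ← Complex.ofReal_add, Complex.norm_real, Real.norm_of_nonneg (by linarith)]
  have d : ‖x - y‖ ≤ |u| := by
    have : x - y = y * (Complex.exp (Complex.I * ((-(k * (t * u)) : ℝ) : ℂ)) - 1) := by
      rw [hx, hy, ← Complex.exp_nat_mul, mul_sub, Complex.ofReal_exp, ← Complex.exp_add, mul_one]
      congr 2; push_cast; ring
    rw [this, norm_mul, Complex.norm_real, Real.norm_of_nonneg hy0.le]
    have h1 := Real.norm_exp_I_mul_ofReal_sub_one_le (x := -(k * (t * u)))
    have h2 : y * (k * t) ≤ 1 := by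
      have := Real.add_one_le_exp (k * t)
      have h3 : y * Real.exp (k * t) = 1 := by rw [hy, ← Real.exp_add]; simp
      nlinarith
    calc _ ≤ y * ‖(-(k * (t * u)) : ℝ)‖ := by gcongr
      _ = (y * (k * t)) * |u| := by
        rw [norm_neg, norm_mul, norm_mul, Real.norm_of_nonneg ht.le, Real.norm_eq_abs u, Real.norm_of_nonneg (Nat.cast_nonneg k)]; ring
      _ ≤ 1 * |u| := by gcongr
      _ = _ := one_mul _
  have hx0 : (1 + x) ≠ 0 := by rw [← norm_pos_iff]; linarith
  have hy0' : (1 + y : ℂ) ≠ 0 := by rw [← norm_pos_iff, hyn]; linarith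
  have e : gapp x - gapp y = (y - x) * (2 + x + y) * ((1 + x)⁻¹ ^ 2 * (1 + y : ℂ)⁻¹ ^ 2) := by
    unfold gapp; field_simp; ring
  rw [e, norm_mul, norm_mul, norm_mul, norm_pow, norm_pow, norm_inv, norm_inv, norm_sub_rev, hyn]
  have f1 : ‖2 + x + y‖ ≤ 4 := by
    refine (norm_add₃_le).trans ?_
    rw [Complex.norm_real, Real.norm_of_nonneg hy0.le]
    simp; linarith
  have f2 : ‖1 + x‖⁻¹ ≤ 2 := by
    rw [inv_le_comm₀ (by linarith) (by norm_num)]; linarith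
  have f3 : (1 + y)⁻¹ ≤ 1 := inv_le_one_of_one_le₀ (by linarith)
  calc _ ≤ |u| * 4 * (2 ^ 2 * 1 ^ 2) := by gcongr
    _ = _ := by ring

lemma one_sub_exp_div : Tendsto (fun z : ℂ => (1 - Complex.exp (-z)) / z) (𝓝[≠] 0) (𝓝 1) := by
  have h : HasDerivAt (fun z : ℂ => -Complex.exp (-z)) 1 0 := by
    have := ((hasDerivAt_id' (0 : ℂ)).fun_neg.cexp).fun_neg
    simpa using this
  have := h.tendsto_slope
  refine this.congr fun z => ?_
  rw [slope_def_field]; simp; ring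

lemma J_lim {t L : ℕ → ℝ} {κ : ℕ → ℕ} (h : ∀ᶠ n : ℕ in atTop, 0 < t n ∧ 0 < L n ∧ n * t n = L n ∧ Real.pi ^ 2 / (6 * t n) = L n)
    (ht0 : Tendsto t atTop (𝓝 0)) (hL : Tendsto L atTop atTop) (v : ℝ) :
    Tendsto (fun n => Jf (t n) (κ n) n (L n) v) atTop (𝓝 (Real.exp (-v ^ 2) : ℝ)) := by
  have hu : Tendsto (fun n => v / Real.sqrt (L n)) atTop (𝓝 0) :=
    Tendsto.div_atTop tendsto_const_nhds (Real.tendsto_sqrt_atTop.comp hL)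
  have huc : Tendsto (fun n => (((v / Real.sqrt (L n) : ℝ)) : ℂ)) atTop (𝓝 0) := by
    simpa [Function.comp_def] using (Complex.continuous_ofReal.tendsto 0).comp hu
  have hu1 : Tendsto (fun n => (1 + (((v / Real.sqrt (L n) : ℝ)) : ℂ) * Complex.I)) atTop (𝓝 1) := by
    simpa using (huc.mul_const Complex.I).const_add 1
  have htc : Tendsto (fun n => (t n : ℂ)) atTop (𝓝 0) := by
    simpa [Function.comp_def] using (Complex.continuous_ofReal.tendsto 0).comp ht0
  have h4 : Tendsto (fun n => Complex.exp (-(v ^ 2 / (1 + (v / Real.sqrt (L n) : ℝ) * Complex.I)))) atTop (𝓝 (Real.exp (-v ^ 2) : ℝ)) := by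
    have : Tendsto (fun n => (-((v : ℂ) ^ 2 / (1 + (v / Real.sqrt (L n) : ℝ) * Complex.I)))) atTop (𝓝 (-(v : ℂ) ^ 2)) := by
      have := (tendsto_const_nhds (x := (v : ℂ) ^ 2)).div hu1 one_ne_zero
      simpa using this.neg
    have := (Complex.continuous_exp.tendsto _).comp this
    simpa [Function.comp_def] using this
  have h3 := Ef_tendsto (h.mono fun n h => h.1) ht0 hu
  have h1 : Tendsto (fun n => (1 - Complex.exp (-(t n + (t n * (v / Real.sqrt (L n)) : ℝ) * Complex.I))) / t n) atTop (𝓝 1) := by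
    have hz : Tendsto (fun n => (t n : ℂ) * (1 + (((v / Real.sqrt (L n) : ℝ)) : ℂ) * Complex.I)) atTop (𝓝[≠] 0) := by
      rw [tendsto_nhdsWithin_iff]
      refine ⟨by simpa using htc.mul hu1, ?_⟩
      filter_upwards [h] with n hn
      have hw : (1 + (((v / Real.sqrt (L n) : ℝ)) : ℂ) * Complex.I) ≠ 0 := by
        intro h; have := congrArg Complex.re h
        rw [Complex.add_re, Complex.re_ofReal_mul] at this
        simp at this
      exact mul_ne_zero (by exact_mod_cast hn.1.ne') hw
    have := (one_sub_exp_div.comp hz).mul hu1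
    rw [one_mul] at this
    refine this.congr' ?_
    filter_upwards [h] with n hn
    have hw : (1 + (((v / Real.sqrt (L n) : ℝ)) : ℂ) * Complex.I) ≠ 0 := by
      intro h; have := congrArg Complex.re h
      rw [Complex.add_re, Complex.re_ofReal_mul] at this
      simp at this
    have htn : (t n : ℂ) ≠ 0 := by exact_mod_cast hn.1.ne'
    have e : ((t n : ℂ) + (t n * (v / Real.sqrt (L n)) : ℝ) * Complex.I) = (t n : ℂ) * (1 + (((v / Real.sqrt (L n) : ℝ)) : ℂ) * Complex.I) := by
      push_cast; ring
    simp only [Function.comp]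
    rw [e, div_mul_eq_mul_div, mul_comm (t n : ℂ), mul_div_mul_comm, ]
    field_simp
  have h2 : Tendsto (fun n => nA 2 (κ n) (Complex.exp (-(t n + (t n * (v / Real.sqrt (L n)) : ℝ) * Complex.I))) * (1 + Real.exp (-(κ n * t n))) ^ 2 : ℕ → ℂ) atTop (𝓝 1) := by
    rw [tendsto_iff_norm_sub_tendsto_zero]
    have hb : Tendsto (fun n => (42240 * Real.sqrt (t n) + 16 * |v / Real.sqrt (L n)|) * 4) atTop (𝓝 0) := by
      have a1 : Tendsto (fun n => Real.sqrt (t n)) atTop (𝓝 0) := by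
        simpa [Function.comp_def] using (Real.continuous_sqrt.tendsto 0).comp ht0
      have a2 := hu.abs
      simpa using ((a1.const_mul 42240).add (a2.const_mul 16)).mul_const 4
    refine tendsto_of_tendsto_of_tendsto_of_le_of_le' tendsto_const_nhds hb (Eventually.of_forall fun n => norm_nonneg _) ?_
    have hu' : ∀ᶠ n in atTop, |v / Real.sqrt (L n)| ≤ 1 := by
      have := hu.abs.eventually (gt_mem_nhds (by simp : |(0:ℝ)| < 1))
      exact this.mono fun n h => h.le
    have htt : ∀ᶠ n in atTop, t n < 1 / 2 := ht0.eventually (gt_mem_nhds (by norm_num))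
    filter_upwards [h, hu', htt] with n hn hun htn
    set u := v / Real.sqrt (L n)
    have b1 := nA_two_approx hn.1 htn.le (tu_bound hn.1 hun) (κ n)
    have b2 := gapp_diff hn.1 hun (κ n)
    have hy : 0 < Real.exp (-(κ n * t n)) := Real.exp_pos _
    have hy1 : Real.exp (-(κ n * t n)) ≤ 1 := by
      rw [← Real.exp_zero]; apply Real.exp_le_exp.mpr
      have : 0 ≤ κ n * t n := mul_nonneg (Nat.cast_nonneg _) hn.1.le
      linarith
    set y := Real.exp (-(κ n * t n))
    have hy0' : (1 + y : ℂ) ≠ 0 := by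
      rw [← Complex.ofReal_one, ← Complex.ofReal_add]; exact_mod_cast (by linarith : (1 + y) ≠ 0)
    have e : nA 2 (κ n) (Complex.exp (-(t n + (t n * u : ℝ) * Complex.I))) * (1 + y : ℂ) ^ 2 - 1 =
        (nA 2 (κ n) (Complex.exp (-(t n + (t n * u : ℝ) * Complex.I))) - gapp y) * (1 + y : ℂ) ^ 2 := by
      rw [sub_mul]; congr 1
      unfold gapp; field_simp
    rw [e, norm_mul]
    have b3 : ‖((1 + y) ^ 2 : ℂ)‖ ≤ 4 := by
      have : ((1 + y) ^ 2 : ℂ) = (((1 + y) ^ 2 : ℝ) : ℂ) := by push_cast; rfl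
      rw [this, Complex.norm_real, Real.norm_of_nonneg (by positivity)]
      nlinarith
    have b4 := (norm_sub_le_norm_sub_add_norm_sub (nA 2 (κ n) (Complex.exp (-(t n + (t n * u : ℝ) * Complex.I)))) (gapp (Complex.exp (-(t n + (t n * u : ℝ) * Complex.I)) ^ (κ n))) (gapp y))
    have b5 := b4.trans (add_le_add b1 b2)
    gcongr
  have := ((h1.mul h2).mul h3).mul h4
  rw [one_mul, one_mul, one_mul] at this
  refine this.congr' ?_
  filter_upwards [h] with n hn
  rw [J_formula hn.1 hn.2.1 hn.2.2.1 hn.2.2.2]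

lemma major_lim {t L : ℕ → ℝ} {κ : ℕ → ℕ} (h : ∀ᶠ n : ℕ in atTop, 0 < t n ∧ 0 < L n ∧ n * t n = L n ∧ Real.pi ^ 2 / (6 * t n) = L n)
    (ht0 : Tendsto t atTop (𝓝 0)) (hL : Tendsto L atTop atTop) :
    Tendsto (fun n => ∫ v in (-Real.sqrt (L n))..(Real.sqrt (L n)), Jf (t n) (κ n) n (L n) v) atTop (𝓝 (Real.sqrt Real.pi : ℝ)) := by
  obtain ⟨K, t₁, ht₁, hK⟩ := J_bound
  have e : ∀ n, ∫ v in (-Real.sqrt (L n))..(Real.sqrt (L n)), Jf (t n) (κ n) n (L n) v =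
      ∫ v, (Set.Ioc (-Real.sqrt (L n)) (Real.sqrt (L n))).indicator (Jf (t n) (κ n) n (L n)) v := by
    intro n
    rw [intervalIntegral.integral_of_le (by linarith [Real.sqrt_nonneg (L n)]), MeasureTheory.integral_indicator measurableSet_Ioc]
  simp_rw [e]
  have hg : ((Real.sqrt Real.pi : ℝ) : ℂ) = ∫ v : ℝ, ((Real.exp (-v ^ 2) : ℝ) : ℂ) := by
    rw [integral_complex_ofReal]
    have := integral_gaussian 1
    simp only [div_one, neg_mul, one_mul] at this
    rw [this]
  rw [hg]
  refine MeasureTheory.tendsto_integral_filter_of_dominated_convergence (fun v => |K| * Real.exp (-(1 / 2) * v ^ 2)) ?_ ?_ ?_ ?_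
  · filter_upwards [h] with n hn
    refine MeasureTheory.AEStronglyMeasurable.indicator ?_ measurableSet_Ioc
    apply Continuous.aestronglyMeasurable
    unfold Jf
    exact continuous_const.mul ((Hf_spec hn.1 _ _).1.comp (by fun_prop))
  · have htt : ∀ᶠ n in atTop, t n < t₁ := ht0.eventually (gt_mem_nhds ht₁)
    filter_upwards [h, htt] with n hn htn
    refine Eventually.of_forall fun v => ?_
    by_cases hv : v ∈ Set.Ioc (-Real.sqrt (L n)) (Real.sqrt (L n))
    · rw [Set.indicator_of_mem hv]
      refine (hK _ _ v _ _ hn.1 htn hn.2.1 hn.2.2.1 hn.2.2.2 (abs_le.mpr ⟨hv.1.le, hv.2⟩)).trans ?_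
      gcongr; exact le_abs_self K
    · rw [Set.indicator_of_notMem hv, norm_zero]; positivity
  · exact (integrable_exp_neg_mul_sq (by norm_num)).const_mul _
  · refine Eventually.of_forall fun v => ?_
    refine (J_lim (κ := κ) h ht0 hL v).congr' ?_
    have hs := Real.tendsto_sqrt_atTop.comp hL
    filter_upwards [hs.eventually (eventually_gt_atTop |v|)] with n hn
    have := abs_lt.mp hn
    simp only [Function.comp] at this
    have hm : v ∈ Set.Ioc (-Real.sqrt (L n)) (Real.sqrt (L n)) := ⟨this.1, this.2.le⟩
    rw [Set.indicator_of_mem hm]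

lemma Hf_minor : ∃ K : ℝ, 0 < K ∧ ∃ t₂ : ℝ, 0 < t₂ ∧ ∀ (t L θ : ℝ) (k ℓ : ℕ), 0 < t → t < t₂ → ℓ * t = L → Real.pi ^ 2 / (6 * t) = L →
    t ≤ |θ| → |θ| ≤ Real.pi → ‖Hf t k ℓ θ‖ ≤ K / t * (Real.exp (2 * L) * Real.exp (-(2 / 25 / t))) := by
  obtain ⟨C, hC, t₀, ht₀, hm⟩ := qinf_minor_final
  refine ⟨72 * C, by positivity, min t₀ 1, by positivity, ?_⟩
  intro t L θ k ℓ ht htt h1 h2 h3 h4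
  have ht2 : t < t₀ := lt_of_lt_of_le htt (min_le_left _ _)
  have ht3 : t < 1 := lt_of_lt_of_le htt (min_le_right _ _)
  have b1 := hm t θ ht ht2 h3 h4
  rw [h2] at b1
  unfold Hf
  have hq1 := norm_q_lt ht θ
  have b2 := nA_two_crude ht ht3.le (norm_q t θ) k
  set q := Complex.exp (-(t + θ * Complex.I))
  have e2 : qA 2 k q = nA 2 k q * (qinf q)⁻¹ := by
    unfold nA; rw [mul_assoc, mul_inv_cancel₀ (qinf_ne hq1), mul_one]
  have b3 : ‖1 - q‖ ≤ 2 := (norm_sub_le _ _).trans (by rw [norm_one]; linarith)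
  have b4 : ‖Complex.exp (ℓ * (t + θ * Complex.I))‖ = Real.exp L := by
    rw [Complex.norm_exp, ← h1]; simp
  rw [e2, norm_mul, norm_mul, norm_mul, b4]
  calc _ ≤ 2 * (36 / t * (C * Real.exp (L - 2 / 25 / t))) * Real.exp L := by gcongr
    _ = _ := by
      rw [sub_eq_add_neg, Real.exp_add, two_mul L, Real.exp_add]; ring

lemma tL_facts {n : ℕ} (hn : 0 < n) :
    0 < Real.pi / Real.sqrt (6 * n) ∧ 0 < Real.pi * Real.sqrt ((n : ℝ) / 6) ∧
    n * (Real.pi / Real.sqrt (6 * n)) = Real.pi * Real.sqrt ((n : ℝ) / 6) ∧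
    Real.pi ^ 2 / (6 * (Real.pi / Real.sqrt (6 * n))) = Real.pi * Real.sqrt ((n : ℝ) / 6) := by
  have hn' : (0 : ℝ) < n := by exact_mod_cast hn
  have hs : 0 < Real.sqrt (6 * n) := Real.sqrt_pos.mpr (by positivity)
  have e : Real.sqrt ((n : ℝ) / 6) = Real.sqrt (6 * n) / 6 := by
    rw [show (n : ℝ) / 6 = (6 * n) / 6 ^ 2 by ring, Real.sqrt_div (by positivity), Real.sqrt_sq (by norm_num)]
  have h2 : Real.sqrt (6 * n) ^ 2 = 6 * n := Real.sq_sqrt (by positivity)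
  have hp := Real.pi_pos
  refine ⟨by positivity, by positivity, ?_, ?_⟩
  · rw [e]; field_simp; rw [Real.sq_sqrt (by positivity)]
  · rw [e]; field_simp

/-- the constant -/
lemma const_id {t L n : ℝ} (ht : 0 < t) (hL : 0 < L) (hn : 0 < n) (h1 : n * t = L) (h2 : Real.pi ^ 2 / (6 * t) = L) :
    2 * Real.pi * (Real.pi / (12 * Real.sqrt 2) / n ^ ((3 : ℝ) / 2)) =
      t / Real.sqrt L * (t * Real.sqrt (t / (2 * Real.pi))) * Real.sqrt Real.pi := by
  have hp := Real.pi_pos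
  have hpi : Real.pi ^ 2 = 6 * n * t ^ 2 := by
    rw [div_eq_iff (by positivity)] at h2; rw [h2, ← h1]; ring
  rw [← sq_eq_sq₀ (by positivity) (by positivity)]
  have e1 : (n ^ ((3 : ℝ) / 2)) ^ 2 = n ^ 3 := by
    rw [← Real.rpow_natCast, ← Real.rpow_mul hn.le]; norm_num
  simp only [mul_pow, div_pow, e1]
  rw [Real.sq_sqrt (by norm_num), Real.sq_sqrt hL.le, Real.sq_sqrt (by positivity), Real.sq_sqrt hp.le, hpi, ← h1]
  field_simp
  ring

lemma sqrtL_id {t L : ℝ} (ht : 0 < t) (h2 : Real.pi ^ 2 / (6 * t) = L) :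
    Real.sqrt L = Real.sqrt (Real.pi ^ 3 / 3) / t * Real.sqrt (t / (2 * Real.pi)) := by
  have hp := Real.pi_pos
  rw [← Real.sqrt_sq ht.le, ← Real.sqrt_div (by positivity), ← Real.sqrt_mul (by positivity), Real.sqrt_sq ht.le, ← h2]
  congr 1; field_simp; norm_num

noncomputable def DD (t L : ℝ) : ℝ := t / Real.sqrt L * (t * Real.sqrt (t / (2 * Real.pi)) * Real.exp (2 * L))

lemma major_eq {t L : ℝ} {k n : ℕ} (ht : 0 < t) (hL : 0 < L) :
    (((1 + Real.exp (-(k * t))) ^ 2 / DD t L : ℝ) : ℂ) * ∫ θ in (-t)..t, Hf t k n θ =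
     ∫ v in (-Real.sqrt L)..(Real.sqrt L), Jf t k n L v := by
  have hs : 0 < Real.sqrt L := Real.sqrt_pos.mpr hL
  have hp := Real.pi_pos
  have h := intervalIntegral.smul_integral_comp_mul_left (a := -Real.sqrt L) (b := Real.sqrt L) (fun θ => Hf t k n θ) (t / Real.sqrt L)
  rw [show t / Real.sqrt L * -Real.sqrt L = -t by field_simp, show t / Real.sqrt L * Real.sqrt L = t by field_simp] at h
  rw [← h]
  simp only [Jf]
  rw [intervalIntegral.integral_const_mul, Complex.real_smul, ← mul_assoc, ← Complex.ofReal_mul]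
  congr 2
  have : 0 < Real.sqrt (t / (2 * Real.pi)) := Real.sqrt_pos.mpr (by positivity)
  unfold DD; field_simp

lemma split_eq {t : ℝ} {k n : ℕ} (ht : 0 < t) :
    ∫ θ in (-Real.pi)..Real.pi, Hf t k n θ = (∫ θ in (-Real.pi)..(-t), Hf t k n θ) + (∫ θ in (-t)..t, Hf t k n θ) + ∫ θ in t..Real.pi, Hf t k n θ := by
  have hc := (Hf_spec ht k n).1
  rw [intervalIntegral.integral_add_adjacent_intervals, intervalIntegral.integral_add_adjacent_intervals] <;>
   exact hc.intervalIntegrable _ _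

lemma main_lim (κ : ℕ → ℕ) {t L : ℕ → ℝ} (h : ∀ᶠ n : ℕ in atTop, 0 < t n ∧ 0 < L n ∧ n * t n = L n ∧ Real.pi ^ 2 / (6 * t n) = L n)
    (ht0 : Tendsto t atTop (𝓝 0)) (hL : Tendsto L atTop atTop) :
    Tendsto (fun n => (((1 + Real.exp (-(κ n * t n))) ^ 2 / DD (t n) (L n) : ℝ) : ℂ) *
      ∫ θ in (-Real.pi)..Real.pi, Hf (t n) (κ n) n θ) atTop (𝓝 (Real.sqrt Real.pi : ℝ)) := by
  have hp := Real.pi_pos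
  have hmaj := major_lim (κ := κ) h ht0 hL
  obtain ⟨K, hK, t₂, ht₂, hmin⟩ := Hf_minor
  have htn0 : Tendsto t atTop (𝓝[>] 0) := tendsto_nhdsWithin_iff.mpr ⟨ht0, h.mono fun n hn => hn.1⟩
  have hinv : Tendsto (fun n => 2 / 25 / t n) atTop atTop := by
    simp only [div_eq_mul_inv (2 / 25 : ℝ)]
    exact (tendsto_inv_nhdsGT_zero.comp htn0).const_mul_atTop (by norm_num)
  have hz := ((Real.tendsto_pow_mul_exp_neg_atTop_nhds_zero 4).comp hinv).const_mul
    (4 * (2 * Real.pi) * K * Real.sqrt (Real.pi ^ 3 / 3) * (25 / 2) ^ 4)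
  rw [mul_zero] at hz
  have hdiff : Tendsto (fun n => (((1 + Real.exp (-(κ n * t n))) ^ 2 / DD (t n) (L n) : ℝ) : ℂ) *
      ((∫ θ in (-Real.pi)..Real.pi, Hf (t n) (κ n) n θ) - ∫ θ in (-(t n))..(t n), Hf (t n) (κ n) n θ)) atTop (𝓝 0) := by
    apply squeeze_zero_norm' _ hz
    filter_upwards [h, ht0.eventually (gt_mem_nhds ht₂), ht0.eventually (gt_mem_nhds hp)] with n hn htn htp
    obtain ⟨h1, h2, h3, h4⟩ := hn
    set B := K / t n * (Real.exp (2 * L n) * Real.exp (-(2 / 25 / t n))) with hB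
    have hB0 : 0 ≤ B := by positivity
    have hb1 : ‖∫ θ in (-Real.pi)..(-(t n)), Hf (t n) (κ n) n θ‖ ≤ B * Real.pi := by
      refine (intervalIntegral.norm_integral_le_of_norm_le_const (C := B) fun θ hθ => ?_).trans ?_
      · rw [Set.uIoc_of_le (by linarith)] at hθ
        have ha : |θ| = -θ := abs_of_nonpos (by linarith [hθ.2])
        exact hmin _ _ _ _ _ h1 htn h3 h4 (by rw [ha]; linarith [hθ.2]) (by rw [ha]; linarith [hθ.1])
      · gcongr; rw [abs_of_nonneg] <;> linarith
    have hb2 : ‖∫ θ in (t n)..Real.pi, Hf (t n) (κ n) n θ‖ ≤ B * Real.pi := by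
      refine (intervalIntegral.norm_integral_le_of_norm_le_const (C := B) fun θ hθ => ?_).trans ?_
      · rw [Set.uIoc_of_le (by linarith)] at hθ
        have ha : |θ| = θ := abs_of_nonneg (by linarith [hθ.1])
        exact hmin _ _ _ _ _ h1 htn h3 h4 (by rw [ha]; linarith [hθ.1]) (by rw [ha]; linarith [hθ.2])
      · gcongr; rw [abs_of_nonneg] <;> linarith
    have hs2 : 0 < Real.sqrt (t n / (2 * Real.pi)) := Real.sqrt_pos.mpr (by positivity)
    have hsL : 0 < Real.sqrt (L n) := Real.sqrt_pos.mpr h2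
    have hD : 0 < DD (t n) (L n) := by unfold DD; positivity
    rw [split_eq h1, norm_mul, Complex.norm_real, Real.norm_of_nonneg (by positivity)]
    have hx : Real.exp (-(κ n * t n)) ≤ 1 := Real.exp_le_one_iff.mpr (by
      have : 0 ≤ κ n * t n := by positivity
      linarith)
    have hx0 := Real.exp_pos (-(κ n * t n))
    calc _ ≤ 4 / DD (t n) (L n) * (B * Real.pi + B * Real.pi) := by
            gcongr
            · nlinarith
            · refine le_trans ?_ (add_le_add hb1 hb2)
              refine le_trans (le_of_eq ?_) (norm_add_le _ _)
              congr 1; ring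
      _ = _ := by
            rw [hB]; unfold DD
            rw [sqrtL_id h1 h4]
            have := Real.exp_pos (2 * L n)
            simp only [Function.comp]
            field_simp
            ring
  have := hdiff.add hmaj
  rw [zero_add] at this
  refine this.congr' ?_
  filter_upwards [h] with n hn
  rw [← major_eq hn.1 hn.2.1]; ring

lemma ratio_lim (κ : ℕ → ℕ) :
    Tendsto (fun ℓ : ℕ => (crankM (κ ℓ : ℤ) (κ ℓ + ℓ) : ℝ) /
          (Real.pi / (12 * Real.sqrt 2) *
            (Real.exp (2 * Real.pi * Real.sqrt ((ℓ : ℝ) / 6)) / (ℓ : ℝ) ^ ((3 : ℝ) / 2)) /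
            (1 + Real.exp (-(Real.pi * κ ℓ) / Real.sqrt (6 * ℓ))) ^ 2)) atTop (𝓝 1) := by
  have hp := Real.pi_pos
  have hsp : 0 < Real.sqrt Real.pi := Real.sqrt_pos.mpr hp
  have hL : Tendsto (fun n : ℕ => Real.pi * Real.sqrt ((n : ℝ) / 6)) atTop atTop :=
    (Real.tendsto_sqrt_atTop.comp (tendsto_natCast_atTop_atTop.atTop_div_const (by norm_num))).const_mul_atTop hp
  have ht0 : Tendsto (fun n : ℕ => Real.pi / Real.sqrt (6 * n)) atTop (𝓝 0) :=
    (Real.tendsto_sqrt_atTop.comp (tendsto_natCast_atTop_atTop.const_mul_atTop (by norm_num))).const_div_atTop _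
  have h := main_lim κ ((eventually_gt_atTop 0).mono fun n hn => tL_facts hn) ht0 hL
  have h2 := (Complex.continuous_re.tendsto _).comp h
  have h3 := h2.div_const (Real.sqrt Real.pi)
  rw [Complex.ofReal_re, div_self hsp.ne'] at h3
  refine h3.congr' ?_
  filter_upwards [eventually_gt_atTop 0] with n hn
  obtain ⟨f1, f2, f3, f4⟩ := tL_facts hn
  have hn' : (0 : ℝ) < n := by exact_mod_cast hn
  have hc := const_id f1 f2 hn' f3 f4
  simp only [Function.comp]
  rw [(Hf_spec f1 (κ n) n).2]
  have e : -(Real.pi * κ n) / Real.sqrt (6 * n) = -(κ n * (Real.pi / Real.sqrt (6 * n))) := by ring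
  have e2 : 2 * Real.pi * Real.sqrt ((n : ℝ) / 6) = 2 * (Real.pi * Real.sqrt ((n : ℝ) / 6)) := by ring
  rw [e, e2]
  set t := Real.pi / Real.sqrt (6 * n)
  set L := Real.pi * Real.sqrt ((n : ℝ) / 6)
  set X := (1 + Real.exp (-(κ n * t))) ^ 2 with hX
  have hX0 : 0 < X := by positivity
  set c := crankM (κ n : ℤ) (κ n + n)
  rw [show (((X / DD t L : ℝ) : ℂ) * (2 * Real.pi * (c : ℂ))) = ((X / DD t L * (2 * Real.pi * c) : ℝ) : ℂ) by push_cast; ring, Complex.ofReal_re]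
  have hs2 : 0 < Real.sqrt (t / (2 * Real.pi)) := Real.sqrt_pos.mpr (by positivity)
  have hsL : 0 < Real.sqrt L := Real.sqrt_pos.mpr f2
  have hD : 0 < DD t L := by unfold DD; positivity
  have hq : 0 < (n : ℝ) ^ ((3 : ℝ) / 2) := by positivity
  have hm : DD t L * Real.sqrt Real.pi = 2 * Real.pi * (Real.pi / (12 * Real.sqrt 2) *
      (Real.exp (2 * L) / (n : ℝ) ^ ((3 : ℝ) / 2))) := by
    calc _ = (t / Real.sqrt L * (t * Real.sqrt (t / (2 * Real.pi))) * Real.sqrt Real.pi) * Real.exp (2 * L) := by unfold DD; ring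
      _ = _ := by rw [← hc]; ring
  set M := Real.pi / (12 * Real.sqrt 2) * (Real.exp (2 * L) / (n : ℝ) ^ ((3 : ℝ) / 2))
  have hM : 0 < M := by positivity
  calc X / DD t L * (2 * Real.pi * c) / Real.sqrt Real.pi = X * (2 * Real.pi * c) / (DD t L * Real.sqrt Real.pi) := by field_simp
    _ = _ := by rw [hm]; field_simp

lemma unif_of_seq {F : ℕ → ℕ → ℝ} (h : ∀ κ : ℕ → ℕ, Tendsto (fun ℓ => F (κ ℓ) ℓ) atTop (𝓝 1)) :
    ∀ ε > (0 : ℝ), ∃ L₀ : ℕ, ∀ k ℓ : ℕ, L₀ ≤ ℓ → |F k ℓ - 1| < ε := by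
  classical
  intro ε hε
  have : ∀ ℓ, ∃ k, (∃ k', ε ≤ |F k' ℓ - 1|) → ε ≤ |F k ℓ - 1| := by
    intro ℓ
    by_cases hh : ∃ k', ε ≤ |F k' ℓ - 1|
    · exact ⟨hh.choose, fun _ => hh.choose_spec⟩
    · exact ⟨0, fun h' => absurd h' hh⟩
  choose κ hκ using this
  obtain ⟨N, hN⟩ := Metric.tendsto_atTop.mp (h κ) ε hε
  refine ⟨N, fun k ℓ hl => ?_⟩
  by_contra hcon
  have h1 := hκ ℓ ⟨k, not_lt.mp hcon⟩
  have h2 := hN ℓ hl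
  rw [Real.dist_eq] at h2
  linarith

end Helpers

open Real in
/-- uniformly for integers `ℓ, k ≥ 0`, as `ℓ → ∞`,
`M(k, k+ℓ) ~ (π/(12√2)) · (1 + e^{-πk/√(6ℓ)})⁻² · e^{2π√(ℓ/6)}/ℓ^{3/2}`. -/
theorem crankM_asymptotic :
    ∀ ε > (0 : ℝ), ∃ L₀ : ℕ, ∀ k ℓ : ℕ, L₀ ≤ ℓ →
      |(crankM (k : ℤ) (k + ℓ) : ℝ) /
          (π / (12 * Real.sqrt 2) *
            (Real.exp (2 * π * Real.sqrt ((ℓ : ℝ) / 6)) / (ℓ : ℝ) ^ ((3 : ℝ) / 2)) /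
            (1 + Real.exp (-(π * k) / Real.sqrt (6 * ℓ))) ^ 2) - 1| < ε := by
  exact unif_of_seq (F := fun k ℓ => (crankM (k : ℤ) (k + ℓ) : ℝ) /
          (π / (12 * Real.sqrt 2) *
            (Real.exp (2 * π * Real.sqrt ((ℓ : ℝ) / 6)) / (ℓ : ℝ) ^ ((3 : ℝ) / 2)) /
            (1 + Real.exp (-(π * k) / Real.sqrt (6 * ℓ))) ^ 2)) ratio_lim
end

section
/- The cubic partition function satisfies c(n) ~ e^{π√n}/(8 n^{5/4}) as the integer n → ∞; that is, the ratio c(n)/(e^{π√n}/(8 n^{5/4})) tends to 1. -/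
open Finset

open Filter Topology

noncomputable def eulerE (q : ℂ) : ℂ := ∏' k : ℕ, (1 - q ^ (k + 1))

def msEquiv (N : ℕ) : (ℕ × {m : Multiset ℕ // ∀ i ∈ m, 0 < i ∧ i ≤ N}) ≃
    {m : Multiset ℕ // ∀ i ∈ m, 0 < i ∧ i ≤ N + 1} where
  toFun p := ⟨Multiset.replicate p.1 (N+1) + p.2.1, by
    intro i hi
    rw [Multiset.mem_add] at hi
    rcases hi with hi | hi
    · have := Multiset.eq_of_mem_replicate hi
      omega
    · have := p.2.2 i hi
      omega⟩
  invFun m := (m.1.count (N+1), ⟨m.1.filter (fun i => i ≠ N+1), by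
    intro i hi
    rw [Multiset.mem_filter] at hi
    have := m.2 i hi.1
    have := hi.2
    omega⟩)
  left_inv p := by
    obtain ⟨k, m, hm⟩ := p
    have h1 : (N + 1) ∉ m := fun h => by have := hm _ h; omega
    ext1
    · simp [Multiset.count_eq_zero_of_notMem h1]
    · apply Subtype.ext
      simp only [Multiset.filter_add]
      rw [Multiset.filter_eq_nil.mpr, Multiset.filter_eq_self.mpr, zero_add]
      · intro a ha h; exact h1 (h ▸ ha)
      · intro a ha; simpa using Multiset.eq_of_mem_replicate ha
  right_inv m := by
    apply Subtype.ext
    simp only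
    rw [← Multiset.filter_eq' m.1 (N+1)]
    exact Multiset.filter_add_not _ _

lemma hasSum_bounded {q : ℂ} (hq : ‖q‖ < 1) (N : ℕ) :
    Summable (fun m : {m : Multiset ℕ // ∀ i ∈ m, 0 < i ∧ i ≤ N} => ‖q ^ m.1.sum‖) ∧
    HasSum (fun m : {m : Multiset ℕ // ∀ i ∈ m, 0 < i ∧ i ≤ N} => q ^ m.1.sum)
      (∏ k ∈ Finset.range N, (1 - q ^ (k + 1)))⁻¹ := by
  induction N with
  | zero =>
    let U : Unique {m : Multiset ℕ // ∀ i ∈ m, 0 < i ∧ i ≤ 0} :=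
      { default := ⟨0, by simp⟩
        uniq := by
          rintro ⟨m, hm⟩
          apply Subtype.ext
          apply Multiset.eq_zero_of_forall_notMem
          intro i hi
          have := hm i hi
          omega }
    constructor
    · exact (hasSum_fintype _).summable
    · have := hasSum_unique (fun m : {m : Multiset ℕ // ∀ i ∈ m, 0 < i ∧ i ≤ 0} => q ^ m.1.sum)
      have h0 : q ^ ((default : {m : Multiset ℕ // ∀ i ∈ m, 0 < i ∧ i ≤ 0}).1.sum) = 1 := by
        change q ^ ((0 : Multiset ℕ).sum) = 1
        simp
      rw [h0] at this
      simpa using this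
  | succ N ih =>
    have hq' : ‖q ^ (N+1)‖ < 1 := by
      rw [norm_pow]; exact pow_lt_one₀ (norm_nonneg _) hq (by omega)
    have hg : Summable (fun k : ℕ => ‖(q ^ (N+1)) ^ k‖) := by
      simp_rw [norm_pow _ _]
      rw [← norm_pow]
      exact summable_geometric_of_lt_one (norm_nonneg _) hq'
    have hs' := Summable.mul_norm hg ih.1
    have hs := hs'.of_norm
    have key : ∀ p, q ^ ((msEquiv N p).1.sum) = (q ^ (N+1)) ^ p.1 * q ^ p.2.1.sum := by
      intro p
      change q ^ ((Multiset.replicate p.1 (N+1) + p.2.1).sum) = _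
      rw [Multiset.sum_add, Multiset.sum_replicate, pow_add, smul_eq_mul, mul_comm p.1, pow_mul]
    rw [← (msEquiv N).summable_iff, ← (msEquiv N).hasSum_iff]
    constructor
    · refine hs'.congr ?_
      intro p
      simp only [Function.comp, key]
    · have hgg : HasSum (fun k : ℕ => (q ^ (N+1)) ^ k) (1 - q ^ (N+1))⁻¹ :=
        hasSum_geometric_of_norm_lt_one hq'
      have := HasSum.mul (f := fun k : ℕ => (q ^ (N+1)) ^ k)
        (g := fun m : {m : Multiset ℕ // ∀ i ∈ m, 0 < i ∧ i ≤ N} => q ^ m.1.sum) hgg ih.2 hs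
      rw [Finset.prod_range_succ, mul_inv, mul_comm]
      have e : ((fun m : {m : Multiset ℕ // ∀ i ∈ m, 0 < i ∧ i ≤ N + 1} => q ^ m.1.sum) ∘
        (msEquiv N)) = fun p => (q ^ (N+1)) ^ p.1 * q ^ p.2.1.sum := funext key
      rw [e]
      exact this

lemma eulerE_multipliable {q : ℂ} (hq : ‖q‖ < 1) : Multipliable (fun k : ℕ => 1 - q ^ (k+1)) :=
  ModularForm.multipliable_one_sub_pow hq

lemma eulerE_tendsto {q : ℂ} (hq : ‖q‖ < 1) :
    Tendsto (fun N => ∏ k ∈ Finset.range N, (1 - q ^ (k+1))) atTop (𝓝 (eulerE q)) :=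
  (eulerE_multipliable hq).tendsto_prod_tprod_nat

lemma eulerE_ne_zero {q : ℂ} (hq : ‖q‖ < 1) : eulerE q ≠ 0 := by
  unfold eulerE
  simp_rw [sub_eq_add_neg]
  apply tprod_one_add_ne_zero_of_summable
  · intro i h
    have h1 : q ^ (i+1) = 1 := by linear_combination -h
    have h2 : ‖q ^ (i+1)‖ < 1 := by
      rw [norm_pow]; exact pow_lt_one₀ (norm_nonneg _) hq (by omega)
    rw [h1] at h2; simp at h2
  · simp only [norm_neg, norm_pow]
    exact (summable_nat_add_iff 1).mpr (summable_geometric_of_lt_one (norm_nonneg _) hq)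

lemma hasSum_all {q : ℂ} (hq : ‖q‖ < 1) :
    Summable (fun m : {m : Multiset ℕ // ∀ i ∈ m, 0 < i} => ‖q ^ m.1.sum‖) ∧
    HasSum (fun m : {m : Multiset ℕ // ∀ i ∈ m, 0 < i} => q ^ m.1.sum) (eulerE q)⁻¹ := by
  classical
  let inc (N : ℕ) : {m : Multiset ℕ // ∀ i ∈ m, 0 < i ∧ i ≤ N} →
    {m : Multiset ℕ // ∀ i ∈ m, 0 < i} := fun m => ⟨m.1, fun i hi => (m.2 i hi).1⟩
  have inc_inj : ∀ N, Function.Injective (inc N) := by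
    intro N a b h
    apply Subtype.ext
    exact congrArg (fun x => x.1) h
  have mem_range : ∀ N (m : {m : Multiset ℕ // ∀ i ∈ m, 0 < i}), m.1.sum ≤ N →
      m ∈ Set.range (inc N) := by
    intro N m h
    exact ⟨⟨m.1, fun i hi => ⟨m.2 i hi, (Multiset.le_sum_of_mem hi).trans h⟩⟩, rfl⟩
  -- summability
  have hr : ‖((‖q‖ : ℝ) : ℂ)‖ < 1 := by simpa using hq
  obtain ⟨C, hC⟩ := (((eulerE_tendsto hr).inv₀ (eulerE_ne_zero hr)).norm).bddAbove_range
  have hsum : Summable (fun m : {m : Multiset ℕ // ∀ i ∈ m, 0 < i} => ‖q ^ m.1.sum‖) := by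
    apply summable_of_sum_le (c := C)
    · intro m; exact norm_nonneg _
    intro u
    let N := u.sup (fun m => m.1.sum)
    have h1 := (hasSum_bounded hr N).2
    have h1' := (hasSum_bounded hr N).1
    have h2 : ∑ x ∈ u, ‖q ^ x.1.sum‖ ≤
        ∑' m : {m : Multiset ℕ // ∀ i ∈ m, 0 < i ∧ i ≤ N}, ‖((‖q‖ : ℝ) : ℂ) ^ m.1.sum‖ := by
      have : ∑ x ∈ u, ‖q ^ x.1.sum‖ =
        ∑ m ∈ u.preimage (inc N) (inc_inj N).injOn, ‖((‖q‖ : ℝ) : ℂ) ^ m.1.sum‖ := by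
        rw [← Finset.sum_preimage (inc N) u (inc_inj N).injOn (fun x => ‖q ^ x.1.sum‖)]
        · simp [inc]
        · intro x hx hx'
          exact absurd (mem_range N x (Finset.le_sup (f := fun m => m.1.sum) hx)) hx'
      rw [this]
      exact h1'.sum_le_tsum _ (fun _ _ => norm_nonneg _)
    refine h2.trans (le_trans (le_of_eq ?_) (hC ⟨N, rfl⟩))
    change _ = ‖(∏ k ∈ Finset.range N, (1 - ((‖q‖ : ℝ) : ℂ) ^ (k+1)))⁻¹‖
    rw [← h1.tsum_eq]
    rw [show (fun m : {m : Multiset ℕ // ∀ i ∈ m, 0 < i ∧ i ≤ N} => ((‖q‖ : ℝ) : ℂ) ^ m.1.sum)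
      = fun m => ((‖q‖ ^ m.1.sum : ℝ) : ℂ) by funext; push_cast; rfl, ← Complex.ofReal_tsum]
    rw [Complex.norm_real, Real.norm_of_nonneg (tsum_nonneg fun _ => by positivity)]
    simp
  refine ⟨hsum, ?_⟩
  have h3 := tendsto_tsum_of_dominated_convergence (𝓕 := atTop) (bound := fun m : {m : Multiset ℕ // ∀ i ∈ m, 0 < i} => ‖q ^ m.1.sum‖) (f := fun N => (Set.range (inc N)).indicator (fun m => q ^ m.1.sum)) (g := fun m => q ^ m.1.sum) hsum ?_ ?_
  · have h4 : ∀ N, ∑' m, (Set.range (inc N)).indicator (fun m => q ^ m.1.sum) m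
        = (∏ k ∈ Finset.range N, (1 - q ^ (k + 1)))⁻¹ := by
      intro N
      rw [← _root_.tsum_subtype, ← (hasSum_bounded hq N).2.tsum_eq, 
        tsum_range (f := fun m : {m : Multiset ℕ // ∀ i ∈ m, 0 < i} => q ^ m.1.sum) (inc_inj N)]
    simp_rw [h4] at h3
    have := tendsto_nhds_unique h3 ((eulerE_tendsto hq).inv₀ (eulerE_ne_zero hq))
    rw [← this]
    exact hsum.of_norm.hasSum
  · intro m
    apply tendsto_const_nhds.congr'
    filter_upwards [eventually_ge_atTop m.1.sum] with N hN
    rw [Set.indicator_of_mem (mem_range N m hN)]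
  · filter_upwards with N m
    exact norm_indicator_le_norm_self _ _

lemma hasSum_cubic {q : ℂ} (hq : ‖q‖ < 1) :
    HasSum (fun n : ℕ => (cubicPartition n : ℂ) * q ^ n) ((eulerE q)⁻¹ * (eulerE (q^2))⁻¹) := by
  have hq2 : ‖q^2‖ < 1 := by rw [norm_pow]; exact pow_lt_one₀ (norm_nonneg _) hq (by omega)
  have hs := summable_mul_of_summable_norm (hasSum_all hq).1 (hasSum_all hq2).1
  have h := HasSum.mul (hasSum_all hq).2 (hasSum_all hq2).2 hs
  set S := {m : Multiset ℕ // ∀ i ∈ m, 0 < i}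
  have h' := (Equiv.sigmaFiberEquiv (fun p : S × S => p.1.1.sum + 2 * p.2.1.sum)).hasSum_iff.mpr h
  have h'' := h'.sigma (g := fun n : ℕ => (cubicPartition n : ℂ) * q ^ n) ?_
  · exact h''
  intro n
  have hsm := h'.summable.sigma_factor n
  have : ∀ c : {p : S × S // p.1.1.sum + 2 * p.2.1.sum = n},
    (((fun p : S × S => q ^ p.1.1.sum * (q^2) ^ p.2.1.sum) ∘
      (Equiv.sigmaFiberEquiv (fun p : S × S => p.1.1.sum + 2 * p.2.1.sum))) ⟨n, c⟩) = q ^ n := by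
    rintro ⟨c, hc⟩
    simp [Equiv.sigmaFiberEquiv, ← hc, pow_add, pow_mul]
  have h3 := hsm.hasSum
  rw [tsum_congr this, tsum_const, nsmul_eq_mul] at h3
  refine (congrArg (fun x => HasSum _ x) ?_).mp h3
  congr 2
  unfold cubicPartition
  refine Nat.card_congr ?_
  refine ⟨fun c => ⟨(c.1.1.1, c.1.2.1.map (2 * ·)), c.1.1.2, ?_, ?_⟩,
    fun c => ⟨(⟨c.1.1, c.2.1⟩, ⟨c.1.2.map (· / 2), ?_⟩), ?_⟩, ?_, ?_⟩
  · intro i hi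
    simp only [Multiset.mem_map] at hi
    obtain ⟨a, ha, rfl⟩ := hi
    have := c.1.2.2 a ha
    exact ⟨by omega, by simp⟩
  · have := c.2
    have e2 : (c.1.2.1.map (2 * ·)).sum = 2 * c.1.2.1.sum := by
      rw [Multiset.sum_map_mul_left, Multiset.map_id']
    exact e2.symm ▸ this
  · intro i hi
    simp only [Multiset.mem_map] at hi
    obtain ⟨a, ha, rfl⟩ := hi
    obtain ⟨h1, k, hk⟩ := c.2.2.1 a ha
    omega
  · refine Eq.trans ?_ c.2.2.2
    change c.1.1.sum + 2 * (c.1.2.map (· / 2)).sum = _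
    congr 1
    rw [← Multiset.sum_map_mul_left]
    congr 1
    conv_rhs => rw [← Multiset.map_id c.1.2]
    apply Multiset.map_congr rfl
    intro a ha
    obtain ⟨h1, k, hk⟩ := c.2.2.1 a ha
    simp; omega
  · rintro ⟨⟨a, b⟩, h⟩
    apply Subtype.ext
    ext1
    · rfl
    · apply Subtype.ext
      simp
  · rintro ⟨⟨a, b⟩, h⟩
    apply Subtype.ext
    ext1
    · rfl
    · simp only [Multiset.map_map]
      conv_rhs => rw [← Multiset.map_id b]
      apply Multiset.map_congr rfl
      intro a ha
      obtain ⟨h1, k, hk⟩ := h.2.1 a ha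
      simp; omega

lemma pt_bound {z : ℂ} (hz : ‖z‖ < 1) : 1 - ‖z‖ ≤ ‖1 - z‖ * Real.exp (z.re - ‖z‖) := by
  have h1 := Complex.hasSum_re (Complex.hasSum_taylorSeries_neg_log hz)
  have hz' : ‖((‖z‖ : ℝ) : ℂ)‖ < 1 := by simpa using hz
  have h2 := Complex.hasSum_re (Complex.hasSum_taylorSeries_neg_log hz')
  have h3 := h2.sub h1
  have h4 := le_hasSum h3 1 (by
    intro j _
    have e1 : (((‖z‖ : ℝ) : ℂ) ^ j / (j : ℂ)).re = ‖z ^ j / (j:ℂ)‖ := by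
      rw [norm_div, norm_pow, Complex.norm_natCast, ← Complex.ofReal_pow, ← Complex.ofReal_natCast,
        ← Complex.ofReal_div, Complex.ofReal_re]
    rw [e1]
    exact sub_nonneg.mpr (Complex.re_le_norm _))
  simp only [pow_one, Nat.cast_one, div_one, Complex.neg_re, Complex.log_re, Complex.ofReal_re] at h4
  have hne : (1 - z) ≠ 0 := by
    intro h
    have : z = 1 := by linear_combination -h
    rw [this] at hz; simp at hz
  have e2 : ‖1 - ((‖z‖ : ℝ) : ℂ)‖ = 1 - ‖z‖ := by
    rw [← Complex.ofReal_one, ← Complex.ofReal_sub, Complex.norm_real,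
      Real.norm_of_nonneg (by linarith)]
  rw [e2] at h4
  have hpos : 0 < 1 - ‖z‖ := by linarith
  have hpos2 : 0 < ‖1 - z‖ := norm_pos_iff.mpr hne
  rw [← Real.exp_log hpos, ← Real.exp_log hpos2, ← Real.exp_add]
  apply Real.exp_le_exp.mpr
  linarith

lemma euler_bound {q : ℂ} (hq : ‖q‖ < 1) :
    ‖eulerE (‖q‖ : ℝ)‖ ≤ ‖eulerE q‖ * Real.exp ((q / (1 - q)).re - ‖q‖ / (1 - ‖q‖)) := by
  have hr : ‖((‖q‖ : ℝ) : ℂ)‖ < 1 := by simpa using hq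
  have hk : ∀ k : ℕ, ‖q ^ (k+1)‖ < 1 := by
    intro k; rw [norm_pow]; exact pow_lt_one₀ (norm_nonneg _) hq (by omega)
  have t1 := (eulerE_tendsto hr).norm
  have s1 : HasSum (fun k : ℕ => q ^ (k+1)) (q / (1 - q)) := by
    have := (hasSum_geometric_of_norm_lt_one hq).mul_left q
    simpa [pow_succ', div_eq_mul_inv] using this
  have s2 : HasSum (fun k : ℕ => ‖q‖ ^ (k+1)) (‖q‖ / (1 - ‖q‖)) := by
    have := (hasSum_geometric_of_lt_one (norm_nonneg q) hq).mul_left ‖q‖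
    simpa [pow_succ', div_eq_mul_inv] using this
  have s3 := ((Complex.hasSum_re s1).sub s2).tendsto_sum_nat
  have t2 := (eulerE_tendsto hq).norm.mul ((Real.continuous_exp.tendsto _).comp s3)
  refine le_of_tendsto_of_tendsto' t1 t2 ?_
  intro N
  simp only [Function.comp, Real.exp_sum, norm_prod, ← Finset.prod_mul_distrib]
  apply Finset.prod_le_prod
  · intro _ _; exact norm_nonneg _
  · intro k _
    have := pt_bound (hk k)
    rw [norm_pow] at this
    refine le_trans (le_of_eq ?_) this
    rw [← Complex.ofReal_pow, ← Complex.ofReal_one, ← Complex.ofReal_sub, Complex.norm_real,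
      Real.norm_of_nonneg]
    have := hk k
    rw [norm_pow] at this
    linarith

lemma euler_inv_bound {q : ℂ} (hq : ‖q‖ < 1) :
    ‖(eulerE q)⁻¹‖ ≤ ‖(eulerE (‖q‖ : ℝ))⁻¹‖ *
      Real.exp ((q / (1 - q)).re - ‖q‖ / (1 - ‖q‖)) := by
  have hr : ‖((‖q‖ : ℝ) : ℂ)‖ < 1 := by simpa using hq
  have h1 := norm_pos_iff.mpr (eulerE_ne_zero hq)
  have h2 := norm_pos_iff.mpr (eulerE_ne_zero hr)
  have := euler_bound hq
  rw [norm_inv, norm_inv, inv_mul_eq_div, le_div_iff₀ h2, inv_mul_le_iff₀ h1]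
  exact this

lemma re_geom_le {q : ℂ} (hq : ‖q‖ < 1) : (q / (1 - q)).re ≤ ‖q‖ / (1 - ‖q‖) := by
  refine (Complex.re_le_norm _).trans ?_
  rw [norm_div]
  have h : 1 - ‖q‖ ≤ ‖1 - q‖ := by
    have := norm_sub_norm_le (1:ℂ) q
    simpa using this
  gcongr

lemma euler_inv_bound' {q : ℂ} (hq : ‖q‖ < 1) :
    ‖(eulerE q)⁻¹‖ ≤ ‖(eulerE (‖q‖ : ℝ))⁻¹‖ := by
  refine (euler_inv_bound hq).trans ?_
  apply mul_le_of_le_one_right (norm_nonneg _)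
  apply Real.exp_le_one_iff.mpr
  linarith [re_geom_le hq]

lemma eulerE_contDiff {q : ℂ} (hq : ‖q‖ < 1) : ContinuousAt eulerE q := by
  have := ModularForm.differentiableOn_tprod_one_sub_pow.continuousOn.continuousAt
    (Metric.isOpen_ball.mem_nhds (show q ∈ Metric.ball (0:ℂ) 1 by simpa using hq))
  exact this

lemma eulerE_inv_tendsto : Tendsto (fun q => (eulerE q)⁻¹) (𝓝 0) (𝓝 1) := by
  have h0 : eulerE 0 = 1 := by simp [eulerE]
  have := (eulerE_contDiff (q := 0) (by simp)).tendsto.inv₀ (by rw [h0]; simp)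
  simpa [h0] using this

lemma eulerE_inv_near : ∃ δ > 0, ∀ q : ℂ, ‖q‖ < δ → ‖(eulerE q)⁻¹‖ ≤ 2 := by
  have h := eulerE_inv_tendsto.norm
  rw [norm_one] at h
  have := h.eventually (eventually_le_nhds (show (1:ℝ) < 2 by norm_num))
  obtain ⟨δ, hδ, H⟩ := Metric.eventually_nhds_iff.mp this
  exact ⟨δ, hδ, fun q hq => H (by simpa using hq)⟩

noncomputable def cubF (s : ℂ) : ℂ :=
  (eulerE (Complex.exp (-s)))⁻¹ * (eulerE (Complex.exp (-(2 * s))))⁻¹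

open Complex in
lemma eta_eq (z : ℂ) : ModularForm.eta z = cexp (2 * Real.pi * I * z / 24) *
    eulerE (cexp (2 * Real.pi * I * z)) := by
  simp [ModularForm.eta, eulerE, Function.Periodic.qParam, ModularForm.eta_q]

open Complex in
lemma eta_prod {z : ℂ} (hz : 0 < z.im) :
    ModularForm.eta (-1 / z) * ModularForm.eta (-1 / (2 * z)) =
      I⁻¹ * (Real.sqrt 2 : ℝ) * z * (ModularForm.eta z * ModularForm.eta (2 * z)) := by
  have h1 := ModularForm.eta_comp_eq_csqrt_I_inv (show z ∈ _ from hz)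
  have h2 := ModularForm.eta_comp_eq_csqrt_I_inv (x := 2 * z) (by
    simp [UpperHalfPlane.upperHalfPlaneSet, hz])
  simp only [Function.comp, Pi.smul_apply, Pi.mul_apply, smul_eq_mul] at h1 h2
  have hz0 : z ≠ 0 := by rintro rfl; simp at hz
  have seq : ∀ w : ℂ, w ≠ 0 → Complex.sqrt w = cexp (Complex.log w / 2) := by
    intro w hw
    rw [Complex.sqrt, Complex.cpow_def_of_ne_zero hw, div_eq_mul_inv]
  have sq : ∀ w : ℂ, w ≠ 0 → Complex.sqrt w * Complex.sqrt w = w := by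
    intro w hw
    rw [seq _ hw, ← Complex.exp_add]
    ring_nf
    exact Complex.exp_log hw
  have s2 : Complex.sqrt (2 * z) = (Real.sqrt 2 : ℝ) * Complex.sqrt z := by
    rw [seq _ hz0, seq _ (by simpa using hz0)]
    rw [show (2 * z) = ((2:ℝ) : ℂ) * z by push_cast; rfl, Complex.log_ofReal_mul (by norm_num) hz0,
      add_div, Complex.exp_add]
    congr 1
    rw [Real.sqrt_eq_rpow, Real.rpow_def_of_pos (by norm_num)]
    push_cast
    ring_nf
  rw [h1, h2, s2]
  calc _ = (Complex.sqrt I * Complex.sqrt I)⁻¹ * (Real.sqrt 2 : ℝ) * (Complex.sqrt z * Complex.sqrt z) * (ModularForm.eta z * ModularForm.eta (2 * z)) := by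
        rw [mul_inv]; ring
    _ = _ := by rw [sq I I_ne_zero, sq z hz0]

open Complex in
lemma cubF_modular {s : ℂ} (hs : 0 < s.re) :
    cubF s = cexp (-s / 8) * ((Real.sqrt 2 : ℝ) * s / (2 * Real.pi)) *
      cexp (Real.pi ^ 2 / (4 * s)) *
      ((eulerE (cexp (-(4 * Real.pi ^ 2 / s))))⁻¹ * (eulerE (cexp (-(2 * Real.pi ^ 2 / s))))⁻¹) := by
  have hs0 : s ≠ 0 := by rintro rfl; simp at hs
  have hpi : (Real.pi : ℂ) ≠ 0 := by exact_mod_cast Real.pi_ne_zero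
  have hz : 0 < (I * s / (2 * Real.pi)).im := by
    have : I * s / (2 * Real.pi) = ((1 / (2 * Real.pi) : ℝ) : ℂ) * (I * s) := by
      push_cast; field_simp
    rw [this, Complex.im_ofReal_mul]
    simp only [Complex.mul_im, Complex.I_re, Complex.I_im]
    have := Real.pi_pos
    have : 0 < 1 / (2 * Real.pi) := by positivity
    nlinarith
  have h := eta_prod hz
  rw [eta_eq, eta_eq, eta_eq, eta_eq] at h
  have hI := I_sq
  have e1 : 2 * Real.pi * I * (-1 / (I * s / (2 * Real.pi))) = -(4 * Real.pi ^ 2 / s) := by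
    field_simp; ring
  have e2 : 2 * Real.pi * I * (-1 / (2 * (I * s / (2 * Real.pi)))) = -(2 * Real.pi ^ 2 / s) := by
    field_simp
  have e3 : 2 * Real.pi * I * (I * s / (2 * Real.pi)) = -s := by
    field_simp; rw [hI]
  have e4 : 2 * Real.pi * I * (2 * (I * s / (2 * Real.pi))) = -(2 * s) := by
    field_simp; rw [hI]
  have e5 : I⁻¹ * (Real.sqrt 2 : ℝ) * (I * s / (2 * Real.pi)) =
      (Real.sqrt 2 : ℝ) * s / (2 * Real.pi) := by
    field_simp
  rw [e1, e2, e3, e4, e5] at h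
  have n1 : ∀ w : ℂ, 0 < w.re → eulerE (cexp (-w)) ≠ 0 := by
    intro w hw
    apply eulerE_ne_zero
    rw [Complex.norm_exp]
    simpa using hw
  have hsinv : 0 < (s⁻¹).re := by
    rw [Complex.inv_re]; exact div_pos hs (Complex.normSq_pos.mpr hs0)
  have m1 := n1 s hs
  have m2 := n1 (2 * s) (by simpa using hs)
  have hpp : ∀ a : ℝ, 0 < a → 0 < ((a : ℂ) * Real.pi ^ 2 / s).re := by
    intro a ha
    rw [show (a : ℂ) * Real.pi ^ 2 / s = ((a * Real.pi ^ 2 : ℝ) : ℂ) * s⁻¹ by push_cast; rfl,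
      Complex.re_ofReal_mul]
    have := Real.pi_pos
    positivity
  have m3 := n1 (4 * Real.pi ^ 2 / s) (by exact_mod_cast hpp 4 (by norm_num))
  have m4 := n1 (2 * Real.pi ^ 2 / s) (by exact_mod_cast hpp 2 (by norm_num))
  unfold cubF
  set A := eulerE (cexp (-s))
  set B := eulerE (cexp (-(2 * s)))
  set C := eulerE (cexp (-(4 * Real.pi ^ 2 / s)))
  set D := eulerE (cexp (-(2 * Real.pi ^ 2 / s)))
  have h' : cexp (-(Real.pi ^ 2 / (4 * s))) * (C * D) =
     (Real.sqrt 2 : ℝ) * s / (2 * Real.pi) * cexp (-s / 8) * (A * B) := by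
    have x1 : cexp (-(Real.pi ^ 2 / (4 * s))) = cexp (-(4 * Real.pi ^ 2 / s) / 24) *
        cexp (-(2 * Real.pi ^ 2 / s) / 24) := by
      rw [← Complex.exp_add]; congr 1; field_simp; ring
    have x2 : cexp (-s / 8) = cexp (-s / 24) * cexp (-(2 * s) / 24) := by
      rw [← Complex.exp_add]; congr 1; ring
    rw [x1, x2]
    linear_combination h
  rw [Complex.exp_neg] at h'
  have y := Complex.exp_ne_zero (Real.pi ^ 2 / (4 * s))
  field_simp at h' ⊢
  linear_combination h'

open Complex in
lemma cauchy_cubic (n : ℕ) {σ : ℝ} (hσ : 0 < σ) :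
    ∫ θ in (-Real.pi)..Real.pi, cubF (σ + θ * I) * cexp (n * (σ + θ * I)) =
      2 * Real.pi * cubicPartition n := by
  have hnorm : ∀ (m : ℕ) (θ : ℝ), ‖cexp (-(σ + θ * I)) ^ m‖ = Real.exp (-σ) ^ m := by
    intro m θ
    rw [norm_pow, Complex.norm_exp]; simp
  have hr : ‖((Real.exp (-σ) : ℝ) : ℂ)‖ < 1 := by
    rw [Complex.norm_real, Real.norm_of_nonneg (Real.exp_pos _).le]
    simpa using hσ
  have hS : Summable (fun m : ℕ => (cubicPartition m : ℝ) * Real.exp (-σ) ^ m) := by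
    have := (hasSum_cubic hr).summable
    rw [← Complex.summable_ofReal]
    refine this.congr ?_
    intro b; push_cast; rfl
  have H := intervalIntegral.hasSum_integral_of_dominated_convergence
    (a := -Real.pi) (b := Real.pi) (μ := MeasureTheory.volume)
    (F := fun (m : ℕ) (θ : ℝ) => (cubicPartition m : ℂ) * cexp (-(σ + θ * I)) ^ m *
      cexp (n * (σ + θ * I)))
    (f := fun θ : ℝ => cubF (σ + θ * I) * cexp (n * (σ + θ * I)))
    (fun m _ => (cubicPartition m : ℝ) * Real.exp (-σ) ^ m * Real.exp (n * σ))
    (fun m => by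
      apply Continuous.aestronglyMeasurable
      fun_prop)
    (fun m => by
      filter_upwards with θ _
      rw [norm_mul, norm_mul, hnorm, Complex.norm_natCast, Complex.norm_exp]
      simp)
    (by
      filter_upwards with θ _
      exact hS.mul_right _)
    (by simp)
    (by
      filter_upwards with θ _
      apply HasSum.mul_right
      have := hasSum_cubic (q := cexp (-(σ + θ * I))) (by
        have := hnorm 1 θ
        rw [pow_one, pow_one] at this
        rw [this]; simpa using hσ)
      rw [← Complex.exp_nat_mul] at this
      unfold cubF
      rw [show ((2:ℕ):ℂ) * -(σ + θ * I) = -(2 * (σ + θ * I)) by push_cast; ring] at this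
      exact this)
  have hI : ∀ m : ℕ, m ≠ n → ∫ θ in (-Real.pi)..Real.pi, (cubicPartition m : ℂ) *
      cexp (-(σ + θ * I)) ^ m * cexp (n * (σ + θ * I)) = 0 := by
    intro m hm
    have : ∀ θ : ℝ, (cubicPartition m : ℂ) * cexp (-(σ + θ * I)) ^ m * cexp (n * (σ + θ * I)) =
       (cubicPartition m : ℂ) * cexp ((n - m) * σ) * cexp (((n:ℂ) - m) * I * θ) := by
      intro θ
      rw [← Complex.exp_nat_mul, mul_assoc, mul_assoc, ← Complex.exp_add, ← Complex.exp_add]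
      ring_nf
    simp_rw [this]
    rw [intervalIntegral.integral_const_mul, integral_exp_mul_complex]
    · have : cexp (((n:ℂ) - m) * I * (Real.pi : ℝ)) = cexp (((n:ℂ) - m) * I * ((-Real.pi : ℝ))) := by
        rw [Complex.exp_eq_exp_iff_exists_int]
        refine ⟨(n : ℤ) - m, ?_⟩
        push_cast
        ring
      rw [this]; simp
    · apply mul_ne_zero _ I_ne_zero
      rw [sub_ne_zero]
      exact_mod_cast hm.symm
  have H2 := hasSum_single n hI
  rw [H.unique H2]
  have : ∀ θ : ℝ, (cubicPartition n : ℂ) * cexp (-(σ + θ * I)) ^ n * cexp (n * (σ + θ * I)) =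
       (cubicPartition n : ℂ) := by
    intro θ
    rw [← Complex.exp_nat_mul, mul_assoc, ← Complex.exp_add]
    ring_nf
    simp
  simp_rw [this]
  rw [intervalIntegral.integral_const]
  rw [Complex.real_smul]
  push_cast
  ring

open Complex in
lemma minor_aux {σ θ : ℝ} (h0 : 0 < σ) (h1 : σ ≤ 1 / 2) (h2 : σ ≤ |θ|) (h3 : |θ| ≤ Real.pi) :
    (cexp (-(σ + θ * I)) / (1 - cexp (-(σ + θ * I)))).re -
      ‖cexp (-(σ + θ * I))‖ / (1 - ‖cexp (-(σ + θ * I))‖) ≤ -(1 / (25 * σ)) := by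
  have hn : ‖cexp (-(σ + θ * I))‖ = Real.exp (-σ) := by rw [Complex.norm_exp]; simp
  have hD : ‖1 - cexp (-(σ + θ * I))‖ ^ 2 = 1 - 2 * Real.exp (-σ) * Real.cos θ + Real.exp (-σ) ^ 2 := by
    rw [← Complex.normSq_eq_norm_sq, Complex.normSq_apply]
    simp only [Complex.sub_re, Complex.sub_im, Complex.exp_re, Complex.exp_im, Complex.one_re,
      Complex.one_im]
    simp
    nlinarith [Real.sin_sq_add_cos_sq θ]
  refine (sub_le_sub_right (Complex.re_le_norm _) _).trans ?_
  rw [norm_div, hn]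
  set r := Real.exp (-σ) with hrdef
  set D := ‖1 - cexp (-(σ + θ * I))‖
  have hr1 : 1 - σ ≤ r := by have := Real.add_one_le_exp (-σ); linarith
  have hr2 : r < 1 := by rw [hrdef]; simpa using h0
  have hcos := Real.cos_le_one_sub_mul_cos_sq h3
  have hD0 : 0 ≤ D := norm_nonneg _
  have hpi : Real.pi ^ 2 ≤ 10 := by
    have := Real.pi_lt_d2
    have := Real.pi_pos
    nlinarith
  have hθ : σ ^ 2 ≤ θ ^ 2 := by rw [← sq_abs θ]; exact pow_le_pow_left₀ h0.le h2 2
  have hc2 : Real.cos θ ≤ 1 - σ ^ 2 / 5 := by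
    have : (1:ℝ) / 5 ≤ 2 / Real.pi ^ 2 := by
      rw [div_le_div_iff₀ (by norm_num) (by positivity)]; linarith
    nlinarith [sq_nonneg θ]
  have hD2 : (109 / 100 * (1 - r)) ^ 2 ≤ D ^ 2 := by
    rw [hD]
    have hr3 : (1 - r) ^ 2 ≤ σ ^ 2 := pow_le_pow_left₀ (by linarith) (by linarith) 2
    have : 2 * r * Real.cos θ ≤ 2 * r * (1 - σ ^ 2 / 5) := by
      apply mul_le_mul_of_nonneg_left hc2; linarith
    nlinarith [sq_nonneg σ]
  have hD3 : 109 / 100 * (1 - r) ≤ D := (sq_le_sq₀ (by linarith) hD0).mp hD2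
  have hA : r / D ≤ r / (109 / 100 * (1 - r)) := by
    apply div_le_div_of_nonneg_left (by linarith) (by linarith) hD3
  have hB : r / (109 / 100 * (1 - r)) = 100 / 109 * (r / (1 - r)) := by
    have : 1 - r ≠ 0 := by linarith
    field_simp
  have hC : 1 / (2 * σ) ≤ r / (1 - r) := by
    rw [div_le_div_iff₀ (by linarith) (by linarith)]
    nlinarith
  have hE : 1 / (25 * σ) = 2 / 25 * (1 / (2 * σ)) := by field_simp
  have hF : 0 < 1 / (2 * σ) := by positivity
  rw [hE]
  linarith

lemma re_div_s {σ θ : ℝ} (h0 : 0 < σ) (a : ℝ) :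
    ((a : ℂ) / (σ + θ * Complex.I)).re = a * (σ / (σ ^ 2 + θ ^ 2)) := by
  rw [div_eq_mul_inv, Complex.re_ofReal_mul, Complex.inv_re, Complex.normSq_apply]
  simp
  left
  ring

lemma norm_exp_div {σ θ : ℝ} (h0 : 0 < σ) (h1 : |θ| ≤ σ) {a : ℝ} (ha : 0 ≤ a) :
    ‖Complex.exp (-((a : ℂ) / (σ + θ * Complex.I)))‖ ≤ Real.exp (-(a / (2 * σ))) := by
  rw [Complex.norm_exp, Complex.neg_re, re_div_s h0]
  apply Real.exp_le_exp.mpr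
  apply neg_le_neg
  rw [div_eq_mul_inv]
  apply mul_le_mul_of_nonneg_left _ ha
  have : θ ^ 2 ≤ σ ^ 2 := by rw [← sq_abs θ]; exact pow_le_pow_left₀ (abs_nonneg _) h1 2
  rw [inv_eq_one_div, div_le_div_iff₀ (by positivity) (by positivity)]
  nlinarith

lemma exp_small_tendsto {a : ℝ} (ha : 0 < a) :
    Tendsto (fun σ : ℝ => Real.exp (-(a / (2 * σ)))) (𝓝[>] 0) (𝓝 0) := by
  apply Real.tendsto_exp_neg_atTop_nhds_zero.comp
  have := (tendsto_inv_nhdsGT_zero (𝕜 := ℝ)).const_mul_atTop (show 0 < a / 2 by positivity)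
  refine this.congr ?_
  intro x
  rw [div_mul_eq_div_div, div_eq_mul_inv (a / 2)]

lemma cubF_major : ∃ σ₀ > 0, ∀ σ θ : ℝ, 0 < σ → σ ≤ σ₀ → |θ| ≤ σ →
    ‖cubF (σ + θ * Complex.I)‖ ≤ 4 * σ *
      Real.exp (Real.pi ^ 2 / 4 * (σ / (σ ^ 2 + θ ^ 2))) := by
  obtain ⟨δ, hδ, H⟩ := eulerE_inv_near
  have hpi := Real.pi_pos
  have e1 := (exp_small_tendsto (a := 4 * Real.pi ^ 2) (by positivity)).eventually (gt_mem_nhds hδ)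
  have e2 := (exp_small_tendsto (a := 2 * Real.pi ^ 2) (by positivity)).eventually (gt_mem_nhds hδ)
  obtain ⟨ε, hε, H2⟩ := mem_nhdsGT_iff_exists_Ioc_subset.mp (e1.and e2)
  refine ⟨ε, hε, ?_⟩
  intro σ θ h0 h1 h2
  obtain ⟨k1, k2⟩ := H2 ⟨h0, h1⟩
  have hre : 0 < ((σ : ℂ) + θ * Complex.I).re := by simpa using h0
  rw [cubF_modular hre, norm_mul, norm_mul, norm_mul, norm_mul]
  have b1 : ‖Complex.exp (-((σ : ℂ) + θ * Complex.I) / 8)‖ ≤ 1 := by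
    rw [Complex.norm_exp, Real.exp_le_one_iff,
      show -((σ : ℂ) + θ * Complex.I) / 8 = ((-1/8 : ℝ) : ℂ) * (σ + θ * Complex.I) by
        push_cast; ring, Complex.re_ofReal_mul]
    nlinarith
  have b2 : ‖((Real.sqrt 2 : ℝ) : ℂ) * (σ + θ * Complex.I) / (2 * Real.pi)‖ ≤ σ := by
    rw [norm_div, norm_mul, Complex.norm_real, Real.norm_of_nonneg (Real.sqrt_nonneg _)]
    have c1 : ‖(σ : ℂ) + θ * Complex.I‖ ≤ 2 * σ := by
      refine (norm_add_le _ _).trans ?_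
      rw [norm_mul, Complex.norm_I, Complex.norm_real, Complex.norm_real,
        Real.norm_of_nonneg h0.le, Real.norm_eq_abs]
      linarith
    have c2 : ‖(2 * Real.pi : ℂ)‖ = 2 * Real.pi := by
      simp [abs_of_pos hpi]
    have c3 : Real.sqrt 2 ≤ 2 := by
      rw [Real.sqrt_le_left (by norm_num)]; norm_num
    have c4 := Real.pi_gt_three
    rw [c2, div_le_iff₀ (by positivity)]
    have := mul_le_mul c3 c1 (norm_nonneg _) (by norm_num)
    nlinarith
  have b3 : ‖Complex.exp ((Real.pi : ℂ) ^ 2 / (4 * (σ + θ * Complex.I)))‖ =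
      Real.exp (Real.pi ^ 2 / 4 * (σ / (σ ^ 2 + θ ^ 2))) := by
    rw [Complex.norm_exp, ← re_div_s h0]
    push_cast
    rw [div_div]
  have b4 := H _ (lt_of_le_of_lt (norm_exp_div h0 h2 (a := 4 * Real.pi ^ 2) (by positivity)) k1)
  have b5 := H _ (lt_of_le_of_lt (norm_exp_div h0 h2 (a := 2 * Real.pi ^ 2) (by positivity)) k2)
  push_cast at b4 b5
  rw [b3]
  have := mul_le_mul (mul_le_mul_of_nonneg_right (mul_le_mul b1 b2 (norm_nonneg _) zero_le_one) (Real.exp_pos (Real.pi ^ 2 / 4 * (σ / (σ ^ 2 + θ ^ 2)))).le) (mul_le_mul b4 b5 (norm_nonneg _) zero_le_two) (by positivity) (by positivity)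
  refine this.trans (le_of_eq ?_)
  ring

lemma cubF_minor : ∃ σ₀ > 0, ∀ σ θ : ℝ, 0 < σ → σ ≤ σ₀ → σ ≤ |θ| → |θ| ≤ Real.pi →
    ‖cubF (σ + θ * Complex.I)‖ ≤ 4 * σ *
      Real.exp (Real.pi ^ 2 / (4 * σ) - 1 / (25 * σ)) := by
  obtain ⟨σ₀, hσ₀, H⟩ := cubF_major
  refine ⟨min σ₀ (1/2), by positivity, ?_⟩
  intro σ θ h0 h1 h2 h3
  have hA := H σ 0 h0 (h1.trans (min_le_left _ _)) (by simpa using h0.le)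
  have hB := minor_aux h0 (h1.trans (min_le_right _ _)) h2 h3
  have hn : ‖Complex.exp (-(σ + θ * Complex.I))‖ = Real.exp (-σ) := by
    rw [Complex.norm_exp]; simp
  have hn2 : ‖Complex.exp (-(2 * (σ + θ * Complex.I)))‖ = Real.exp (-(2 * σ)) := by
    rw [Complex.norm_exp]; simp
  have c1 := euler_inv_bound (q := Complex.exp (-(σ + θ * Complex.I))) (by
    rw [hn]; simpa using h0)
  have c2 := euler_inv_bound' (q := Complex.exp (-(2 * (σ + θ * Complex.I)))) (by
    rw [hn2]; simpa using h0)
  have c3 : ‖cubF (σ + θ * Complex.I)‖ ≤ ‖cubF (σ + (0:ℝ) * Complex.I)‖ * Real.exp (-(1 / (25 * σ))) := by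
    unfold cubF
    rw [norm_mul, norm_mul]
    rw [hn2] at c2
    have c4 := c1.trans (mul_le_mul_of_nonneg_left (Real.exp_le_exp.mpr hB) (norm_nonneg _))
    rw [hn] at c4
    refine (mul_le_mul c4 c2 (norm_nonneg _) (by positivity)).trans (le_of_eq ?_)
    push_cast
    simp only [zero_mul, add_zero]
    ring
  refine c3.trans ((mul_le_mul_of_nonneg_right hA (Real.exp_pos _).le).trans (le_of_eq ?_))
  rw [mul_assoc, ← Real.exp_add]
  congr 2
  field_simp
  ring

noncomputable def cubS (y u : ℝ) : ℂ :=
  ((Real.pi / (2 * y ^ 2) : ℝ) : ℂ) + ((u / y ^ 3 : ℝ) : ℂ) * Complex.I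

noncomputable def cubG (y u : ℝ) : ℂ :=
  ((4 / Real.pi * y ^ 2 : ℝ) : ℂ) * (cubF (cubS y u) * Complex.exp ((y : ℂ) ^ 4 * cubS y u)) *
    Complex.exp (-(Real.pi * y ^ 2))

lemma cubG_norm {y : ℝ} (hy : 0 < y) (u : ℝ) : ‖cubG y u‖ =
    4 / Real.pi * y ^ 2 * ‖cubF (cubS y u)‖ * Real.exp (-(Real.pi * y ^ 2 / 2)) := by
  have hpi := Real.pi_pos
  unfold cubG
  rw [norm_mul, norm_mul, norm_mul, Complex.norm_real, Real.norm_of_nonneg (by positivity),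
    Complex.norm_exp, Complex.norm_exp]
  have e1 : ((y : ℂ) ^ 4 * cubS y u).re = Real.pi * y ^ 2 / 2 := by
    rw [← Complex.ofReal_pow, Complex.re_ofReal_mul]
    unfold cubS
    simp only [Complex.add_re, Complex.ofReal_re, Complex.re_ofReal_mul, Complex.I_re]
    field_simp
    ring
  have e2 : (-((Real.pi : ℂ) * (y : ℂ) ^ 2)).re = -(Real.pi * y ^ 2) := by
    rw [← Complex.ofReal_pow, ← Complex.ofReal_mul, ← Complex.ofReal_neg, Complex.ofReal_re]
  rw [e1, e2, mul_assoc, mul_assoc, mul_assoc, ← Real.exp_add]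
  ring_nf

lemma cubG_bound : ∃ K y₀ : ℝ, 0 < y₀ ∧ ∀ y u : ℝ, y₀ ≤ y → |u| ≤ Real.pi * y ^ 3 →
    ‖cubG y u‖ ≤ K * (1 + u ^ 2)⁻¹ := by
  have hpi := Real.pi_pos
  obtain ⟨σ₁, hσ₁, H1⟩ := cubF_major
  obtain ⟨σ₂, hσ₂, H2⟩ := cubF_minor
  set c : ℝ := 8 / (6 * 15625 * Real.pi ^ 5) with hc
  have hcpos : 0 < c := by positivity
  have hc1 : c ≤ 1 := by
    rw [hc, div_le_one (by positivity)]
    have : 1 ≤ Real.pi ^ 5 := one_le_pow₀ (by linarith [Real.pi_gt_three])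
    nlinarith
  have hev : ∀ᶠ y : ℝ in atTop, Real.pi / (2 * y ^ 2) ≤ min σ₁ σ₂ := by
    have : Tendsto (fun y : ℝ => Real.pi / (2 * y ^ 2)) atTop (𝓝 0) := by
      apply Tendsto.div_atTop tendsto_const_nhds
      exact (tendsto_pow_atTop (by norm_num)).const_mul_atTop (by norm_num)
    exact this.eventually (eventually_le_nhds (by positivity))
  obtain ⟨y₁, hy₁⟩ := eventually_atTop.mp hev
  refine ⟨8 * 4 + 8 * (2 / c), max y₁ 1, by positivity, ?_⟩
  intro y u hy hu
  have hy0 : 0 < y := lt_of_lt_of_le one_pos ((le_max_right _ _).trans hy)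
  have hσ := hy₁ y ((le_max_left _ _).trans hy)
  have hu0 : 0 < 1 + u ^ 2 := by positivity
  rw [cubG_norm hy0]
  have hσpos : 0 < Real.pi / (2 * y ^ 2) := by positivity
  have hθ : |u / y ^ 3| = |u| / y ^ 3 := by rw [abs_div, abs_of_pos (by positivity : 0 < y ^ 3)]
  have pre : 4 / Real.pi * y ^ 2 * (4 * (Real.pi / (2 * y ^ 2))) = 8 := by
    field_simp; norm_num
  have gen : ∀ X : ℝ, ‖cubF (cubS y u)‖ ≤ 4 * (Real.pi / (2 * y ^ 2)) * Real.exp X →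
      4 / Real.pi * y ^ 2 * ‖cubF (cubS y u)‖ * Real.exp (-(Real.pi * y ^ 2 / 2)) ≤
        8 * Real.exp (X - Real.pi * y ^ 2 / 2) := by
    intro X hX
    have : 4 / Real.pi * y ^ 2 * ‖cubF (cubS y u)‖ ≤ 8 * Real.exp X := by
      rw [← pre, mul_assoc]
      rw [mul_assoc (4 / Real.pi * y ^ 2) , mul_assoc (4 / Real.pi) (y ^ 2) (4 * _ * _)]
      have h := mul_le_mul_of_nonneg_left hX (by positivity : 0 ≤ 4 / Real.pi * y ^ 2)
      rw [mul_assoc, mul_assoc (4 / Real.pi)] at h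
      exact h
    rw [sub_eq_add_neg, Real.exp_add, ← mul_assoc]
    exact mul_le_mul_of_nonneg_right this (Real.exp_pos _).le
  rw [add_mul]
  by_cases hcase : |u / y ^ 3| ≤ Real.pi / (2 * y ^ 2)
  · have h := gen _ (H1 _ _ hσpos (hσ.trans (min_le_left _ _)) hcase)
    refine h.trans ?_
    have hu2 : u ^ 2 ≤ (Real.pi * y / 2) ^ 2 := by
      rw [hθ, div_le_div_iff₀ (by positivity) (by positivity)] at hcase
      rw [← sq_abs u]
      apply pow_le_pow_left₀ (abs_nonneg _)
      have : y ^ 2 * (2 * |u|) ≤ y ^ 2 * (Real.pi * y) := by nlinarith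
      have := le_of_mul_le_mul_left this (by positivity)
      linarith
    have hexp : Real.pi ^ 2 / 4 * (Real.pi / (2 * y ^ 2) / ((Real.pi / (2 * y ^ 2)) ^ 2 + (u / y ^ 3) ^ 2)) - Real.pi * y ^ 2 / 2 ≤ -(u ^ 2 / Real.pi) := by
      have e : Real.pi / (2 * y ^ 2) / ((Real.pi / (2 * y ^ 2)) ^ 2 + (u / y ^ 3) ^ 2) = 
        2 * Real.pi * y ^ 4 / (Real.pi ^ 2 * y ^ 2 + 4 * u ^ 2) := by
        field_simp
        ring
      rw [e, sub_le_iff_le_add, ← mul_div_assoc, div_le_iff₀ (by positivity)]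
      have e2 : (-(u ^ 2 / Real.pi) + Real.pi * y ^ 2 / 2) * (Real.pi ^ 2 * y ^ 2 + 4 * u ^ 2) =
        Real.pi ^ 2 / 4 * (2 * Real.pi * y ^ 4) + u ^ 2 / Real.pi * (Real.pi ^ 2 * y ^ 2 - 4 * u ^ 2) := by
        field_simp
        ring
      rw [e2]
      have : 0 ≤ u ^ 2 / Real.pi * (Real.pi ^ 2 * y ^ 2 - 4 * u ^ 2) := by
        apply mul_nonneg (by positivity); nlinarith
      linarith
    have hfin : Real.exp (-(u ^ 2 / Real.pi)) ≤ 4 * (1 + u ^ 2)⁻¹ := by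
      rw [Real.exp_neg, ← div_eq_mul_inv, inv_eq_one_div, div_le_div_iff₀ (Real.exp_pos _) hu0]
      have h1 := Real.add_one_le_exp (u ^ 2 / Real.pi)
      have h2 : u ^ 2 / 4 ≤ u ^ 2 / Real.pi :=
        div_le_div_of_nonneg_left (by positivity) hpi Real.pi_le_four
      linarith
    have h5 := (Real.exp_le_exp.mpr hexp).trans hfin
    have : 0 ≤ 8 * (2 / c) * (1 + u ^ 2)⁻¹ := by positivity
    linarith
  · have hle : |u / y ^ 3| ≤ Real.pi := by rw [hθ, div_le_iff₀ (by positivity)]; exact hu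
    have h := gen _ (H2 _ _ hσpos (hσ.trans (min_le_right _ _)) (not_le.mp hcase).le hle)
    refine h.trans ?_
    have hexp : Real.pi ^ 2 / (4 * (Real.pi / (2 * y ^ 2))) - 1 / (25 * (Real.pi / (2 * y ^ 2)))
        - Real.pi * y ^ 2 / 2 = -(2 * y ^ 2 / (25 * Real.pi)) := by
      field_simp
      ring
    rw [hexp]
    have hfin : Real.exp (-(2 * y ^ 2 / (25 * Real.pi))) ≤ 2 / c * (1 + u ^ 2)⁻¹ := by
      rw [Real.exp_neg, ← div_eq_mul_inv, div_div, inv_eq_one_div,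
        div_le_div_iff₀ (Real.exp_pos _) (by positivity)]
      have h1 := Real.pow_div_factorial_le_exp (x := 2 * y ^ 2 / (25 * Real.pi)) (by positivity) 3
      have h2 : 1 ≤ Real.exp (2 * y ^ 2 / (25 * Real.pi)) := Real.one_le_exp (by positivity)
      have h3 : u ^ 2 ≤ Real.pi ^ 2 * y ^ 6 := by
        rw [← sq_abs u]
        refine (pow_le_pow_left₀ (abs_nonneg _) hu 2).trans (le_of_eq (by ring))
      have h4 : c * (Real.pi ^ 2 * y ^ 6) = (2 * y ^ 2 / (25 * Real.pi)) ^ 3 / (Nat.factorial 3 : ℕ) := by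
        rw [hc, show Nat.factorial 3 = 6 from rfl]
        push_cast
        field_simp
        norm_num
      have h5 := mul_le_mul_of_nonneg_left h3 hcpos.le
      linarith
    have : 0 ≤ 8 * 4 * (1 + u ^ 2)⁻¹ := by positivity
    linarith


lemma cubS_re {y : ℝ} (hy : 0 < y) (u : ℝ) : 0 < (cubS y u).re := by
  have hpi := Real.pi_pos
  have : (cubS y u).re = Real.pi / (2 * y ^ 2) := by
    unfold cubS
    rw [Complex.add_re, Complex.ofReal_re, Complex.re_ofReal_mul]; simp
  rw [this]; positivity

open Complex in
lemma cubG_eq {y : ℝ} (hy : 0 < y) (u : ℝ) : cubG y u =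
    cexp (-cubS y u / 8) * (((4 / Real.pi * (Real.sqrt 2 / (2 * Real.pi)) : ℝ) : ℂ) *
      (Real.pi / 2 + u * (y : ℂ)⁻¹ * I)) *
      cexp (-((u : ℂ) ^ 2 / (Real.pi / 2 + u * (y : ℂ)⁻¹ * I))) *
      ((eulerE (cexp (-(4 * Real.pi ^ 2 / cubS y u))))⁻¹ *
        (eulerE (cexp (-(2 * Real.pi ^ 2 / cubS y u))))⁻¹) := by
  have hpi : (Real.pi : ℂ) ≠ 0 := by exact_mod_cast Real.pi_ne_zero
  have hyc : (y : ℂ) ≠ 0 := by exact_mod_cast hy.ne'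
  have hre := cubS_re hy u
  have hs0 : cubS y u ≠ 0 := by intro h; rw [h] at hre; simp at hre
  have hw : (Real.pi / 2 + u * (y : ℂ)⁻¹ * I) = (y : ℂ) ^ 2 * cubS y u := by
    unfold cubS; push_cast; field_simp
  have hw' : ((y : ℂ) ^ 2 * cubS y u) = Real.pi / 2 + u * (y : ℂ)⁻¹ * I := hw.symm
  rw [cubG, cubF_modular hre, hw]
  have he : -((u : ℂ) ^ 2 / ((y : ℂ) ^ 2 * cubS y u)) = Real.pi ^ 2 / (4 * cubS y u) +
      (y : ℂ) ^ 4 * cubS y u + -(Real.pi * (y : ℂ) ^ 2) := by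
    have h2 : (u : ℂ) * I = y * ((y : ℂ) ^ 2 * cubS y u - Real.pi / 2) := by
      rw [hw']; field_simp; ring
    have h3 : (u : ℂ) ^ 2 = - (y * ((y : ℂ) ^ 2 * cubS y u - Real.pi / 2)) ^ 2 := by
      rw [← h2, mul_pow, I_sq]; ring
    rw [h3]; field_simp; ring
  rw [he, Complex.exp_add, Complex.exp_add]
  push_cast
  ring

open Complex in
lemma cubS_tendsto (u : ℝ) : Tendsto (fun y => cubS y u) atTop (𝓝 0) := by
  have h1 : Tendsto (fun y : ℝ => ((y⁻¹ : ℝ) : ℂ)) atTop (𝓝 0) := by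
    have := (continuous_ofReal.tendsto 0).comp tendsto_inv_atTop_zero
    simpa [Function.comp_def] using this
  have h2 : Tendsto (fun y : ℝ => (Real.pi / 2 : ℂ) * ((y⁻¹ : ℝ) : ℂ) ^ 2
      + u * ((y⁻¹ : ℝ) : ℂ) ^ 3 * I) atTop (𝓝 0) := by
    have := ((h1.pow 2).const_mul (Real.pi / 2 : ℂ)).add (((h1.pow 3).const_mul (u : ℂ)).mul_const I)
    simpa using this
  refine h2.congr ?_
  intro y
  unfold cubS; push_cast
  rw [div_mul_eq_div_div, div_eq_mul_inv _ ((y : ℂ) ^ 2), div_eq_mul_inv (u : ℂ), inv_pow, inv_pow]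

open Complex in
lemma cubE_tendsto (u : ℝ) {a : ℝ} (ha : 0 < a) :
    Tendsto (fun y => (eulerE (cexp (-((a : ℂ) / cubS y u))))⁻¹) atTop (𝓝 1) := by
  have hpi := Real.pi_pos
  refine eulerE_inv_tendsto.comp ?_
  have hσ : Tendsto (fun y : ℝ => Real.pi / (2 * y ^ 2)) atTop (𝓝[>] 0) := by
    refine tendsto_nhdsWithin_iff.mpr ⟨?_, ?_⟩
    · apply Tendsto.const_div_atTop
      exact (tendsto_pow_atTop (two_ne_zero)).const_mul_atTop two_pos
    · filter_upwards [eventually_gt_atTop 0] with y hy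
      have : 0 < Real.pi / (2 * y ^ 2) := by positivity
      exact this
  have h := (exp_small_tendsto ha).comp hσ
  refine squeeze_zero_norm' ?_ h
  filter_upwards [eventually_gt_atTop 0, eventually_ge_atTop |u|] with y hy hyu
  refine norm_exp_div (by positivity) ?_ ha.le
  rw [abs_div, abs_of_pos (show 0 < y ^ 3 by positivity),
    div_le_div_iff₀ (by positivity) (by positivity)]
  have h3 : (3:ℝ) < Real.pi := Real.pi_gt_three
  have h4 : |u| * (2 * y ^ 2) ≤ y * (2 * y ^ 2) := by gcongr
  have : 0 < y ^ 3 := by positivity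
  nlinarith

open Complex in
lemma cubG_tendsto (u : ℝ) : Tendsto (fun y => cubG y u) atTop
    (𝓝 ((Real.sqrt 2 / Real.pi * Real.exp (-(2 / Real.pi) * u ^ 2) : ℝ) : ℂ)) := by
  have hpi : (Real.pi : ℂ) ≠ 0 := by exact_mod_cast Real.pi_ne_zero
  have h1 : Tendsto (fun y : ℝ => (y : ℂ)⁻¹) atTop (𝓝 0) := by
    have := (continuous_ofReal.tendsto 0).comp tendsto_inv_atTop_zero
    simpa [Function.comp_def] using this
  have hw : Tendsto (fun y : ℝ => (Real.pi / 2 + u * (y : ℂ)⁻¹ * I : ℂ)) atTop (𝓝 (Real.pi / 2)) := by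
    have := ((h1.const_mul (u : ℂ)).mul_const I).const_add (Real.pi / 2 : ℂ)
    simpa using this
  have k1 : Tendsto (fun y => cexp (-cubS y u / 8)) atTop (𝓝 1) := by
    have := (Complex.continuous_exp.tendsto _).comp (((cubS_tendsto u).neg).div_const 8)
    simpa [Function.comp_def] using this
  have k2 := hw.const_mul ((4 / Real.pi * (Real.sqrt 2 / (2 * Real.pi)) : ℝ) : ℂ)
  have k3 := (Complex.continuous_exp.tendsto _).comp
    (((tendsto_const_nhds (x := (u : ℂ) ^ 2)).div hw (div_ne_zero hpi two_ne_zero)).neg)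
  have k4 := cubE_tendsto u (a := 4 * Real.pi ^ 2) (by positivity)
  have k5 := cubE_tendsto u (a := 2 * Real.pi ^ 2) (by positivity)
  have := ((k1.mul k2).mul k3).mul (k4.mul k5)
  push_cast at this
  have e : (1 : ℂ) * (4 / Real.pi * ((Real.sqrt 2 : ℝ) / (2 * Real.pi)) * (Real.pi / 2)) *
      cexp (-((u : ℂ) ^ 2 / (Real.pi / 2))) * (1 * 1) =
      ((Real.sqrt 2 / Real.pi * Real.exp (-(2 / Real.pi) * u ^ 2) : ℝ) : ℂ) := by
    push_cast
    have : -((u : ℂ) ^ 2 / (Real.pi / 2)) = -(2 / Real.pi) * u ^ 2 := by field_simp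
    rw [this]; field_simp; ring
  rw [e] at this
  refine this.congr' ?_
  filter_upwards [eventually_gt_atTop 0] with y hy
  rw [cubG_eq hy]
  push_cast
  rfl

open Complex in
lemma cubF_contAt {s : ℂ} (hs : 0 < s.re) : ContinuousAt cubF s := by
  have n1 : ‖cexp (-s)‖ < 1 := by rw [Complex.norm_exp]; simpa using hs
  have n2 : ‖cexp (-(2 * s))‖ < 1 := by rw [Complex.norm_exp]; simpa using hs
  unfold cubF
  refine ContinuousAt.mul (ContinuousAt.inv₀ ?_ (eulerE_ne_zero n1))
    (ContinuousAt.inv₀ ?_ (eulerE_ne_zero n2))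
  · exact ContinuousAt.comp (f := fun s => cexp (-s)) (eulerE_contDiff n1) (by fun_prop)
  · exact ContinuousAt.comp (f := fun s => cexp (-(2 * s))) (eulerE_contDiff n2) (by fun_prop)

lemma cubG_cont {y : ℝ} (hy : 0 < y) : Continuous (cubG y) := by
  have hc : Continuous (cubS y) := by unfold cubS; fun_prop
  have hF : Continuous (fun u => cubF (cubS y u)) := by
    rw [continuous_iff_continuousAt]
    intro u
    exact ContinuousAt.comp (cubF_contAt (cubS_re hy u)) hc.continuousAt
  unfold cubG
  fun_prop

lemma cubG_int_tendsto : Tendsto (fun y : ℝ => ∫ u in (-(Real.pi * y ^ 3))..(Real.pi * y ^ 3), cubG y u)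
    atTop (𝓝 1) := by
  have hpi := Real.pi_pos
  obtain ⟨K, y₀, hy₀, H⟩ := cubG_bound
  have hD : Tendsto (fun y : ℝ => ∫ u, (Set.Ioc (-(Real.pi * y ^ 3)) (Real.pi * y ^ 3)).indicator
      (cubG y) u) atTop
      (𝓝 (∫ u : ℝ, ((Real.sqrt 2 / Real.pi * Real.exp (-(2 / Real.pi) * u ^ 2) : ℝ) : ℂ))) := by
    refine MeasureTheory.tendsto_integral_filter_of_dominated_convergence
      (fun u => |K| * (1 + u ^ 2)⁻¹) ?_ ?_ ?_ ?_
    · filter_upwards [eventually_gt_atTop 0] with y hy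
      exact ((cubG_cont hy).aestronglyMeasurable).indicator measurableSet_Ioc
    · filter_upwards [eventually_ge_atTop y₀] with y hy
      refine Eventually.of_forall fun u => ?_
      by_cases hu : u ∈ Set.Ioc (-(Real.pi * y ^ 3)) (Real.pi * y ^ 3)
      · rw [Set.indicator_of_mem hu]
        refine (H y u hy (abs_le.mpr ⟨hu.1.le, hu.2⟩)).trans ?_
        exact mul_le_mul_of_nonneg_right (le_abs_self K) (by positivity)
      · rw [Set.indicator_of_notMem hu, norm_zero]; positivity
    · exact integrable_inv_one_add_sq.const_mul _
    · refine Eventually.of_forall fun u => ?_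
      refine (cubG_tendsto u).congr' ?_
      filter_upwards [eventually_ge_atTop 1, eventually_gt_atTop |u|] with y hy hyu
      rw [Set.indicator_of_mem]
      have h3 : (3:ℝ) < Real.pi := Real.pi_gt_three
      have : y ≤ y ^ 3 := le_self_pow₀ hy (by norm_num)
      have h4 : |u| < Real.pi * y ^ 3 := by nlinarith
      exact ⟨(abs_lt.mp h4).1, (abs_lt.mp h4).2.le⟩
  have hval : (∫ u : ℝ, ((Real.sqrt 2 / Real.pi * Real.exp (-(2 / Real.pi) * u ^ 2) : ℝ) : ℂ)) = 1 := by
    rw [integral_complex_ofReal, MeasureTheory.integral_const_mul, integral_gaussian]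
    have : Real.pi / (2 / Real.pi) = Real.pi ^ 2 / 2 := by field_simp
    rw [this, Real.sqrt_div (by positivity), Real.sqrt_sq hpi.le]
    have : Real.sqrt 2 ≠ 0 := by positivity
    norm_cast
    field_simp
  rw [hval] at hD
  refine hD.congr' ?_
  filter_upwards [eventually_gt_atTop 0] with y hy
  have : 0 < Real.pi * y ^ 3 := by positivity
  rw [intervalIntegral.integral_of_le (by linarith), MeasureTheory.integral_indicator measurableSet_Ioc]

open Complex in
lemma cubG_int_eq {n : ℕ} {y : ℝ} (hy : 0 < y) (hn : y ^ 4 = n) :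
    ∫ u in (-(Real.pi * y ^ 3))..(Real.pi * y ^ 3), cubG y u =
      ((cubicPartition n / (Real.exp (Real.pi * y ^ 2) / (8 * y ^ 5)) : ℝ) : ℂ) := by
  have hpi := Real.pi_pos
  have hpic : (Real.pi : ℂ) ≠ 0 := by exact_mod_cast Real.pi_ne_zero
  have hyc : (y : ℂ) ≠ 0 := by exact_mod_cast hy.ne'
  have hn' : (y : ℂ) ^ 4 = n := by exact_mod_cast hn
  have hσ : 0 < Real.pi / (2 * y ^ 2) := by positivity
  have hc := cauchy_cubic n hσ
  set f : ℝ → ℂ := fun θ => cubF (((Real.pi / (2 * y ^ 2) : ℝ) : ℂ) + θ * I) *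
    cexp (n * (((Real.pi / (2 * y ^ 2) : ℝ) : ℂ) + θ * I)) with hf
  have hy3 : y ^ 3 ≠ 0 := by positivity
  have hcv := intervalIntegral.integral_comp_div (a := -(Real.pi * y ^ 3)) (b := Real.pi * y ^ 3) f hy3
  rw [show -(Real.pi * y ^ 3) / y ^ 3 = -Real.pi by field_simp,
    show Real.pi * y ^ 3 / y ^ 3 = Real.pi by field_simp, hc] at hcv
  have hG : ∀ u, cubG y u = ((4 / Real.pi * y ^ 2 : ℝ) : ℂ) * cexp (-(Real.pi * y ^ 2)) * f (u / y ^ 3) := by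
    intro u
    rw [cubG, hn', hf]
    simp only [cubS]
    ring
  simp_rw [hG]
  rw [intervalIntegral.integral_const_mul, hcv, Complex.exp_neg, Complex.real_smul]
  push_cast
  have := Complex.exp_ne_zero (Real.pi * (y : ℂ) ^ 2)
  field_simp
  ring

open Real Filter in
/-- `c(n) ~ e^{π√n}/(8 n^{5/4})` as `n → ∞`. -/
theorem cubicPartition_asymptotic :
    Tendsto (fun n : ℕ =>
        (cubicPartition n : ℝ) / (Real.exp (π * Real.sqrt n) / (8 * (n : ℝ) ^ ((5 : ℝ) / 4))))
      atTop (nhds 1) := by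
  have hy : Tendsto (fun n : ℕ => (n : ℝ) ^ ((1 : ℝ) / 4)) atTop atTop :=
    (tendsto_rpow_atTop (by norm_num)).comp tendsto_natCast_atTop_atTop
  have h := (Complex.continuous_re.tendsto _).comp (cubG_int_tendsto.comp hy)
  rw [Complex.one_re] at h
  refine h.congr' ?_
  filter_upwards [eventually_gt_atTop 0] with n hn
  have hn0 : (0 : ℝ) < n := by exact_mod_cast hn
  have hpow : ∀ k : ℕ, ((n : ℝ) ^ ((1 : ℝ) / 4)) ^ k = (n : ℝ) ^ ((k : ℝ) / 4) := by
    intro k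
    rw [← Real.rpow_natCast, ← Real.rpow_mul hn0.le]
    congr 1
    ring
  have h4 : ((n : ℝ) ^ ((1 : ℝ) / 4)) ^ 4 = n := by
    rw [hpow]; norm_num
  have h2 : ((n : ℝ) ^ ((1 : ℝ) / 4)) ^ 2 = Real.sqrt n := by
    rw [hpow, Real.sqrt_eq_rpow]; norm_num
  have h5 : ((n : ℝ) ^ ((1 : ℝ) / 4)) ^ 5 = (n : ℝ) ^ ((5 : ℝ) / 4) := by
    rw [hpow]; norm_num
  have := cubG_int_eq (n := n) (Real.rpow_pos_of_pos hn0 ((1 : ℝ) / 4)) h4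
  simp only [Function.comp_apply]
  rw [this, Complex.ofReal_re, h2, h5]
end

section
/- Let c = 2π√(5/12). There exists a constant C > 0 such that for all positive integers m, n with m ≤ n, π(m,n) ≤ C · e^{c√m}. -/
open Finset

lemma bp_card_bound {S β : Type*} (T : Finset β) (w : β → ℝ) (φ : S → β)
    (hφ : Function.Injective φ) (hT : ∀ s, φ s ∈ T) (hw : ∀ b, 0 ≤ w b) (y : ℝ)
    (hy : ∀ s, y ≤ w (φ s)) : (Nat.card S : ℝ) * y ≤ ∑ b ∈ T, w b := by
  classical
  have hfin : Finite S := by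
    refine Finite.of_injective (fun s => (⟨φ s, hT s⟩ : T)) ?_
    intro s t h
    exact hφ (by simpa using h)
  have := Fintype.ofFinite S
  calc (Nat.card S : ℝ) * y = ∑ s : S, y := by simp [Nat.card_eq_fintype_card]
    _ ≤ ∑ s : S, w (φ s) := Finset.sum_le_sum fun s _ => hy s
    _ = ∑ b ∈ Finset.univ.image φ, w b := by
        rw [Finset.sum_image]; intro a _ b _ h; exact hφ h
    _ ≤ ∑ b ∈ T, w b := by
        apply Finset.sum_le_sum_of_subset_of_nonneg
        · intro b hb
          simp only [Finset.mem_image, Finset.mem_univ, true_and] at hb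
          obtain ⟨s, rfl⟩ := hb
          exact hT s
        · intro b _ _; exact hw b

lemma bp_tel (a b : ℕ → ℕ) (h : SteadilyDecreasing a b) (K : ℕ) :
    ∑ i ∈ range K, ((i+1) * (min (a i) (b i) - max (a (i+1)) (b (i+1)))
      + ((i+1) * (a i - b i) + i * (b i - a i))) + K * max (a K) (b K) = ∑ i ∈ range K, a i := by
  induction K with
  | zero => simp
  | succ K ih =>
    rw [Finset.sum_range_succ, Finset.sum_range_succ, ← ih]
    have hK := h K
    obtain ⟨e, he⟩ := Nat.exists_eq_add_of_le hK
    rw [he, Nat.add_sub_cancel_left]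
    rcases le_total (a K) (b K) with hab | hab
    · rw [min_eq_left hab] at he
      rw [max_eq_right hab]
      obtain ⟨d, hd⟩ := Nat.exists_eq_add_of_le hab
      rw [hd, he]
      generalize max (a (K+1)) (b (K+1)) = M
      have h1 : M + e - (M + e + d) = 0 := by omega
      have h2 : (M + e + d) - (M + e) = d := by omega
      rw [h1, h2]
      ring
    · rw [min_eq_right hab] at he
      rw [max_eq_left hab]
      obtain ⟨d, hd⟩ := Nat.exists_eq_add_of_le hab
      rw [hd, he]
      generalize max (a (K+1)) (b (K+1)) = M
      have h1 : M + e - (M + e + d) = 0 := by omega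
      have h2 : (M + e + d) - (M + e) = d := by omega
      rw [h1, h2]
      ring

lemma bp_sum_ge (p : ℕ →₀ ℕ) (K : ℕ) : ∑ i ∈ range K, p i ≤ p.sum fun _ x => x := by
  classical
  rw [Finsupp.sum_of_support_subset p (s := p.support ∪ range K) Finset.subset_union_left _
    (by simp)]
  exact Finset.sum_le_sum_of_subset Finset.subset_union_right

lemma bp_sum_eq (p : ℕ →₀ ℕ) (K : ℕ) (h : ∀ i, K ≤ i → p i = 0) :
    ∑ i ∈ range K, p i = p.sum fun _ x => x := by
  rw [Finsupp.sum_of_support_subset p (s := range K) _ _ (by simp)]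
  intro i hi
  rw [Finset.mem_range]
  by_contra hc
  exact (Finsupp.mem_support_iff.1 hi) (h i (by omega))

lemma bp_zero (p : ℕ →₀ ℕ) (h : ∀ i, p (i+1) ≤ p i) (m : ℕ)
    (hm : (p.sum fun _ x => x) = m) (i : ℕ) (hi : m ≤ i) : p i = 0 := by
  by_contra hc
  have ha : Antitone p := antitone_nat_of_succ_le h
  have h1 := bp_sum_ge p (i+1)
  have h2 : (range (i+1)).card • 1 ≤ ∑ j ∈ range (i+1), p j := by
    apply Finset.card_nsmul_le_sum
    intro j hj
    have := ha (show j ≤ i by rw [Finset.mem_range] at hj; omega)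
    omega
  simp at h2
  omega

lemma bp_le (p : ℕ →₀ ℕ) (m : ℕ) (hm : (p.sum fun _ x => x) = m) (i : ℕ) : p i ≤ m := by
  have h1 := bp_sum_ge p (i+1)
  rw [Finset.sum_range_succ] at h1
  omega

lemma bp_inj (a b a' b' : ℕ → ℕ) (h : SteadilyDecreasing a b) (h' : SteadilyDecreasing a' b')
    (K : ℕ) (z : a K = 0 ∧ b K = 0 ∧ a' K = 0 ∧ b' K = 0)
    (he : ∀ i < K, min (a i) (b i) - max (a (i+1)) (b (i+1))
      = min (a' i) (b' i) - max (a' (i+1)) (b' (i+1)))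
    (hd : ∀ i < K, (a i : ℤ) - b i = a' i - b' i) (j : ℕ) (hj : j ≤ K) :
    a (K - j) = a' (K - j) ∧ b (K - j) = b' (K - j) := by
  induction j with
  | zero => simp [z]
  | succ j ih =>
    obtain ⟨h1, h2⟩ := ih (by omega)
    have e1 := he (K - (j+1)) (by omega)
    have e2 := hd (K - (j+1)) (by omega)
    have e3 := h (K - (j+1))
    have e4 := h' (K - (j+1))
    rw [show K - (j+1) + 1 = K - j by omega] at e1 e3 e4
    rw [← h1, ← h2] at e1 e4
    omega

/-- the abstract weight. -/
noncomputable def bpW (x : ℝ) (m : ℕ) (q : (Fin (m+1) → ℕ) × (Fin m → ℤ)) : ℝ :=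
  (∏ i : Fin (m+1), x ^ (((i:ℕ)+1) * q.1 i)) *
    ∏ j : Fin m, x ^ (((j:ℕ)+1+1) * (q.2 j).toNat + ((j:ℕ)+1) * (-q.2 j).toNat)

lemma bp_main (m n : ℕ) (x : ℝ) (hx0 : 0 < x) (hx1 : x < 1) :
    (bipartitePi m n : ℝ) * x ^ m ≤
      (∏ i : Fin (m+1), ∑ e ∈ range (m+1), x ^ (((i:ℕ)+1) * e)) *
      ∏ j : Fin m, ∑ d ∈ Finset.Icc (-(m+n:ℤ)) (m+n),
        x ^ (((j:ℕ)+1+1) * d.toNat + ((j:ℕ)+1) * (-d).toNat) := by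
  classical
  rw [Finset.prod_univ_sum, Finset.prod_univ_sum, Finset.sum_mul_sum, ← Finset.sum_product']
  unfold bipartitePi
  refine bp_card_bound _ (bpW x m)
    (fun p : {p : (ℕ →₀ ℕ) × (ℕ →₀ ℕ) //
    (∀ i, p.1 (i + 1) ≤ p.1 i) ∧ (∀ i, p.2 (i + 1) ≤ p.2 i) ∧
    SteadilyDecreasing p.1 p.2 ∧
    (p.1.sum fun _ x => x) = m ∧ (p.2.sum fun _ x => x) = n} =>
      (fun i : Fin (m+1) => min (p.1.1 (i:ℕ)) (p.1.2 (i:ℕ))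
        - max (p.1.1 ((i:ℕ)+1)) (p.1.2 ((i:ℕ)+1)),
      fun j : Fin m => (p.1.1 ((j:ℕ)+1) : ℤ) - p.1.2 ((j:ℕ)+1))) ?_ ?_ ?_ _ ?_
  · rintro ⟨⟨a, b⟩, ha, hb, hs, hm, hn⟩ ⟨⟨a', b'⟩, ha', hb', hs', hm', hn'⟩ h
    simp only [Prod.mk.injEq, funext_iff] at h ha hb hs hm hn ha' hb' hs' hm' hn'
    obtain ⟨h1, h2⟩ := h
    have za := bp_zero a ha m hm
    have za' := bp_zero a' ha' m hm'
    have zb : ∀ i, m + 1 ≤ i → b i = 0 := by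
      intro i hi
      obtain ⟨k, rfl⟩ : ∃ k, i = k + 1 := ⟨i - 1, by omega⟩
      have := hs k
      have := za k (by omega)
      omega
    have zb' : ∀ i, m + 1 ≤ i → b' i = 0 := by
      intro i hi
      obtain ⟨k, rfl⟩ : ∃ k, i = k + 1 := ⟨i - 1, by omega⟩
      have := hs' k
      have := za' k (by omega)
      omega
    have sa := bp_sum_eq a (m+1) (fun i hi => za i (by omega))
    have sa' := bp_sum_eq a' (m+1) (fun i hi => za' i (by omega))
    have sb := bp_sum_eq b (m+1) zb
    have sb' := bp_sum_eq b' (m+1) zb'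
    rw [Finset.sum_range_succ'] at sa sa' sb sb'
    have hd : ∀ i < m, (a (i+1) : ℤ) - b (i+1) = a' (i+1) - b' (i+1) := fun i hi => h2 ⟨i, hi⟩
    have hsum : ∑ i ∈ range m, ((a (i+1) : ℤ) - b (i+1)) =
        ∑ i ∈ range m, ((a' (i+1) : ℤ) - b' (i+1)) :=
      Finset.sum_congr rfl fun i hi => hd i (Finset.mem_range.1 hi)
    rw [Finset.sum_sub_distrib, Finset.sum_sub_distrib] at hsum
    have hd0 : (a 0 : ℤ) - b 0 = a' 0 - b' 0 := by
      zify at sa sa' sb sb' hm hm' hn hn'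
      push_cast at *
      linarith
    have key := bp_inj a b a' b' hs hs' (m+1)
      ⟨za _ (by omega), zb _ (by omega), za' _ (by omega), zb' _ (by omega)⟩
      (fun i hi => h1 ⟨i, hi⟩)
      (by
        intro i hi
        rcases i with _ | i
        · exact hd0
        · exact hd i (by omega))
    have : a = a' ∧ b = b' := by
      constructor
      · ext i
        by_cases hi : i ≤ m + 1
        · have := (key (m+1-i) (by omega)).1
          rwa [show m + 1 - (m + 1 - i) = i by omega] at this
        · rw [za i (by omega), za' i (by omega)]
      · ext i
        by_cases hi : i ≤ m + 1
        · have := (key (m+1-i) (by omega)).2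
          rwa [show m + 1 - (m + 1 - i) = i by omega] at this
        · rw [zb i (by omega), zb' i (by omega)]
    obtain ⟨rfl, rfl⟩ := this
    rfl
  · rintro ⟨⟨a, b⟩, ha, hb, hs, hm, hn⟩
    simp only at ha hb hs hm hn
    simp only [Finset.mem_product, Fintype.mem_piFinset, Finset.mem_range, Finset.mem_Icc]
    refine ⟨fun i => ?_, fun j => ?_⟩
    · have := bp_le a m hm i
      omega
    · have := bp_le a m hm (j+1)
      have := bp_le b n hn (j+1)
      omega
  · intro q
    unfold bpW
    positivity
  · rintro ⟨⟨a, b⟩, ha, hb, hs, hm, hn⟩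
    simp only at ha hb hs hm hn
    unfold bpW
    rw [Finset.prod_pow_eq_pow_sum, Finset.prod_pow_eq_pow_sum, ← pow_add]
    apply pow_le_pow_of_le_one hx0.le hx1.le
    have h1 := bp_tel a b hs (m+1)
    have h2 := bp_sum_ge a (m+1)
    rw [Finset.sum_add_distrib, Finset.sum_range_succ' (fun i => (i+1) * (a i - b i) + i * (b i - a i))] at h1
    simp only [neg_sub, Int.toNat_sub]
    rw [Fin.sum_univ_eq_sum_range (fun i => (i+1) * (min (a i) (b i) - max (a (i+1)) (b (i+1)))),
      Fin.sum_univ_eq_sum_range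
        (fun i => (i+1+1) * (a (i+1) - b (i+1)) + (i+1) * (b (i+1) - a (i+1)))]
    omega

lemma bp_geom (a : ℝ) (h0 : 0 ≤ a) (h1 : a < 1) (N : ℕ) :
    ∑ e ∈ range N, a ^ e ≤ (1 - a)⁻¹ :=
  sum_le_hasSum _ (fun _ _ => by positivity) (hasSum_geometric_of_lt_one h0 h1)

lemma bp_geomZ (x : ℝ) (h0 : 0 < x) (h1 : x < 1) (k : ℕ) (hk : 0 < k) (s : Finset ℤ) :
    ∑ d ∈ s, x ^ ((k+1) * d.toNat + k * (-d).toNat) ≤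
      (1 - x ^ (2*k+1)) * ((1 - x^(k+1))⁻¹ * (1 - x^k)⁻¹) := by
  have ha : x^(k+1) < 1 := pow_lt_one₀ h0.le h1 (by omega)
  have hb : x^k < 1 := pow_lt_one₀ h0.le h1 (by omega)
  have A := hasSum_geometric_of_lt_one (by positivity) ha
  have B := (hasSum_geometric_of_lt_one (by positivity) hb).mul_left (x^k)
  have H : HasSum (fun d : ℤ => x ^ ((k+1) * d.toNat + k * (-d).toNat))
      ((1 - x^(k+1))⁻¹ + x^k * (1 - x^k)⁻¹) := by
    apply HasSum.of_nat_of_neg_add_one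
    · refine Eq.subst (motive := fun f => HasSum f _) (funext fun e => ?_) A
      rw [← pow_mul]
      simp
    · refine Eq.subst (motive := fun f => HasSum f _) (funext fun e => ?_) B
      rw [← pow_mul, ← pow_add]
      congr 1
      have h1 : (-((e:ℤ)+1)).toNat = 0 := by omega
      have h2 : (-(-((e:ℤ)+1))).toNat = e + 1 := by omega
      rw [h1, h2]; ring
  refine (sum_le_hasSum s (fun _ _ => by positivity) H).trans (le_of_eq ?_)
  have : 1 - x^(k+1) ≠ 0 := by linarith
  have : 1 - x^k ≠ 0 := by linarith
  field_simp
  ring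

/-- finite Euler product -/
noncomputable def bpP (K : ℕ) (x : ℝ) : ℝ := ∏ i ∈ range K, (1 - x^(i+1))⁻¹

lemma bp_split (K : ℕ) (x : ℝ) (h0 : 0 < x) (h1 : x < 1) :
    bpP (2*K) x * ∏ i ∈ range K, (1 - x^(2*i+1)) = bpP K (x^2) := by
  unfold bpP
  induction K with
  | zero => simp
  | succ K ih =>
    rw [show 2*(K+1) = 2*K+1+1 by ring, Finset.prod_range_succ, Finset.prod_range_succ,
      Finset.prod_range_succ, Finset.prod_range_succ _ K, ← ih, ← pow_mul]
    have : x^(2*K+1) < 1 := pow_lt_one₀ h0.le h1 (by omega)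
    have : 1 - x^(2*K+1) ≠ 0 := by linarith
    rw [show 2 * (K+1) = 2*K+1+1 by ring]
    field_simp

lemma bp_P_exp (K : ℕ) (t : ℝ) (ht : 0 < t) :
    bpP K (Real.exp (-t)) ≤ Real.exp (Real.pi^2 / 6 / t) := by
  set x := Real.exp (-t) with hx
  have h0 : 0 < x := Real.exp_pos _
  have h1 : x < 1 := by rw [hx, Real.exp_lt_one_iff]; linarith
  have hpos : ∀ i : ℕ, 0 < 1 - x^(i+1) := fun i => by
    have := pow_lt_one₀ h0.le h1 (show i+1 ≠ 0 by omega); linarith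
  have hP : 0 < bpP K x := Finset.prod_pos fun i _ => inv_pos.2 (hpos i)
  rw [← Real.log_le_iff_le_exp hP]
  unfold bpP
  rw [Real.log_prod (fun i _ => (inv_pos.2 (hpos i)).ne')]
  simp only [Real.log_inv]
  have A : HasSum (fun k : ℕ => ∑ i ∈ range K, (x^(i+1))^(k+1)/((k:ℝ)+1))
      (∑ i ∈ range K, -Real.log (1 - x^(i+1))) := by
    apply hasSum_sum
    intro i _
    apply Real.hasSum_pow_div_log_of_abs_lt_one
    rw [abs_of_pos (by positivity)]
    linarith [hpos i]
  have B : HasSum (fun k : ℕ => 1 / ((k+1 : ℕ):ℝ)^2 / t) (Real.pi^2/6/t) := by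
    have := (hasSum_nat_add_iff' 1).2 hasSum_zeta_two
    simp at this
    refine HasSum.div_const ?_ t
    simpa using this
  refine hasSum_le (fun k => ?_) A B
  rw [← Finset.sum_div]
  have hk : (0:ℝ) < k + 1 := by positivity
  have C : ∑ i ∈ range K, (x^(i+1))^(k+1) ≤ 1 / ((k+1) * t) := by
    have hy : x^(k+1) < 1 := by linarith [hpos k]
    have : ∑ i ∈ range K, (x^(i+1))^(k+1) = x^(k+1) * ∑ i ∈ range K, (x^(k+1))^i := by
      rw [Finset.mul_sum]
      refine Finset.sum_congr rfl fun i _ => ?_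
      rw [← pow_mul, ← pow_mul, ← pow_add]; congr 1; ring
    rw [this]
    calc _ ≤ x^(k+1) * (1 - x^(k+1))⁻¹ :=
          mul_le_mul_of_nonneg_left (bp_geom _ (by positivity) hy K) (by positivity)
      _ ≤ 1 / ((k+1)*t) := by
          rw [← div_eq_mul_inv, div_le_div_iff₀ (hpos k) (by positivity)]
          have e1 : x^(k+1) = Real.exp (-((k+1)*t)) := by
            rw [hx, ← Real.exp_nat_mul]; congr 1; push_cast; ring
          have e2 := Real.add_one_le_exp ((k+1)*t)
          have e3 : x^(k+1) * Real.exp ((k+1)*t) = 1 := by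
            rw [e1, ← Real.exp_add]; simp
          have e4 : x^(k+1) * ((k+1)*t + 1) ≤ x^(k+1) * Real.exp ((k+1)*t) :=
            mul_le_mul_of_nonneg_left e2 (by positivity)
          linarith
  calc _ ≤ 1 / ((k+1) * t) / ((k:ℝ)+1) := by gcongr
    _ = _ := by push_cast; field_simp

lemma bp_bound (m n : ℕ) (t : ℝ) (ht : 0 < t) :
    (bipartitePi m n : ℝ) ≤ Real.exp (m * t + 5 * Real.pi^2 / 12 / t) := by
  have hE := bp_P_exp (m+1) t ht
  have hE2 := bp_P_exp (m+1) (2*t) (by linarith)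
  have hxx : Real.exp (-(2*t)) = Real.exp (-t) ^ 2 := by
    rw [← Real.exp_nat_mul]; congr 1; push_cast; ring
  rw [hxx] at hE2
  have hxm : Real.exp (-t) ^ m = (Real.exp (m*t))⁻¹ := by
    rw [← Real.exp_nat_mul, ← Real.exp_neg]; congr 1; ring
  have h0 : 0 < Real.exp (-t) := Real.exp_pos _
  have h1 : Real.exp (-t) < 1 := by rw [Real.exp_lt_one_iff]; linarith
  have hM := bp_main m n _ h0 h1
  rw [hxm] at hM
  generalize Real.exp (-t) = x at *
  have hpos : ∀ i : ℕ, 0 < 1 - x^(i+1) := fun i => by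
    have := pow_lt_one₀ h0.le h1 (show i+1 ≠ 0 by omega); linarith
  have hone : ∀ i : ℕ, 1 ≤ (1 - x^(i+1))⁻¹ := fun i => by
    apply (one_le_inv₀ (hpos i)).2
    have : 0 < x^(i+1) := by positivity
    linarith
  have hPpos : ∀ K, 0 < bpP K x := fun K => Finset.prod_pos fun i _ => inv_pos.2 (hpos i)
  have hmono : Monotone fun K => bpP K x := by
    apply monotone_nat_of_le_succ
    intro K
    simp only [bpP]
    rw [Finset.prod_range_succ]
    exact le_mul_of_one_le_right (hPpos K).le (hone K)
  have F1 : (∏ i : Fin (m+1), ∑ e ∈ range (m+1), x ^ (((i:ℕ)+1) * e)) ≤ bpP (m+1) x := by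
    rw [bpP, ← Fin.prod_univ_eq_prod_range (fun i => (1 - x^(i+1))⁻¹)]
    apply Finset.prod_le_prod
    · intros; positivity
    · intro i _
      simp only [pow_mul]
      exact bp_geom _ (by positivity) (by linarith [hpos i]) _
  have F2 : (∏ j : Fin m, ∑ d ∈ Finset.Icc (-(m+n:ℤ)) (m+n),
        x ^ (((j:ℕ)+1+1) * d.toNat + ((j:ℕ)+1) * (-d).toNat)) ≤
      ∏ j ∈ range m, ((1 - x^(2*(j+1)+1)) * ((1 - x^(j+1+1))⁻¹ * (1 - x^(j+1))⁻¹)) := by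
    rw [← Fin.prod_univ_eq_prod_range
      (fun j => (1 - x^(2*(j+1)+1)) * ((1 - x^(j+1+1))⁻¹ * (1 - x^(j+1))⁻¹))]
    apply Finset.prod_le_prod
    · intros; positivity
    · intro j _
      exact bp_geomZ x h0 h1 _ (by omega) _
  rw [Finset.prod_mul_distrib, Finset.prod_mul_distrib] at F2
  have F3 := bp_split (m+1) x h0 h1
  rw [Finset.prod_range_succ'] at F3
  have F4 : bpP (m+1) x = (∏ j ∈ range m, (1 - x^(j+1+1))⁻¹) * (1 - x)⁻¹ := by
    rw [bpP, Finset.prod_range_succ']; simp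
  have hx : 0 < 1 - x := by linarith
  have F5 : (∏ j ∈ range m, (1 - x^(j+1+1))⁻¹) = bpP (m+1) x * (1 - x) := by
    rw [F4]; field_simp
  rw [F5] at F2
  change _ ≤ _ * (_ * bpP m x) at F2
  set Q := ∏ j ∈ range m, (1 - x^(2*(j+1)+1)) with hQ
  have hQ0 : 0 ≤ Q := Finset.prod_nonneg fun j _ => (hpos _).le
  have G : (bipartitePi m n : ℝ) * (Real.exp (m*t))⁻¹ ≤
      Real.exp (Real.pi^2/6/t) * Real.exp (Real.pi^2/6/t) * Real.exp (Real.pi^2/6/(2*t)) := by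
    calc _ ≤ _ := hM
      _ ≤ bpP (m+1) x * (Q * (bpP (m+1) x * (1 - x) * bpP m x)) := by
          apply mul_le_mul F1 F2 _ (hPpos _).le
          exact Finset.prod_nonneg fun _ _ => Finset.sum_nonneg fun _ _ => by positivity
      _ ≤ bpP (2*(m+1)) x * (Q * (bpP (m+1) x * (1 - x) * bpP (m+1) x)) := by
          have := hPpos (m+1)
          have := hPpos m
          have := hPpos (2*(m+1))
          have a1 : bpP (m+1) x ≤ bpP (2*(m+1)) x := hmono (by omega)
          have a2 : bpP m x ≤ bpP (m+1) x := hmono (by omega)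
          gcongr
      _ = bpP (m+1) x * bpP (m+1) x * bpP (m+1) (x^2) := by
          rw [← F3]; simp; ring
      _ ≤ _ := by
          have := hPpos (m+1)
          have : 0 ≤ bpP (m+1) (x^2) := by
            rw [← F3]
            have := hPpos (2*(m+1))
            simp
            positivity
          gcongr
  rw [← div_eq_mul_inv, div_le_iff₀ (Real.exp_pos _), ← Real.exp_add, ← Real.exp_add,
    ← Real.exp_add] at G
  refine G.trans (le_of_eq ?_)
  congr 1
  field_simp
  ring

/-- there is `C > 0` with `π(m,n) ≤ C·e^{c√m}` for all positive
integers `m ≤ n`, where `c = 2π√(5/12)`. -/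
theorem bipartitePi_upper_bound (c : ℝ) (hc : c = 2 * Real.pi * Real.sqrt (5 / 12)) :
    ∃ C > (0 : ℝ), ∀ m n : ℕ, 0 < m → 0 < n → m ≤ n →
      (bipartitePi m n : ℝ) ≤ C * Real.exp (c * Real.sqrt m) := by
  refine ⟨1, one_pos, fun m n hm _ _ => ?_⟩
  have hm' : (0:ℝ) < m := by exact_mod_cast hm
  have hs : 0 < Real.sqrt m := Real.sqrt_pos.2 hm'
  have hr : 0 < Real.sqrt (5/12) := Real.sqrt_pos.2 (by norm_num)
  have hs2 : Real.sqrt m ^ 2 = m := Real.sq_sqrt hm'.le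
  have hr2 : Real.sqrt (5/12) ^ 2 = 5/12 := Real.sq_sqrt (by norm_num)
  have hpi := Real.pi_pos
  have := bp_bound m n (Real.pi * Real.sqrt (5/12) / Real.sqrt m) (by positivity)
  rw [one_mul]
  refine this.trans (le_of_eq ?_)
  congr 1
  rw [hc]
  generalize Real.sqrt (5/12) = r at *
  generalize Real.sqrt m = s at *
  rw [← hs2, show 5 * Real.pi^2/12 = r^2 * Real.pi^2 by rw [hr2]; ring]
  field_simp
  ring
end
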